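/- There exist positive constants c_star, C, c_a, c_b with the following property. Let A₀ ∈ ℝ^{n×n} be invertible with condition number κ(A₀), let θ ∈ (0, 1/2), 0 < μ < c_a · min{θ n^{-1}, n^{-5/4}}, let X₀ ∈ ℝ^{n×p} have i.i.d. BG(θ) entries, set Y = A₀X₀, and suppose p ≥ (C/(c_star² θ²)) · max{n⁴/μ⁴, n⁵/μ²} · κ(A₀)⁸ · log⁴(κ(A₀) n/(μθ)). Let Ȳ = √(pθ) (YYᵀ)^{−1/2} Y and let A₀ = UΣVᵀ be a singular value decomposition of A₀. Then with probability at least 1 − c_b p^{-5}, the function q ↦ f(q; VUᵀȲ) has exactly 2n local minimizers over the sphere S^{n−1}, and there is a bijection between these local minimizers and the signed standard basis vectors {±e_i : i = 1,…,n} such that each local minimizer q_star and its corresponding signed basis vector b satisfy ‖q_star − b‖ ≤ √2 μ/7. -/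

import Mathlib

open MeasureTheory ProbabilityTheory Real Matrix
open scoped RealInnerProductSpace ENNReal NNReal

noncomputable section

/-- The Bernoulli–Gaussian law `BG(θ)`: with probability `θ` a standard Gaussian,
with probability `1-θ` a point mass at `0`. -/
def bg (θ : ℝ) : Measure ℝ :=
  θ.toNNReal • gaussianReal 0 1 + (1 - θ).toNNReal • Measure.dirac 0

instance bg.instIsFiniteMeasure (θ : ℝ) : IsFiniteMeasure (bg θ) := by
  unfold bg; infer_instance

/-- Law of an `n × p` matrix with i.i.d. `BG(θ)` entries. -/
def bgMatrix (θ : ℝ) (n p : ℕ) : Measure (Fin n → Fin p → ℝ) :=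
  Measure.pi fun _ => Measure.pi fun _ => bg θ

/-- Law of a vector in `ℝ^n` with i.i.d. `BG(θ)` entries. -/
def bgVec (θ : ℝ) (n : ℕ) : Measure (Fin n → ℝ) :=
  Measure.pi fun _ => bg θ

/-- The smooth sparsity surrogate `h_μ(z) = μ log cosh (z/μ)`. -/
def hmu (μ z : ℝ) : ℝ := μ * Real.log (Real.cosh (z / μ))

/-- Reparametrization `q(w) = (w, √(1-‖w‖²))` with `w` in the unit ball of `ℝ^{n-1}`. -/
def qmap (n : ℕ) (w : EuclideanSpace ℝ (Fin (n - 1))) : Fin n → ℝ :=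
  fun i => if h : (i : ℕ) < n - 1 then w ⟨i, h⟩ else Real.sqrt (1 - ‖w‖ ^ 2)

/-- `f(q; Y) = (1/p) ∑ₖ h_μ(qᵀ yₖ)`. -/
def ffun (n p : ℕ) (μ : ℝ) (Y : Matrix (Fin n) (Fin p) ℝ)
    (q : EuclideanSpace ℝ (Fin n)) : ℝ :=
  (p : ℝ)⁻¹ * ∑ k : Fin p, hmu μ (∑ i : Fin n, q i * Y i k)

/-- `g(w; Y) = f(q(w); Y)`. -/
def gfun (n p : ℕ) (μ : ℝ) (Y : Matrix (Fin n) (Fin p) ℝ)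
    (w : EuclideanSpace ℝ (Fin (n - 1))) : ℝ :=
  (p : ℝ)⁻¹ * ∑ k : Fin p, hmu μ (∑ i : Fin n, qmap n w i * Y i k)

/-- Gradient `∇g(w; Y)` in `w`. -/
def gradg (n p : ℕ) (μ : ℝ) (Y : Matrix (Fin n) (Fin p) ℝ)
    (w : EuclideanSpace ℝ (Fin (n - 1))) : EuclideanSpace ℝ (Fin (n - 1)) :=
  gradient (gfun n p μ Y) w

/-- Hessian `∇²g(w; Y)` in `w`, as a continuous linear map. -/
def hessg (n p : ℕ) (μ : ℝ) (Y : Matrix (Fin n) (Fin p) ℝ)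
    (w : EuclideanSpace ℝ (Fin (n - 1))) :
    EuclideanSpace ℝ (Fin (n - 1)) →L[ℝ] EuclideanSpace ℝ (Fin (n - 1)) :=
  fderiv ℝ (gradg n p μ Y) w

/-- The set `Γ = {w : ‖w‖ < √((4n-1)/(4n))}`. -/
def GammaSet (n : ℕ) : Set (EuclideanSpace ℝ (Fin (n - 1))) :=
  {w | ‖w‖ < Real.sqrt ((4 * (n : ℝ) - 1) / (4 * n))}

/-- Spectral (`ℓ²→ℓ²` operator) norm of а matrix. -/
def specNorm {m k : ℕ} (M : Matrix (Fin m) (Fin k) ℝ) : ℝ :=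
  ‖LinearMap.toContinuousLinearMap (Matrix.toEuclideanLin M)‖

/-- Largest magnitude of an entry of a matrix. -/
def Minf {m k : ℕ} (M : Matrix (Fin m) (Fin k) ℝ) : ℝ := ⨆ i, ⨆ j, |M i j|

/-- Condition number: ratio of largest to smallest singular value. -/
def kappa {n : ℕ} (s : Fin n → ℝ) : ℝ := (⨆ i, s i) / (⨅ i, s i)

/-- Signed standard basis vectors `{± e_i}` of `ℝ^n`. -/
def SignedBasis (n : ℕ) : Set (EuclideanSpace ℝ (Fin n)) :=
  {b | ∃ i : Fin n, b = EuclideanSpace.single i (1 : ℝ) ∨ b = -EuclideanSpace.single i (1 : ℝ)}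

/-- Set of local minimizers of `f(·; Y)` over the unit sphere `S^{n-1}`. -/
def LocalMins (n p : ℕ) (μ : ℝ) (Y : Matrix (Fin n) (Fin p) ℝ) :
    Set (EuclideanSpace ℝ (Fin n)) :=
  {q | q ∈ Metric.sphere (0 : EuclideanSpace ℝ (Fin n)) 1 ∧
       IsLocalMinOn (ffun n p μ Y) (Metric.sphere (0 : EuclideanSpace ℝ (Fin n)) 1) q}

/-- Expected objective `E_x[h_μ(q(w)ᵀ x)]` for `x` with i.i.d. `BG(θ)` entries. -/
def Gexp (n : ℕ) (θ μ : ℝ) (w : EuclideanSpace ℝ (Fin (n - 1))) : ℝ :=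
  ∫ x, hmu μ (∑ i : Fin n, qmap n w i * x i) ∂(bgVec θ n)

/-- The squared hyperbolic secant, written as `1 - tanh²`. -/
def sechSq (y : ℝ) : ℝ := 1 - Real.tanh y ^ 2

theorem hasDerivAt_tanh (y : ℝ) : HasDerivAt Real.tanh (sechSq y) y := by
  have hc : Real.cosh y ≠ 0 := (Real.cosh_pos y).ne'
  have h := (Real.hasDerivAt_sinh y).div (Real.hasDerivAt_cosh y) hc
  have e : Real.tanh = fun z => Real.sinh z / Real.cosh z := by
    funext z; exact Real.tanh_eq_sinh_div_cosh z
  rw [e]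
  refine h.congr_deriv ?_
  unfold sechSq
  rw [Real.tanh_eq_sinh_div_cosh]
  field_simp

@[fun_prop]
theorem continuous_tanh : Continuous Real.tanh :=
  continuous_iff_continuousAt.2 fun y => (hasDerivAt_tanh y).continuousAt

@[fun_prop]
theorem continuous_sechSq : Continuous sechSq :=
  continuous_const.sub (continuous_tanh.pow 2)

theorem hasDerivAt_log_cosh (y : ℝ) :
    HasDerivAt (fun z => Real.log (Real.cosh z)) (Real.tanh y) y := by
  have h := (Real.hasDerivAt_cosh y).log (Real.cosh_pos y).ne'
  rwa [← Real.tanh_eq_sinh_div_cosh] at h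

theorem abs_tanh_le_one (y : ℝ) : |Real.tanh y| ≤ 1 :=
  abs_le.2 ⟨(Real.neg_one_lt_tanh y).le, (Real.tanh_lt_one y).le⟩

theorem sechSq_nonneg (y : ℝ) : 0 ≤ sechSq y := by
  have := (sq_le_one_iff_abs_le_one _).2 (abs_tanh_le_one y)
  unfold sechSq; linarith

theorem sechSq_le_one (y : ℝ) : sechSq y ≤ 1 := by
  unfold sechSq; nlinarith [sq_nonneg (Real.tanh y)]

theorem abs_tanh_sub_le (x y : ℝ) : |Real.tanh x - Real.tanh y| ≤ |x - y| := by
  have := Convex.norm_image_sub_le_of_norm_hasDerivWithin_le (𝕜 := ℝ) (f := Real.tanh)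
    (f' := sechSq) (s := Set.univ) (C := 1) (x := y) (y := x)
    (fun z _ => (hasDerivAt_tanh z).hasDerivWithinAt)
    (fun z _ => by rw [Real.norm_eq_abs, abs_of_nonneg (sechSq_nonneg z)]; exact sechSq_le_one z)
    convex_univ (Set.mem_univ _) (Set.mem_univ _)
  simpa using this

theorem abs_tanh_le (x : ℝ) : |Real.tanh x| ≤ |x| := by
  simpa using abs_tanh_sub_le x 0

theorem abs_sechSq_sub_le (x y : ℝ) : |sechSq x - sechSq y| ≤ 2 * |x - y| := by
  have e : sechSq x - sechSq y = (Real.tanh y - Real.tanh x) * (Real.tanh y + Real.tanh x) := by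
    unfold sechSq; ring
  rw [e, abs_mul]
  have h1 := abs_tanh_sub_le y x
  have h2 : |Real.tanh y + Real.tanh x| ≤ 2 := by
    have := abs_add_le (Real.tanh y) (Real.tanh x)
    linarith [abs_tanh_le_one x, abs_tanh_le_one y]
  rw [abs_sub_comm x y]
  nlinarith [abs_nonneg (Real.tanh y - Real.tanh x), abs_nonneg (Real.tanh y + Real.tanh x)]

theorem one_sub_sq_le_sechSq (y : ℝ) : 1 - y ^ 2 ≤ sechSq y := by
  have := sq_le_sq.2 (abs_tanh_le y)
  unfold sechSq; linarith

theorem tanh_sub_tanh (x y : ℝ) :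
    Real.tanh x - Real.tanh y = Real.sinh (x - y) / (Real.cosh x * Real.cosh y) := by
  have h1 := (Real.cosh_pos x).ne'
  have h2 := (Real.cosh_pos y).ne'
  rw [Real.tanh_eq_sinh_div_cosh, Real.tanh_eq_sinh_div_cosh, Real.sinh_sub]
  field_simp

theorem tanh_mono {x y : ℝ} (h : x ≤ y) : Real.tanh x ≤ Real.tanh y := by
  have := tanh_sub_tanh y x
  have h2 : 0 ≤ Real.sinh (y - x) := Real.sinh_nonneg_iff.2 (by linarith)
  have := div_nonneg h2 (mul_pos (Real.cosh_pos y) (Real.cosh_pos x)).le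
  linarith

theorem tanh_nonneg {x : ℝ} (h : 0 ≤ x) : 0 ≤ Real.tanh x := by
  simpa using tanh_mono h

theorem sechSq_abs (x : ℝ) : sechSq |x| = sechSq x := by
  rcases abs_choice x with h | h <;> rw [h]
  simp [sechSq]

theorem sechSq_anti {x y : ℝ} (h : |x| ≤ |y|) : sechSq y ≤ sechSq x := by
  rw [← sechSq_abs x, ← sechSq_abs y]
  have h1 := tanh_mono h
  have h0 := tanh_nonneg (abs_nonneg x)
  unfold sechSq
  nlinarith

theorem tanh_sub_ge {x y : ℝ} (hx : 0 ≤ x) (hxy : x ≤ y) (hy : y ≤ 1) :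
    (y - x) / 3 ≤ Real.tanh y - Real.tanh x := by
  have cosh_le : ∀ z : ℝ, 0 ≤ z → z ≤ 1 → Real.cosh z ≤ Real.exp (1 / 2) := fun z h0 h1 =>
    (Real.cosh_le_exp_half_sq z).trans (Real.exp_le_exp.2 (by nlinarith))
  rw [tanh_sub_tanh, div_le_div_iff₀ (by norm_num)
    (mul_pos (Real.cosh_pos y) (Real.cosh_pos x))]
  have hs : y - x ≤ Real.sinh (y - x) := Real.self_le_sinh_iff.2 (by linarith)
  have hprod : Real.cosh y * Real.cosh x ≤ 3 := by
    calc _ ≤ Real.exp (1 / 2) * Real.exp (1 / 2) :=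
          mul_le_mul (cosh_le y (hx.trans hxy) hy) (cosh_le x hx (hxy.trans hy))
            (Real.cosh_pos x).le (Real.exp_pos _).le
      _ = Real.exp 1 := by rw [← Real.exp_add]; norm_num
      _ ≤ 3 := by linarith [Real.exp_one_lt_d9]
  calc (y - x) * (Real.cosh y * Real.cosh x) ≤ (y - x) * 3 :=
        mul_le_mul_of_nonneg_left hprod (by linarith)
    _ ≤ _ := by linarith

theorem sechSq_sub_ge {x y : ℝ} (hxy : |x| ≤ |y|) (hy : |y| ≤ 1) :
    (y ^ 2 - x ^ 2) / 9 ≤ sechSq x - sechSq y := by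
  rw [← sechSq_abs x, ← sechSq_abs y, ← sq_abs x, ← sq_abs y]
  have h1 := tanh_sub_ge (abs_nonneg x) hxy hy
  have h2 := tanh_sub_ge le_rfl (abs_nonneg x) (hxy.trans hy)
  have h3 := tanh_sub_ge le_rfl (abs_nonneg y) hy
  simp only [Real.tanh_zero, sub_zero] at h2 h3
  have h0 := abs_nonneg x
  have e : sechSq |x| - sechSq |y|
      = (Real.tanh |y| - Real.tanh |x|) * (Real.tanh |y| + Real.tanh |x|) := by
    unfold sechSq; ring
  rw [e]
  calc (|y| ^ 2 - |x| ^ 2) / 9 = ((|y| - |x|) / 3) * ((|y| + |x|) / 3) := by ring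
    _ ≤ _ := mul_le_mul h1 (by linarith) (by linarith [abs_nonneg y]) (by linarith)

theorem integrable_pow_gaussian (k : ℕ) : Integrable (fun z : ℝ => z ^ k) (gaussianReal 0 1) := by
  have h := (memLp_id_gaussianReal (μ := 0) (v := 1) (k : ℝ≥0)).integrable_norm_pow'
  refine h.mono' (by fun_prop) (Filter.Eventually.of_forall fun z => ?_)
  simp

theorem integrable_bdd_mul_gaussian {F : ℝ → ℝ} (hF : Continuous F) {C : ℝ}
    (hC : ∀ z, |F z| ≤ C) (k : ℕ) :
    Integrable (fun z => F z * z ^ k) (gaussianReal 0 1) :=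
  (integrable_pow_gaussian k).bdd_mul (c := C) hF.aestronglyMeasurable
    (Filter.Eventually.of_forall hC)

theorem gaussianPDFReal_std (z : ℝ) :
    gaussianPDFReal 0 1 z = (√(2 * π))⁻¹ * Real.exp (-z ^ 2 / 2) := by
  simp [gaussianPDFReal]

theorem hasDerivAt_gaussianPDFReal_std (z : ℝ) :
    HasDerivAt (gaussianPDFReal 0 1) (-(z * gaussianPDFReal 0 1 z)) z := by
  have e : gaussianPDFReal 0 1 = fun z => (√(2 * π))⁻¹ * Real.exp (-z ^ 2 / 2) :=
    funext gaussianPDFReal_std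
  rw [e]
  have h : HasDerivAt (fun z : ℝ => -z ^ 2 / 2) (-z) z := by
    refine (((hasDerivAt_id z).pow 2).neg.div_const 2).congr_deriv ?_
    simp
    ring
  refine ((h.exp).const_mul _).congr_deriv ?_
  ring

theorem integrable_gaussian_iff {F : ℝ → ℝ} :
    Integrable F (gaussianReal 0 1) ↔ Integrable (fun z => gaussianPDFReal 0 1 z * F z) := by
  rw [gaussianReal_of_var_ne_zero 0 one_ne_zero,
    integrable_withDensity_iff_integrable_smul' (measurable_gaussianPDF 0 1)
      (Filter.Eventually.of_forall fun _ => gaussianPDF_lt_top)]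
  simp [toReal_gaussianPDF]

theorem integral_gaussian_eq (F : ℝ → ℝ) :
    ∫ z, F z ∂(gaussianReal 0 1) = ∫ z, gaussianPDFReal 0 1 z * F z := by
  simpa using integral_gaussianReal_eq_integral_smul (μ := 0) (v := 1) one_ne_zero (f := F)

theorem integral_tanh_mul_gaussian (c : ℝ) :
    ∫ z, Real.tanh (c * z) * z ∂(gaussianReal 0 1)
      = c * ∫ z, sechSq (c * z) ∂(gaussianReal 0 1) := by
  have hT : Continuous fun z : ℝ => Real.tanh (c * z) := continuous_tanh.comp (by fun_prop)
  have hS : Continuous fun z : ℝ => sechSq (c * z) := continuous_sechSq.comp (by fun_prop)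
  have i1 : Integrable (fun z => Real.tanh (c * z) * z) (gaussianReal 0 1) := by
    simpa using integrable_bdd_mul_gaussian hT (fun z => abs_tanh_le_one (c * z)) 1
  have i2 : Integrable (fun z => c * sechSq (c * z)) (gaussianReal 0 1) := by
    refine Integrable.const_mul ?_ c
    simpa using integrable_bdd_mul_gaussian hS
      (fun z => (abs_of_nonneg (sechSq_nonneg _)).trans_le (sechSq_le_one (c * z))) 0
  have i3 : Integrable (fun z => Real.tanh (c * z)) (gaussianReal 0 1) := by
    simpa using integrable_bdd_mul_gaussian hT (fun z => abs_tanh_le_one (c * z)) 0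
  rw [← integral_const_mul, integral_gaussian_eq, integral_gaussian_eq]
  rw [integrable_gaussian_iff] at i1 i2 i3
  have key := integral_mul_deriv_eq_deriv_mul_of_integrable
    (u := fun z => Real.tanh (c * z)) (v := gaussianPDFReal 0 1)
    (u' := fun z => c * sechSq (c * z)) (v' := fun z => -(z * gaussianPDFReal 0 1 z))
    (fun z _ => by
      refine ((hasDerivAt_tanh (c * z)).comp z ((hasDerivAt_id z).const_mul c)).congr_deriv ?_
      simp [mul_comm])
    (fun z _ => hasDerivAt_gaussianPDFReal_std z)
    (i1.neg.congr (Filter.Eventually.of_forall fun z => by simp; ring))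
    (i2.congr (Filter.Eventually.of_forall fun z => by simp; ring))
    (i3.congr (Filter.Eventually.of_forall fun z => by simp; ring))
  have e1 : ∫ z, gaussianPDFReal 0 1 z * (Real.tanh (c * z) * z)
      = -∫ z, Real.tanh (c * z) * -(z * gaussianPDFReal 0 1 z) := by
    rw [← integral_neg]; congr 1; funext z; ring
  rw [e1, key, neg_neg]
  congr 1; funext z; ring

theorem gaussianPDFReal_std_ge {z : ℝ} (hz : |z| ≤ 1) : 1 / 5 ≤ gaussianPDFReal 0 1 z := by
  rw [gaussianPDFReal_std]
  have hz2 : z ^ 2 ≤ 1 := (sq_le_one_iff_abs_le_one z).2 hz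
  have h1 : (3 / 5 : ℝ) ≤ Real.exp (-z ^ 2 / 2) := by
    have h0 : Real.exp (-1 / 2) ≤ Real.exp (-z ^ 2 / 2) := Real.exp_le_exp.2 (by linarith)
    refine le_trans ?_ h0
    have : Real.exp (1 / 2) ≤ 5 / 3 := by
      have h : Real.exp (1 / 2) ^ 2 ≤ (5 / 3) ^ 2 := by
        rw [← Real.exp_nat_mul]; norm_num
        linarith [Real.exp_one_lt_d9]
      exact (sq_le_sq₀ (Real.exp_pos _).le (by norm_num)).1 h
    rw [show (-1 / 2 : ℝ) = -(1 / 2) by ring, Real.exp_neg]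
    rw [le_inv_comm₀ (by norm_num) (Real.exp_pos _)]
    linarith
  have h2 : √(2 * π) ≤ 3 := by
    rw [Real.sqrt_le_left (by norm_num)]
    nlinarith [Real.pi_lt_four]
  have h3 : (3 : ℝ)⁻¹ ≤ (√(2 * π))⁻¹ :=
    inv_anti₀ (Real.sqrt_pos.2 (by positivity)) h2
  calc (1 / 5 : ℝ) = 3⁻¹ * (3 / 5) := by norm_num
    _ ≤ _ := mul_le_mul h3 h1 (by norm_num) (by positivity)

theorem integral_gaussian_ge_of_window {F G : ℝ → ℝ} {δ : ℝ} (h0 : 0 ≤ δ) (h1 : δ ≤ 1)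
    (hF : Integrable F (gaussianReal 0 1)) (hFnn : ∀ z, 0 ≤ F z) (hG : Continuous G)
    (hGnn : ∀ z, |z| ≤ δ → 0 ≤ G z) (hFG : ∀ z, |z| ≤ δ → G z ≤ F z) :
    1 / 5 * ∫ z in (-δ)..δ, G z ≤ ∫ z, F z ∂(gaussianReal 0 1) := by
  rw [integral_gaussian_eq]
  rw [integrable_gaussian_iff] at hF
  rw [intervalIntegral.integral_of_le (by linarith), ← integral_const_mul]
  refine le_trans (setIntegral_mono_on (g := fun z => gaussianPDFReal 0 1 z * F z) ?_
    hF.integrableOn measurableSet_Ioc ?_) ?_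
  · exact ((continuous_const.mul hG).integrableOn_Icc (a := -δ) (b := δ)).mono_set
      Set.Ioc_subset_Icc_self
  · intro z hz
    have hz' : |z| ≤ δ := abs_le.2 ⟨hz.1.le, hz.2⟩
    exact mul_le_mul (gaussianPDFReal_std_ge (hz'.trans h1)) (hFG z hz') (hGnn z hz')
      (gaussianPDFReal_nonneg _ _ _)
  · exact setIntegral_le_integral hF
      (Filter.Eventually.of_forall fun z => mul_nonneg (gaussianPDFReal_nonneg _ _ _) (hFnn z))

/-- The mean of the second derivative of `h_μ` at `√v z` for standard Gaussian `z`. -/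
def chi (μ v : ℝ) : ℝ := μ⁻¹ * ∫ z, sechSq (√v * z / μ) ∂(gaussianReal 0 1)

/-- The mean of `z² - 1` times the second derivative of `h_μ` at `√v z` for standard Gaussian `z`. -/
def chiTwo (μ v : ℝ) : ℝ :=
  μ⁻¹ * ∫ z, sechSq (√v * z / μ) * (z ^ 2 - 1) ∂(gaussianReal 0 1)

theorem integrable_sechSq_gaussian (c μ : ℝ) (k : ℕ) :
    Integrable (fun z => sechSq (c * z / μ) * z ^ k) (gaussianReal 0 1) :=
  integrable_bdd_mul_gaussian (continuous_sechSq.comp (by fun_prop))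
    (fun _ => (abs_of_nonneg (sechSq_nonneg _)).trans_le (sechSq_le_one _)) k

theorem integrable_sechSq_gaussian' (c μ : ℝ) :
    Integrable (fun z => sechSq (c * z / μ)) (gaussianReal 0 1) := by
  simpa using integrable_sechSq_gaussian c μ 0

theorem integral_sq_gaussian : ∫ z, z ^ 2 ∂(gaussianReal 0 1) = 1 := by
  have h := variance_id_gaussianReal (μ := 0) (v := 1)
  rw [variance_of_integral_eq_zero aemeasurable_id (by simp)] at h
  simpa using h

theorem chi_sub_ge {μ v w : ℝ} (hμ : 0 < μ) (hμ1 : μ ≤ 1) (hv : 0 ≤ v) (hvw : v ≤ w)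
    (hw : w ≤ 1) : (w - v) / 100 ≤ chi μ v - chi μ w := by
  unfold chi
  rw [← mul_sub, ← integral_sub (integrable_sechSq_gaussian' _ _) (integrable_sechSq_gaussian' _ _)]
  have hsq : √v ≤ √w := Real.sqrt_le_sqrt hvw
  have hcmp : ∀ z : ℝ, |√v * z / μ| ≤ |√w * z / μ| := by
    intro z
    rw [abs_div, abs_div, abs_mul, abs_mul, abs_of_nonneg (Real.sqrt_nonneg v),
      abs_of_nonneg (Real.sqrt_nonneg w)]
    gcongr
  have key := integral_gaussian_ge_of_window (δ := μ)
    (F := fun z => sechSq (√v * z / μ) - sechSq (√w * z / μ))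
    (G := fun z => ((w - v) / (9 * μ ^ 2)) * z ^ 2) hμ.le hμ1
    ((integrable_sechSq_gaussian' _ _).sub (integrable_sechSq_gaussian' _ _))
    (fun z => sub_nonneg.2 (sechSq_anti (hcmp z))) (by fun_prop)
    (fun z _ => mul_nonneg (div_nonneg (by linarith) (by positivity)) (sq_nonneg z))
    (fun z hz => by
      have hle : |√w * z / μ| ≤ 1 := by
        rw [abs_div, abs_mul, abs_of_nonneg (Real.sqrt_nonneg w), abs_of_pos hμ,
          div_le_one hμ]
        have : √w ≤ 1 := Real.sqrt_le_one.2 hw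
        nlinarith [Real.sqrt_nonneg w, abs_nonneg z]
      refine le_trans (le_of_eq ?_) (sechSq_sub_ge (hcmp z) hle)
      rw [div_pow, div_pow, mul_pow, mul_pow, Real.sq_sqrt hv, Real.sq_sqrt (hv.trans hvw)]
      field_simp)
  rw [intervalIntegral.integral_const_mul, integral_pow] at key
  have e : 1 / 5 * ((w - v) / (9 * μ ^ 2) * ((μ ^ (2 + 1) - (-μ) ^ (2 + 1)) / ((2 : ℕ) + 1)))
      = μ * (2 * (w - v) / 135) := by
    field_simp; push_cast; ring
  rw [e] at key
  have := mul_le_mul_of_nonneg_left key (inv_nonneg.2 hμ.le)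
  rw [← mul_assoc, inv_mul_cancel₀ hμ.ne', one_mul] at this
  linarith

theorem chiTwo_eq (μ v : ℝ) : chiTwo μ v =
    -(μ⁻¹ * ∫ z, (sechSq (√v * z / μ) - sechSq (√v / μ)) * (1 - z ^ 2) ∂(gaussianReal 0 1)) := by
  unfold chiTwo
  rw [← mul_neg, ← integral_neg]
  congr 1
  have hz : ∫ z, sechSq (√v / μ) * (1 - z ^ 2) ∂(gaussianReal 0 1) = 0 := by
    rw [integral_const_mul, integral_sub (integrable_const _) (integrable_pow_gaussian 2),
      integral_sq_gaussian]
    simp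
  have i1 : Integrable (fun z => sechSq (√v * z / μ) * (z ^ 2 - 1)) (gaussianReal 0 1) := by
    refine ((integrable_sechSq_gaussian (√v) μ 2).sub (integrable_sechSq_gaussian' (√v) μ)).congr
      (Filter.Eventually.of_forall fun z => ?_)
    simp; ring
  have i2 : Integrable (fun z => sechSq (√v / μ) * (1 - z ^ 2)) (gaussianReal 0 1) :=
    ((integrable_const _).sub (integrable_pow_gaussian 2)).const_mul _
  have h3 := integral_add i1 i2
  rw [hz, add_zero] at h3
  rw [← h3]
  congr 1; funext z; ring

theorem integrable_chiTwo_aux (μ v : ℝ) :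
    Integrable (fun z => (sechSq (√v * z / μ) - sechSq (√v / μ)) * (1 - z ^ 2))
      (gaussianReal 0 1) := by
  have h : Integrable (fun z : ℝ => 1 - z ^ 2) (gaussianReal 0 1) :=
    (integrable_const _).sub (integrable_pow_gaussian 2)
  refine h.bdd_mul (c := 1)
    ((continuous_sechSq.comp (by fun_prop)).sub continuous_const).aestronglyMeasurable
    (Filter.Eventually.of_forall fun z => abs_le.2 ⟨?_, ?_⟩)
  · have := sechSq_nonneg (√v * z / μ); have := sechSq_le_one (√v / μ); linarith
  · have := sechSq_nonneg (√v / μ); have := sechSq_le_one (√v * z / μ); linarith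

theorem chiTwo_aux_nonneg {μ : ℝ} (hμ : 0 < μ) (v z : ℝ) :
    0 ≤ (sechSq (√v * z / μ) - sechSq (√v / μ)) * (1 - z ^ 2) := by
  have habs : |√v * z / μ| = √v / μ * |z| := by
    rw [abs_div, abs_mul, abs_of_nonneg (Real.sqrt_nonneg v), abs_of_pos hμ]; ring
  have habs' : |√v / μ| = √v / μ := abs_of_nonneg (by positivity)
  have hp : 0 ≤ √v / μ := by positivity
  rcases le_total |z| 1 with h | h
  · refine mul_nonneg (sub_nonneg.2 (sechSq_anti ?_)) ?_
    · rw [habs, habs']; nlinarith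
    · have := (sq_le_one_iff_abs_le_one z).2 h; linarith
  · refine mul_nonneg_of_nonpos_of_nonpos (sub_nonpos.2 (sechSq_anti ?_)) ?_
    · rw [habs, habs']; nlinarith
    · have := (one_le_sq_iff_one_le_abs z).2 h; linarith

theorem chiTwo_le {μ v : ℝ} (hμ : 0 < μ) (hμ1 : μ ≤ 1) (hv : μ ^ 2 ≤ v) (hv1 : v ≤ 1) :
    chiTwo μ v ≤ -(1 / 100) := by
  have hs : μ ≤ √v := Real.le_sqrt_of_sq_le hv
  have hs1 : √v ≤ 1 := Real.sqrt_le_one.2 hv1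
  have key := integral_gaussian_ge_of_window (δ := μ / 2) (G := fun _ => (1 / 12 * (3 / 4)))
    (by positivity) (by linarith) (integrable_chiTwo_aux μ v) (chiTwo_aux_nonneg hμ v)
    continuous_const (fun z _ => by norm_num) (fun z hz => by
      have ha : sechSq (1 / 2) ≤ sechSq (√v * z / μ) := sechSq_anti (by
        rw [abs_div, abs_mul, abs_of_nonneg (Real.sqrt_nonneg v), abs_of_pos hμ, div_le_iff₀ hμ,
          abs_of_pos (by norm_num : (0 : ℝ) < 1 / 2)]
        nlinarith [abs_nonneg z, Real.sqrt_nonneg v])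
      have hb : sechSq (√v / μ) ≤ sechSq 1 := sechSq_anti (by
        rw [abs_one, abs_of_nonneg (by positivity), le_div_iff₀ hμ]; linarith)
      have hc : (1 / 12 : ℝ) ≤ sechSq (1 / 2) - sechSq 1 := by
        refine le_trans (le_of_eq (by norm_num))
          (sechSq_sub_ge (x := 1 / 2) (y := 1) ?_ (by simp))
        rw [abs_one, abs_of_pos] <;> norm_num
      have hz2 : z ^ 2 ≤ 1 / 4 := by
        have : |z| ≤ 1 / 2 := hz.trans (by linarith)
        rw [← sq_abs]; nlinarith [abs_nonneg z]
      exact mul_le_mul (by linarith) (by linarith) (by norm_num) (by linarith))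
  rw [intervalIntegral.integral_const] at key
  rw [chiTwo_eq]
  have h2 := mul_le_mul_of_nonneg_left key (inv_nonneg.2 hμ.le)
  have e : μ⁻¹ * (1 / 5 * ((μ / 2 - -(μ / 2)) • (1 / 12 * (3 / 4)) : ℝ)) = 1 / 80 := by
    rw [smul_eq_mul]; field_simp; norm_num
  rw [e] at h2
  linarith

/-- Euclidean `n`-space. -/
abbrev Vec (n : ℕ) := EuclideanSpace ℝ (Fin n)

/-- The pairing `aᵀ x` of a Euclidean vector with a plain coordinate vector. -/
def pair {n : ℕ} (a : Vec n) (x : Fin n → ℝ) : ℝ := ∑ i, a i * x i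

/-- The law of a standard Gaussian vector with independent coordinates. -/
def stdG (n : ℕ) : Measure (Fin n → ℝ) := Measure.pi fun _ => gaussianReal 0 1

instance stdG.instIsProbabilityMeasure (n : ℕ) : IsProbabilityMeasure (stdG n) := by
  unfold stdG; infer_instance

theorem pair_eq_inner {n : ℕ} (a : Vec n) (x : Fin n → ℝ) : pair a x = ⟪a, WithLp.toLp 2 x⟫ := by
  simp [pair, PiLp.inner_apply, mul_comm]

theorem pair_add {n : ℕ} (a b : Vec n) (x : Fin n → ℝ) : pair (a + b) x = pair a x + pair b x := by
  simp [pair_eq_inner, inner_add_left]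

theorem pair_sub {n : ℕ} (a b : Vec n) (x : Fin n → ℝ) : pair (a - b) x = pair a x - pair b x := by
  simp [pair_eq_inner, inner_sub_left]

theorem pair_smul {n : ℕ} (c : ℝ) (a : Vec n) (x : Fin n → ℝ) :
    pair (c • a) x = c * pair a x := by
  simp [pair_eq_inner, real_inner_smul_left]

theorem pair_zero {n : ℕ} (x : Fin n → ℝ) : pair (0 : Vec n) x = 0 := by
  simp [pair]

@[fun_prop]
theorem continuous_pair {n : ℕ} (a : Vec n) : Continuous (pair a) := by
  unfold pair; fun_prop

theorem map_toLp_stdG (n : ℕ) : (stdG n).map (WithLp.toLp 2) = stdGaussian (Vec n) :=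
  map_pi_eq_stdGaussian

theorem map_pair_stdG {n : ℕ} (a : Vec n) :
    (stdG n).map (pair a) = (gaussianReal 0 1).map (fun z => ‖a‖ * z) := by
  have h1 : (stdG n).map (pair a) = (stdGaussian (Vec n)).map (innerSL ℝ a) := by
    rw [← map_toLp_stdG, Measure.map_map (by fun_prop) (by fun_prop)]
    congr 1
    ext x
    simp [pair_eq_inner]
  rw [h1, IsGaussian.map_eq_gaussianReal, gaussianReal_map_const_mul,
    integral_strongDual_stdGaussian, variance_dual_stdGaussian]
  congr 1
  · simp
  · ext
    simp

theorem integral_comp_pair_stdG {n : ℕ} (a : Vec n) {F : ℝ → ℝ} (hF : Continuous F) :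
    ∫ g, F (pair a g) ∂(stdG n) = ∫ z, F (‖a‖ * z) ∂(gaussianReal 0 1) := by
  rw [← integral_map (φ := pair a) (by fun_prop) hF.aestronglyMeasurable, map_pair_stdG,
    integral_map (by fun_prop) hF.aestronglyMeasurable]

theorem integrable_comp_pair_stdG {n : ℕ} (a : Vec n) {F : ℝ → ℝ} (hF : Continuous F) :
    Integrable (fun g => F (pair a g)) (stdG n) ↔
      Integrable (fun z => F (‖a‖ * z)) (gaussianReal 0 1) := by
  have h1 := integrable_map_measure (μ := stdG n) (f := pair a) (g := F)
    hF.aestronglyMeasurable (by fun_prop)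
  have h2 := integrable_map_measure (μ := gaussianReal 0 1) (f := fun z => ‖a‖ * z) (g := F)
    hF.aestronglyMeasurable (by fun_prop)
  rw [map_pair_stdG] at h1
  exact h1.symm.trans h2

theorem integrable_pair_pow_stdG {n : ℕ} (a : Vec n) (k : ℕ) :
    Integrable (fun g => pair a g ^ k) (stdG n) := by
  rw [integrable_comp_pair_stdG a (F := fun y => y ^ k) (by fun_prop)]
  simp_rw [mul_pow]
  exact (integrable_pow_gaussian k).const_mul _

theorem indepFun_pair_stdG {n : ℕ} {a b : Vec n} (h : ⟪a, b⟫ = 0) :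
    IndepFun (pair a) (pair b) (stdG n) := by
  have hg : HasGaussianLaw (fun x : Vec n => (⟪a, x⟫, ⟪b, x⟫)) (stdGaussian (Vec n)) := by
    have := (IsGaussian.hasGaussianLaw_id (μ := stdGaussian (Vec n))).map_fun
      ((innerSL ℝ a).prod (innerSL ℝ b))
    simpa using this
  have hi : IndepFun (fun x : Vec n => ⟪a, x⟫) (fun x : Vec n => ⟪b, x⟫) (stdGaussian (Vec n)) := by
    refine hg.indepFun_of_covariance_eq_zero ?_
    rw [← covarianceBilin_apply_eq_cov IsGaussian.memLp_two_id, covarianceBilin_stdGaussian]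
    exact h
  rw [indepFun_iff_map_prod_eq_prod_map_map (by fun_prop) (by fun_prop), ← map_toLp_stdG,
    Measure.map_map (by fun_prop) (by fun_prop), Measure.map_map (by fun_prop) (by fun_prop),
    Measure.map_map (by fun_prop) (by fun_prop)] at hi
  rw [indepFun_iff_map_prod_eq_prod_map_map (by fun_prop) (by fun_prop)]
  simpa [Function.comp_def, ← pair_eq_inner] using hi

theorem integral_mul_pair_stdG {n : ℕ} {a b : Vec n} (h : ⟪a, b⟫ = 0) {F H : ℝ → ℝ}
    (hF : Continuous F) (hH : Continuous H) :
    ∫ g, F (pair a g) * H (pair b g) ∂(stdG n)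
      = (∫ z, F (‖a‖ * z) ∂(gaussianReal 0 1)) * ∫ z, H (‖b‖ * z) ∂(gaussianReal 0 1) := by
  rw [← integral_comp_pair_stdG a hF, ← integral_comp_pair_stdG b hH]
  exact (indepFun_pair_stdG h).integral_fun_comp_mul_comp (by fun_prop) (by fun_prop)
    hF.aestronglyMeasurable hH.aestronglyMeasurable

theorem integrable_bdd_mul_pair_stdG {n : ℕ} (a b : Vec n) {F : ℝ → ℝ} (hF : Continuous F)
    (hb : ∀ y, |F y| ≤ 1) (k : ℕ) :
    Integrable (fun g => F (pair a g) * pair b g ^ k) (stdG n) :=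
  (integrable_pair_pow_stdG b k).bdd_mul (c := 1) (by fun_prop)
    (Filter.Eventually.of_forall fun _ => hb _)

theorem integral_pair_sq_stdG {n : ℕ} (b : Vec n) :
    ∫ g, pair b g ^ 2 ∂(stdG n) = ‖b‖ ^ 2 := by
  rw [integral_comp_pair_stdG b (F := fun y => y ^ 2) (by fun_prop)]
  simp_rw [mul_pow]
  rw [integral_const_mul, integral_sq_gaussian, mul_one]

/-- The component of `b` orthogonal to `a`. -/
def perp {n : ℕ} (a b : Vec n) : Vec n := b - (⟪a, b⟫ / ‖a‖ ^ 2) • a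

theorem inner_perp {n : ℕ} {a : Vec n} (ha : a ≠ 0) (b : Vec n) : ⟪a, perp a b⟫ = 0 := by
  have : ‖a‖ ^ 2 ≠ 0 := by positivity
  rw [perp, inner_sub_right, real_inner_smul_right, real_inner_self_eq_norm_sq]
  field_simp
  ring

theorem norm_perp_sq {n : ℕ} {a : Vec n} (ha : a ≠ 0) (b : Vec n) :
    ‖perp a b‖ ^ 2 = ‖b‖ ^ 2 - ⟪a, b⟫ ^ 2 / ‖a‖ ^ 2 := by
  have h0 : ‖a‖ ^ 2 ≠ 0 := by positivity
  rw [perp, norm_sub_sq_real, real_inner_smul_right, norm_smul, mul_pow, real_inner_comm]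
  simp only [Real.norm_eq_abs, sq_abs]
  field_simp
  ring

theorem pair_decomp {n : ℕ} (a b : Vec n) (x : Fin n → ℝ) :
    pair b x = (⟪a, b⟫ / ‖a‖ ^ 2) * pair a x + pair (perp a b) x := by
  rw [perp, pair_sub, pair_smul]; ring

theorem sqrt_norm_sq {n : ℕ} (a : Vec n) : √(‖a‖ ^ 2) = ‖a‖ := Real.sqrt_sq (norm_nonneg a)

theorem integral_tanh_pair_stdG {n : ℕ} {μ : ℝ} (hμ : 0 < μ) (a b : Vec n) :
    ∫ g, Real.tanh (pair a g / μ) * pair b g ∂(stdG n) = ⟪a, b⟫ * chi μ (‖a‖ ^ 2) := by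
  rcases eq_or_ne a 0 with rfl | ha
  · simp [pair_zero]
  have hT : Continuous fun y : ℝ => Real.tanh (y / μ) := continuous_tanh.comp (by fun_prop)
  have hTb : ∀ y : ℝ, |Real.tanh (y / μ)| ≤ 1 := fun y => abs_tanh_le_one _
  have h0 : ‖a‖ ≠ 0 := by positivity
  set c := ⟪a, b⟫ / ‖a‖ ^ 2 with hc
  have e : ∀ g, Real.tanh (pair a g / μ) * pair b g
      = c * (Real.tanh (pair a g / μ) * pair a g) +
        Real.tanh (pair a g / μ) * pair (perp a b) g := by
    intro g; rw [pair_decomp a b g]; ring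
  simp_rw [e]
  have i1 := integrable_bdd_mul_pair_stdG a a hT hTb 1
  have i2 := integrable_bdd_mul_pair_stdG a (perp a b) hT hTb 1
  simp only [pow_one] at i1 i2
  rw [integral_add (i1.const_mul c) i2, integral_const_mul,
    integral_mul_pair_stdG (inner_perp ha b) hT continuous_id',
    integral_comp_pair_stdG a (F := fun y => Real.tanh (y / μ) * y) (by fun_prop)]
  have h1 : ∫ z : ℝ, ‖perp a b‖ * z ∂(gaussianReal 0 1) = 0 := by
    rw [integral_const_mul]; simp
  have h2 := integral_tanh_mul_gaussian (‖a‖ / μ)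
  have h3 : ∀ z : ℝ, Real.tanh (‖a‖ * z / μ) * (‖a‖ * z)
      = ‖a‖ * (Real.tanh (‖a‖ / μ * z) * z) := by
    intro z; rw [show ‖a‖ * z / μ = ‖a‖ / μ * z by ring]; ring
  simp_rw [h3]
  rw [h1, mul_zero, add_zero, integral_const_mul, h2, chi, sqrt_norm_sq]
  simp_rw [show ∀ z : ℝ, ‖a‖ * z / μ = ‖a‖ / μ * z from fun z => by ring]
  rw [hc]
  field_simp

theorem integral_sechSq_pair_stdG {n : ℕ} {μ : ℝ} (hμ : 0 < μ) (a b : Vec n) :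
    ∫ g, sechSq (pair a g / μ) * pair b g ^ 2 ∂(stdG n)
      = μ * (‖b‖ ^ 2 * chi μ (‖a‖ ^ 2) + ⟪a, b⟫ ^ 2 / ‖a‖ ^ 2 * chiTwo μ (‖a‖ ^ 2)) := by
  have hS : Continuous fun y : ℝ => sechSq (y / μ) := continuous_sechSq.comp (by fun_prop)
  rcases eq_or_ne a 0 with rfl | ha
  · simp [pair_zero, chi, sechSq, integral_pair_sq_stdG]
    field_simp
  have hSb : ∀ y : ℝ, |sechSq (y / μ)| ≤ 1 := fun y =>
    (abs_of_nonneg (sechSq_nonneg _)).trans_le (sechSq_le_one _)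
  have h0 : ‖a‖ ≠ 0 := by positivity
  set c := ⟪a, b⟫ / ‖a‖ ^ 2 with hc
  have e : ∀ g, sechSq (pair a g / μ) * pair b g ^ 2
      = (c ^ 2 * (sechSq (pair a g / μ) * pair a g ^ 2) +
        2 * c * ((sechSq (pair a g / μ) * pair a g) * pair (perp a b) g)) +
        sechSq (pair a g / μ) * pair (perp a b) g ^ 2 := by
    intro g; rw [pair_decomp a b g]; ring
  simp_rw [e]
  have i1 := integrable_bdd_mul_pair_stdG a a hS hSb 2
  have i2 := integrable_bdd_mul_pair_stdG a (perp a b) hS hSb 2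
  have i3 : Integrable (fun g => (sechSq (pair a g / μ) * pair a g) * pair (perp a b) g)
      (stdG n) := by
    refine ((integrable_pair_pow_stdG a 2).add (integrable_pair_pow_stdG (perp a b) 2)).mono'
      (by fun_prop) (Filter.Eventually.of_forall fun g => ?_)
    rw [mul_assoc, norm_mul, Real.norm_eq_abs, Real.norm_eq_abs]
    refine (mul_le_of_le_one_left (abs_nonneg _) (hSb _)).trans ?_
    simp only [Pi.add_apply]
    rw [abs_le]
    constructor <;> nlinarith [sq_nonneg (pair a g + pair (perp a b) g),
      sq_nonneg (pair a g - pair (perp a b) g)]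
  have i4 : Integrable (fun g => c ^ 2 * (sechSq (pair a g / μ) * pair a g ^ 2) +
      2 * c * ((sechSq (pair a g / μ) * pair a g) * pair (perp a b) g)) (stdG n) :=
    (i1.const_mul _).add (i3.const_mul _)
  rw [integral_add i4 i2, integral_add (i1.const_mul _) (i3.const_mul _), integral_const_mul, integral_const_mul,
    integral_mul_pair_stdG (F := fun y => sechSq (y / μ) * y) (inner_perp ha b) (by fun_prop)
      continuous_id',
    integral_mul_pair_stdG (H := fun y => y ^ 2) (inner_perp ha b) hS (by fun_prop),
    integral_comp_pair_stdG a (F := fun y => sechSq (y / μ) * y ^ 2) (by fun_prop)]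
  have h1 : ∫ z : ℝ, ‖perp a b‖ * z ∂(gaussianReal 0 1) = 0 := by
    rw [integral_const_mul]; simp
  have h2 : ∫ z : ℝ, (‖perp a b‖ * z) ^ 2 ∂(gaussianReal 0 1) = ‖perp a b‖ ^ 2 := by
    simp_rw [mul_pow]; rw [integral_const_mul, integral_sq_gaussian, mul_one]
  have h3 : ∫ z : ℝ, sechSq (‖a‖ * z / μ) * (‖a‖ * z) ^ 2 ∂(gaussianReal 0 1)
      = ‖a‖ ^ 2 * (μ * (chi μ (‖a‖ ^ 2) + chiTwo μ (‖a‖ ^ 2))) := by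
    rw [chi, chiTwo, sqrt_norm_sq, ← mul_add, ← integral_add (integrable_sechSq_gaussian' _ _),
      ← mul_assoc μ, mul_inv_cancel₀ hμ.ne', one_mul, ← integral_const_mul]
    · refine integral_congr_ae (Filter.Eventually.of_forall fun z => ?_)
      simp only; ring
    · simp_rw [mul_sub, mul_one]
      exact (integrable_sechSq_gaussian _ _ 2).sub (integrable_sechSq_gaussian' _ _)
  have h4 : ∫ z : ℝ, sechSq (‖a‖ * z / μ) ∂(gaussianReal 0 1) = μ * chi μ (‖a‖ ^ 2) := by
    rw [chi, sqrt_norm_sq, ← mul_assoc, mul_inv_cancel₀ hμ.ne', one_mul]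
  rw [h1, h2, h3, h4, norm_perp_sq ha, hc]
  field_simp
  ring

theorem integrable_exp_sq_gaussian :
    Integrable (fun z : ℝ => Real.exp (z ^ 2 / 4)) (gaussianReal 0 1) := by
  rw [integrable_gaussian_iff]
  have := (integrable_exp_neg_mul_sq (b := 1 / 4) (by norm_num)).const_mul ((√(2 * π))⁻¹)
  refine this.congr (Filter.Eventually.of_forall fun z => ?_)
  simp only [gaussianPDFReal_std]
  rw [mul_assoc, ← Real.exp_add]
  ring_nf

theorem integral_exp_sq_gaussian_le :
    ∫ z : ℝ, Real.exp (z ^ 2 / 4) ∂(gaussianReal 0 1) ≤ 3 / 2 := by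
  rw [integral_gaussian_eq]
  have : ∀ z : ℝ, gaussianPDFReal 0 1 z * Real.exp (z ^ 2 / 4)
      = (√(2 * π))⁻¹ * Real.exp (-(1 / 4) * z ^ 2) := by
    intro z
    rw [gaussianPDFReal_std, mul_assoc, ← Real.exp_add]
    ring_nf
  simp_rw [this]
  rw [integral_const_mul, integral_gaussian, inv_mul_eq_div, ← Real.sqrt_div (by positivity)]
  rw [Real.sqrt_le_left (by norm_num)]
  have := Real.pi_pos
  rw [div_le_iff₀ (by positivity)]
  norm_num
  nlinarith

theorem integral_pow_four_gaussian_le : ∫ z : ℝ, z ^ 4 ∂(gaussianReal 0 1) ≤ 48 := by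
  have h : ∫ z : ℝ, z ^ 4 ∂(gaussianReal 0 1)
      ≤ ∫ z : ℝ, 32 * Real.exp (z ^ 2 / 4) ∂(gaussianReal 0 1) := by
    refine integral_mono (integrable_pow_gaussian 4) (integrable_exp_sq_gaussian.const_mul _)
      fun z => ?_
    have := Real.quadratic_le_exp_of_nonneg (x := z ^ 2 / 4) (by positivity)
    simp only
    nlinarith [sq_nonneg z]
  rw [integral_const_mul] at h
  linarith [integral_exp_sq_gaussian_le]

theorem integrable_pair_sq_mul_pair_sq_stdG {n : ℕ} (u b : Vec n) :
    Integrable (fun g => pair u g ^ 2 * pair b g ^ 2) (stdG n) := by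
  refine ((integrable_pair_pow_stdG u 4).add (integrable_pair_pow_stdG b 4)).mono'
    (by fun_prop) (Filter.Eventually.of_forall fun g => ?_)
  rw [Real.norm_eq_abs, abs_of_nonneg (by positivity)]
  simp only [Pi.add_apply]
  nlinarith [sq_nonneg (pair u g ^ 2 - pair b g ^ 2), sq_nonneg (pair u g ^ 2 + pair b g ^ 2)]

theorem integral_pair_pow_four_stdG_le {n : ℕ} (b : Vec n) :
    ∫ g, pair b g ^ 4 ∂(stdG n) ≤ 48 * ‖b‖ ^ 4 := by
  rw [integral_comp_pair_stdG b (F := fun y => y ^ 4) (by fun_prop)]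
  simp_rw [mul_pow]
  rw [integral_const_mul, mul_comm]
  exact mul_le_mul_of_nonneg_right integral_pow_four_gaussian_le (by positivity)

theorem integral_pair_sq_mul_pair_sq_stdG_le {n : ℕ} (u b : Vec n) :
    ∫ g, pair u g ^ 2 * pair b g ^ 2 ∂(stdG n) ≤ 48 * (‖u‖ ^ 2 * ‖b‖ ^ 2) := by
  rcases eq_or_ne u 0 with rfl | hu
  · simp [pair_zero]
  rcases eq_or_ne b 0 with rfl | hb
  · simp [pair_zero]
  have hu' : 0 < ‖u‖ := norm_pos_iff.2 hu
  have hb' : 0 < ‖b‖ := norm_pos_iff.2 hb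
  have h : ∫ g, pair u g ^ 2 * pair b g ^ 2 ∂(stdG n)
      ≤ ∫ g, (‖b‖ ^ 2 / (2 * ‖u‖ ^ 2) * pair u g ^ 4 + ‖u‖ ^ 2 / (2 * ‖b‖ ^ 2) * pair b g ^ 4)
        ∂(stdG n) := by
    refine integral_mono (integrable_pair_sq_mul_pair_sq_stdG u b)
      (((integrable_pair_pow_stdG u 4).const_mul _).add
        ((integrable_pair_pow_stdG b 4).const_mul _)) fun g => ?_
    simp only
    rw [← sub_nonneg]
    have : ‖b‖ ^ 2 / (2 * ‖u‖ ^ 2) * pair u g ^ 4 + ‖u‖ ^ 2 / (2 * ‖b‖ ^ 2) * pair b g ^ 4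
        - pair u g ^ 2 * pair b g ^ 2
        = (‖b‖ ^ 2 * pair u g ^ 2 - ‖u‖ ^ 2 * pair b g ^ 2) ^ 2 / (2 * ‖u‖ ^ 2 * ‖b‖ ^ 2) := by
      field_simp
      ring
    rw [this]; positivity
  refine h.trans ?_
  rw [integral_add ((integrable_pair_pow_stdG u 4).const_mul _)
    ((integrable_pair_pow_stdG b 4).const_mul _), integral_const_mul, integral_const_mul]
  have h1 := mul_le_mul_of_nonneg_left (integral_pair_pow_four_stdG_le u)
    (show 0 ≤ ‖b‖ ^ 2 / (2 * ‖u‖ ^ 2) by positivity)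
  have h2 := mul_le_mul_of_nonneg_left (integral_pair_pow_four_stdG_le b)
    (show 0 ≤ ‖u‖ ^ 2 / (2 * ‖b‖ ^ 2) by positivity)
  refine (add_le_add h1 h2).trans_eq ?_
  field_simp
  ring

theorem exp_pair_sq_bound {c z : ℝ} (h0 : 0 ≤ c) (h : c ≤ 2) :
    Real.exp ((c * z) ^ 2 / 16) ≤ Real.exp (z ^ 2 / 4) := by
  refine Real.exp_le_exp.2 ?_
  have : c ^ 2 ≤ 4 := by nlinarith
  nlinarith [sq_nonneg z, mul_le_mul_of_nonneg_right this (sq_nonneg z)]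

theorem integrable_exp_pair_sq_stdG {n : ℕ} {b : Vec n} (hb : ‖b‖ ≤ 2) :
    Integrable (fun g => Real.exp (pair b g ^ 2 / 16)) (stdG n) := by
  rw [integrable_comp_pair_stdG b (F := fun y => Real.exp (y ^ 2 / 16)) (by fun_prop)]
  refine integrable_exp_sq_gaussian.mono' (by fun_prop) (Filter.Eventually.of_forall fun z => ?_)
  rw [Real.norm_eq_abs, Real.abs_exp]
  exact exp_pair_sq_bound (norm_nonneg b) hb

theorem integral_exp_pair_sq_stdG_le {n : ℕ} {b : Vec n} (hb : ‖b‖ ≤ 2) :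
    ∫ g, Real.exp (pair b g ^ 2 / 16) ∂(stdG n) ≤ 2 := by
  have hi := integrable_exp_pair_sq_stdG hb
  rw [integrable_comp_pair_stdG b (F := fun y => Real.exp (y ^ 2 / 16)) (by fun_prop)] at hi
  rw [integral_comp_pair_stdG b (F := fun y => Real.exp (y ^ 2 / 16)) (by fun_prop)]
  refine (integral_mono hi integrable_exp_sq_gaussian
    fun z => exp_pair_sq_bound (norm_nonneg b) hb).trans ?_
  linarith [integral_exp_sq_gaussian_le]

/-- Restriction of a coordinate vector to the support set `Ω`. -/
def maskF {n : ℕ} (Ω : Finset (Fin n)) (x : Fin n → ℝ) : Fin n → ℝ :=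
  fun i => if i ∈ Ω then x i else 0

/-- Restriction of a Euclidean vector to the support set `Ω`. -/
def maskV {n : ℕ} (Ω : Finset (Fin n)) (a : Vec n) : Vec n :=
  WithLp.toLp 2 (fun i => if i ∈ Ω then a i else 0)

/-- Probability that the Bernoulli support equals `Ω`. -/
def wt {n : ℕ} (θ : ℝ) (Ω : Finset (Fin n)) : ℝ := ∏ i, if i ∈ Ω then θ else 1 - θ

theorem sum_prod_ite {R : Type*} [CommSemiring R] {n : ℕ} (f g : Fin n → R) :
    ∑ Ω : Finset (Fin n), ∏ i, (if i ∈ Ω then f i else g i) = ∏ i, (f i + g i) := by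
  rw [Finset.prod_add, Finset.powerset_univ]
  refine Finset.sum_congr rfl fun Ω _ => ?_
  rw [Finset.prod_ite]
  congr 2
  · ext; simp
  · ext; simp

theorem wt_nonneg {n : ℕ} {θ : ℝ} (h0 : 0 ≤ θ) (h1 : θ ≤ 1) (Ω : Finset (Fin n)) :
    0 ≤ wt θ Ω :=
  Finset.prod_nonneg fun i _ => by split_ifs <;> linarith

theorem sum_wt {n : ℕ} (θ : ℝ) : ∑ Ω : Finset (Fin n), wt θ Ω = 1 := by
  simp only [wt]
  rw [sum_prod_ite (fun _ => θ) (fun _ => 1 - θ)]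
  simp

theorem wt_mul_ite {n : ℕ} (θ : ℝ) (Ω : Finset (Fin n)) (i : Fin n) :
    wt θ Ω * (if i ∈ Ω then 1 else 0)
      = ∏ k, if k ∈ Ω then θ else (if k = i then 0 else 1 - θ) := by
  by_cases hi : i ∈ Ω
  · rw [if_pos hi, mul_one]
    refine Finset.prod_congr rfl fun k _ => ?_
    by_cases hk : k = i
    · subst hk; simp [hi]
    · simp [hk]
  · rw [if_neg hi, mul_zero]
    exact (Finset.prod_eq_zero (Finset.mem_univ i) (by simp [hi])).symm

theorem sum_wt_mem {n : ℕ} (θ : ℝ) (i : Fin n) :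
    ∑ Ω : Finset (Fin n), wt θ Ω * (if i ∈ Ω then 1 else 0) = θ := by
  simp only [wt_mul_ite]
  rw [sum_prod_ite (fun _ => θ) (fun k => if k = i then 0 else 1 - θ)]
  rw [Finset.prod_eq_single i]
  · simp
  · intro b _ hb; simp [hb]
  · simp

theorem wt_mul_ite_ite {n : ℕ} (θ : ℝ) (Ω : Finset (Fin n)) {i j : Fin n} (hij : i ≠ j) :
    wt θ Ω * (if i ∈ Ω ∧ j ∉ Ω then 1 else 0)
      = ∏ k, if k ∈ Ω then (if k = j then 0 else θ) else (if k = i then 0 else 1 - θ) := by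
  by_cases hi : i ∈ Ω
  · by_cases hj : j ∈ Ω
    · rw [if_neg (by simp [hj]), mul_zero]
      exact (Finset.prod_eq_zero (Finset.mem_univ j) (by simp [hj])).symm
    · rw [if_pos ⟨hi, hj⟩, mul_one]
      refine Finset.prod_congr rfl fun k _ => ?_
      by_cases hk : k = i
      · subst hk; simp [hi, hij]
      · by_cases hk' : k = j
        · subst hk'; simp [hj, hk]
        · simp [hk, hk']
  · rw [if_neg (by simp [hi]), mul_zero]
    exact (Finset.prod_eq_zero (Finset.mem_univ i) (by simp [hi])).symm

theorem sum_wt_mem_not_mem {n : ℕ} (θ : ℝ) {i j : Fin n} (hij : i ≠ j) :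
    ∑ Ω : Finset (Fin n), wt θ Ω * (if i ∈ Ω ∧ j ∉ Ω then 1 else 0) = θ * (1 - θ) := by
  simp only [wt_mul_ite_ite θ _ hij]
  rw [sum_prod_ite (fun k => if k = j then 0 else θ) (fun k => if k = i then 0 else 1 - θ)]
  rw [← Finset.mul_prod_erase _ _ (Finset.mem_univ i),
    ← Finset.mul_prod_erase _ _ (show j ∈ Finset.univ.erase i by simp [hij.symm])]
  rw [Finset.prod_eq_one]
  · simp [hij, hij.symm]
  · intro k hk
    simp only [Finset.mem_erase, Finset.mem_univ, and_true] at hk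
    simp [hk.1, hk.2]

theorem pair_maskF {n : ℕ} (Ω : Finset (Fin n)) (a : Vec n) (g : Fin n → ℝ) :
    pair a (maskF Ω g) = pair (maskV Ω a) g := by
  simp only [pair, maskF, maskV]
  refine Finset.sum_congr rfl fun i _ => ?_
  split_ifs <;> simp

@[fun_prop]
theorem measurable_maskF {n : ℕ} (Ω : Finset (Fin n)) : Measurable (maskF Ω) := by
  refine measurable_pi_lambda _ fun i => ?_
  simp only [maskF]
  split_ifs <;> fun_prop

theorem bgVec_eq_sum {n : ℕ} {θ : ℝ} (h0 : 0 ≤ θ) (h1 : θ ≤ 1) :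
    bgVec θ n = ∑ Ω : Finset (Fin n), ENNReal.ofReal (wt θ Ω) • (stdG n).map (maskF Ω) := by
  classical
  refine Measure.pi_eq fun s hs => ?_
  have hb : ∀ i, bg θ (s i) = ENNReal.ofReal θ * gaussianReal 0 1 (s i) +
      ENNReal.ofReal (1 - θ) * (if (0 : ℝ) ∈ s i then 1 else 0) := by
    intro i
    simp only [bg, Measure.add_apply, Measure.smul_apply, Measure.dirac_apply' _ (hs i),
      Set.indicator_apply, Pi.one_apply]
    rfl
  simp_rw [hb]
  rw [← sum_prod_ite, Measure.finsetSum_apply]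
  refine Finset.sum_congr rfl fun Ω _ => ?_
  rw [Measure.smul_apply, Measure.map_apply (by fun_prop) (MeasurableSet.univ_pi hs)]
  have hpre : maskF Ω ⁻¹' (Set.univ.pi s)
      = Set.univ.pi (fun i => if i ∈ Ω then s i else {_y : ℝ | (0 : ℝ) ∈ s i}) := by
    ext g
    simp only [Set.mem_preimage, Set.mem_univ_pi, maskF]
    refine forall_congr' fun i => ?_
    split_ifs <;> simp
  rw [hpre, stdG, Measure.pi_pi, smul_eq_mul, wt, ENNReal.ofReal_prod_of_nonneg
    (fun i _ => by split_ifs <;> linarith), ← Finset.prod_mul_distrib]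
  refine Finset.prod_congr rfl fun i _ => ?_
  by_cases hi : i ∈ Ω
  · simp [hi]
  · by_cases h2 : (0 : ℝ) ∈ s i <;> simp [hi, h2]

instance bg.isProb {θ : ℝ} [h : Fact (θ ∈ Set.Icc (0 : ℝ) 1)] : IsProbabilityMeasure (bg θ) := by
  constructor
  have h0 := h.out.1
  have h1 := h.out.2
  simp only [bg, Measure.add_apply, Measure.smul_apply, measure_univ]
  change ENNReal.ofReal θ * 1 + ENNReal.ofReal (1 - θ) * 1 = 1
  rw [mul_one, mul_one, ← ENNReal.ofReal_add h0 (by linarith)]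
  simp

instance bgVec.isProb {θ : ℝ} {n : ℕ} [Fact (θ ∈ Set.Icc (0 : ℝ) 1)] :
    IsProbabilityMeasure (bgVec θ n) := by
  unfold bgVec; infer_instance

theorem integrable_bgVec {n : ℕ} {θ : ℝ} (h0 : 0 ≤ θ) (h1 : θ ≤ 1) {F : (Fin n → ℝ) → ℝ}
    (hF : Continuous F) (hi : ∀ Ω, Integrable (fun g => F (maskF Ω g)) (stdG n)) :
    Integrable F (bgVec θ n) := by
  rw [bgVec_eq_sum h0 h1, integrable_finsetSum_measure]
  intro Ω _
  refine Integrable.smul_measure ?_ ENNReal.ofReal_ne_top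
  rw [integrable_map_measure hF.aestronglyMeasurable (by fun_prop)]
  exact hi Ω

theorem integral_bgVec {n : ℕ} {θ : ℝ} (h0 : 0 ≤ θ) (h1 : θ ≤ 1) {F : (Fin n → ℝ) → ℝ}
    (hF : Continuous F) (hi : ∀ Ω, Integrable (fun g => F (maskF Ω g)) (stdG n)) :
    ∫ x, F x ∂(bgVec θ n) = ∑ Ω : Finset (Fin n), wt θ Ω * ∫ g, F (maskF Ω g) ∂(stdG n) := by
  rw [bgVec_eq_sum h0 h1, integral_finsetSum_measure]
  · refine Finset.sum_congr rfl fun Ω _ => ?_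
    rw [integral_smul_measure, integral_map (by fun_prop) hF.aestronglyMeasurable,
      ENNReal.toReal_ofReal (wt_nonneg h0 h1 Ω), smul_eq_mul]
  · intro Ω _
    refine Integrable.smul_measure ?_ ENNReal.ofReal_ne_top
    rw [integrable_map_measure hF.aestronglyMeasurable (by fun_prop)]
    exact hi Ω

theorem norm_maskV_sq {n : ℕ} (Ω : Finset (Fin n)) (a : Vec n) :
    ‖maskV Ω a‖ ^ 2 = ∑ i, (if i ∈ Ω then 1 else 0) * a i ^ 2 := by
  rw [EuclideanSpace.norm_sq_eq]
  refine Finset.sum_congr rfl fun i _ => ?_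
  simp only [maskV]
  split_ifs <;> simp

theorem norm_sq_eq_sum {n : ℕ} (a : Vec n) : ‖a‖ ^ 2 = ∑ i, a i ^ 2 := by
  rw [EuclideanSpace.norm_sq_eq]
  simp

theorem norm_maskV_le {n : ℕ} (Ω : Finset (Fin n)) (a : Vec n) : ‖maskV Ω a‖ ≤ ‖a‖ := by
  refine (sq_le_sq₀ (norm_nonneg _) (norm_nonneg _)).1 ?_
  rw [norm_maskV_sq, norm_sq_eq_sum]
  refine Finset.sum_le_sum fun i _ => ?_
  split_ifs <;> nlinarith [sq_nonneg (a i)]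

theorem sum_wt_norm_maskV_sq {n : ℕ} (θ : ℝ) (b : Vec n) :
    ∑ Ω : Finset (Fin n), wt θ Ω * ‖maskV Ω b‖ ^ 2 = θ * ‖b‖ ^ 2 := by
  simp_rw [norm_maskV_sq, Finset.mul_sum, ← mul_assoc]
  rw [Finset.sum_comm]
  simp_rw [← Finset.sum_mul, sum_wt_mem]
  rw [norm_sq_eq_sum, Finset.mul_sum]

/-- Integrand of the directional derivative of the objective at `a` in direction `b`. -/
def psiOne {n : ℕ} (μ : ℝ) (a b : Vec n) (x : Fin n → ℝ) : ℝ :=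
  Real.tanh (pair a x / μ) * pair b x

/-- `μ` times the integrand of the second directional derivative at `a` in direction `b`. -/
def psiTwo {n : ℕ} (μ : ℝ) (a b : Vec n) (x : Fin n → ℝ) : ℝ :=
  sechSq (pair a x / μ) * pair b x ^ 2

/-- Population mean of `psiOne`. -/
def PhiOne {n : ℕ} (θ μ : ℝ) (a b : Vec n) : ℝ := ∫ x, psiOne μ a b x ∂(bgVec θ n)

/-- Population mean of `psiTwo`. -/
def PhiTwo {n : ℕ} (θ μ : ℝ) (a b : Vec n) : ℝ := ∫ x, psiTwo μ a b x ∂(bgVec θ n)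

@[fun_prop]
theorem continuous_psiOne {n : ℕ} (μ : ℝ) (a b : Vec n) : Continuous (psiOne μ a b) := by
  unfold psiOne; fun_prop

@[fun_prop]
theorem continuous_psiTwo {n : ℕ} (μ : ℝ) (a b : Vec n) : Continuous (psiTwo μ a b) := by
  unfold psiTwo; fun_prop

theorem abs_sechSq_le_one (y : ℝ) : |sechSq y| ≤ 1 :=
  (abs_of_nonneg (sechSq_nonneg _)).trans_le (sechSq_le_one _)

section Moments

variable {n : ℕ} {θ : ℝ}

theorem integrable_psiOne (h0 : 0 ≤ θ) (h1 : θ ≤ 1) (μ : ℝ) (a b : Vec n) :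
    Integrable (psiOne μ a b) (bgVec θ n) := by
  refine integrable_bgVec h0 h1 (by fun_prop) fun Ω => ?_
  simp only [psiOne, pair_maskF]
  have := integrable_bdd_mul_pair_stdG (maskV Ω a) (maskV Ω b)
    (F := fun y => Real.tanh (y / μ)) (by fun_prop) (fun y => abs_tanh_le_one _) 1
  simpa using this

theorem integrable_psiTwo (h0 : 0 ≤ θ) (h1 : θ ≤ 1) (μ : ℝ) (a b : Vec n) :
    Integrable (psiTwo μ a b) (bgVec θ n) := by
  refine integrable_bgVec h0 h1 (by fun_prop) fun Ω => ?_
  simp only [psiTwo, pair_maskF]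
  exact integrable_bdd_mul_pair_stdG (maskV Ω a) (maskV Ω b)
    (F := fun y => sechSq (y / μ)) (by fun_prop) (fun y => abs_sechSq_le_one _) 2

theorem PhiOne_eq (h0 : 0 ≤ θ) (h1 : θ ≤ 1) {μ : ℝ} (hμ : 0 < μ) (a b : Vec n) :
    PhiOne θ μ a b
      = ∑ Ω : Finset (Fin n), wt θ Ω * (⟪maskV Ω a, maskV Ω b⟫ * chi μ (‖maskV Ω a‖ ^ 2)) := by
  rw [PhiOne, integral_bgVec h0 h1 (by fun_prop)]
  · refine Finset.sum_congr rfl fun Ω _ => ?_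
    simp only [psiOne, pair_maskF]
    rw [integral_tanh_pair_stdG hμ]
  · intro Ω
    simp only [psiOne, pair_maskF]
    have := integrable_bdd_mul_pair_stdG (maskV Ω a) (maskV Ω b)
      (F := fun y => Real.tanh (y / μ)) (by fun_prop) (fun y => abs_tanh_le_one _) 1
    simpa using this

theorem PhiTwo_eq (h0 : 0 ≤ θ) (h1 : θ ≤ 1) {μ : ℝ} (hμ : 0 < μ) (a b : Vec n) :
    PhiTwo θ μ a b
      = μ * ∑ Ω : Finset (Fin n), wt θ Ω * (‖maskV Ω b‖ ^ 2 * chi μ (‖maskV Ω a‖ ^ 2) +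
        ⟪maskV Ω a, maskV Ω b⟫ ^ 2 / ‖maskV Ω a‖ ^ 2 * chiTwo μ (‖maskV Ω a‖ ^ 2)) := by
  rw [PhiTwo, integral_bgVec h0 h1 (by fun_prop), Finset.mul_sum]
  · refine Finset.sum_congr rfl fun Ω _ => ?_
    simp only [psiTwo, pair_maskF]
    rw [integral_sechSq_pair_stdG hμ]
    ring
  · intro Ω
    simp only [psiTwo, pair_maskF]
    exact integrable_bdd_mul_pair_stdG (maskV Ω a) (maskV Ω b)
      (F := fun y => sechSq (y / μ)) (by fun_prop) (fun y => abs_sechSq_le_one _) 2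

theorem integrable_pair_sq (h0 : 0 ≤ θ) (h1 : θ ≤ 1) (b : Vec n) :
    Integrable (fun x => pair b x ^ 2) (bgVec θ n) := by
  refine integrable_bgVec h0 h1 (by fun_prop) fun Ω => ?_
  simp only [pair_maskF]
  exact integrable_pair_pow_stdG _ 2

theorem integral_pair_sq (h0 : 0 ≤ θ) (h1 : θ ≤ 1) (b : Vec n) :
    ∫ x, pair b x ^ 2 ∂(bgVec θ n) = θ * ‖b‖ ^ 2 := by
  rw [integral_bgVec h0 h1 (by fun_prop)]
  · simp only [pair_maskF, integral_pair_sq_stdG]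
    exact sum_wt_norm_maskV_sq θ b
  · intro Ω
    simp only [pair_maskF]
    exact integrable_pair_pow_stdG _ 2

theorem integrable_pair_sq_mul_pair_sq (h0 : 0 ≤ θ) (h1 : θ ≤ 1) (u b : Vec n) :
    Integrable (fun x => pair u x ^ 2 * pair b x ^ 2) (bgVec θ n) := by
  refine integrable_bgVec h0 h1 (by fun_prop) fun Ω => ?_
  simp only [pair_maskF]
  exact integrable_pair_sq_mul_pair_sq_stdG _ _

theorem integral_pair_sq_mul_pair_sq_le (h0 : 0 ≤ θ) (h1 : θ ≤ 1) (u b : Vec n) :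
    ∫ x, pair u x ^ 2 * pair b x ^ 2 ∂(bgVec θ n) ≤ 48 * θ * (‖u‖ ^ 2 * ‖b‖ ^ 2) := by
  rw [integral_bgVec h0 h1 (by fun_prop)]
  · simp only [pair_maskF]
    calc ∑ Ω : Finset (Fin n), wt θ Ω *
          ∫ g, pair (maskV Ω u) g ^ 2 * pair (maskV Ω b) g ^ 2 ∂(stdG n)
        ≤ ∑ Ω : Finset (Fin n), 48 * ‖u‖ ^ 2 * (wt θ Ω * ‖maskV Ω b‖ ^ 2) := by
          refine Finset.sum_le_sum fun Ω _ => ?_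
          have h := integral_pair_sq_mul_pair_sq_stdG_le (maskV Ω u) (maskV Ω b)
          have h' : ‖maskV Ω u‖ ^ 2 * ‖maskV Ω b‖ ^ 2 ≤ ‖u‖ ^ 2 * ‖maskV Ω b‖ ^ 2 := by
            gcongr; exact norm_maskV_le Ω u
          have hw := wt_nonneg h0 h1 Ω
          nlinarith [mul_le_mul_of_nonneg_left (h.trans (by linarith :
            48 * (‖maskV Ω u‖ ^ 2 * ‖maskV Ω b‖ ^ 2) ≤ 48 * (‖u‖ ^ 2 * ‖maskV Ω b‖ ^ 2))) hw]
      _ = 48 * θ * (‖u‖ ^ 2 * ‖b‖ ^ 2) := by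
          rw [← Finset.mul_sum, sum_wt_norm_maskV_sq]; ring
  · intro Ω
    simp only [pair_maskF]
    exact integrable_pair_sq_mul_pair_sq_stdG _ _

theorem integrable_exp_pair_sq (h0 : 0 ≤ θ) (h1 : θ ≤ 1) {b : Vec n} (hb : ‖b‖ ≤ 2) :
    Integrable (fun x => Real.exp (pair b x ^ 2 / 16)) (bgVec θ n) := by
  refine integrable_bgVec h0 h1 (by fun_prop) fun Ω => ?_
  simp only [pair_maskF]
  exact integrable_exp_pair_sq_stdG ((norm_maskV_le Ω b).trans hb)

theorem integral_exp_pair_sq_le (h0 : 0 ≤ θ) (h1 : θ ≤ 1) {b : Vec n} (hb : ‖b‖ ≤ 2) :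
    ∫ x, Real.exp (pair b x ^ 2 / 16) ∂(bgVec θ n) ≤ 2 := by
  rw [integral_bgVec h0 h1 (by fun_prop)]
  · simp only [pair_maskF]
    calc _ ≤ ∑ Ω : Finset (Fin n), wt θ Ω * 2 :=
          Finset.sum_le_sum fun Ω _ => mul_le_mul_of_nonneg_left
            (integral_exp_pair_sq_stdG_le ((norm_maskV_le Ω b).trans hb)) (wt_nonneg h0 h1 Ω)
      _ = 2 := by rw [← Finset.sum_mul, sum_wt, one_mul]
  · intro Ω
    simp only [pair_maskF]
    exact integrable_exp_pair_sq_stdG ((norm_maskV_le Ω b).trans hb)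

end Moments

theorem integral_abs_mul_le {α : Type*} [MeasurableSpace α] {ν : Measure α} {f g : α → ℝ}
    (hf : AEStronglyMeasurable f ν) (hg : AEStronglyMeasurable g ν)
    (hf2 : Integrable (fun x => f x ^ 2) ν) (hg2 : Integrable (fun x => g x ^ 2) ν) {A B : ℝ}
    (hA : 0 ≤ A) (hB : 0 ≤ B) (hfA : ∫ x, f x ^ 2 ∂ν ≤ A ^ 2) (hgB : ∫ x, g x ^ 2 ∂ν ≤ B ^ 2) :
    ∫ x, |f x * g x| ∂ν ≤ A * B := by
  have h := integral_mul_le_Lp_mul_Lq_of_nonneg (μ := ν) (p := 2) (q := 2)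
    (f := fun x => |f x|) (g := fun x => |g x|)
    (by constructor <;> norm_num)
    (Filter.Eventually.of_forall fun _ => abs_nonneg _)
    (Filter.Eventually.of_forall fun _ => abs_nonneg _)
    (by simpa using ((memLp_two_iff_integrable_sq hf).2 hf2).norm)
    (by simpa using ((memLp_two_iff_integrable_sq hg).2 hg2).norm)
  simp only [Real.rpow_two, sq_abs, ← abs_mul] at h
  refine h.trans ?_
  rw [← Real.sqrt_eq_rpow, ← Real.sqrt_eq_rpow]
  exact mul_le_mul (Real.sqrt_le_left hA |>.2 hfA) (Real.sqrt_le_left hB |>.2 hgB)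
    (Real.sqrt_nonneg _) hA

section Lipschitz

variable {n : ℕ} {θ : ℝ}

theorem integrable_pair_mul_pair (h0 : 0 ≤ θ) (h1 : θ ≤ 1) (u b : Vec n) :
    Integrable (fun x => |pair u x * pair b x|) (bgVec θ n) := by
  refine ((integrable_pair_sq h0 h1 u).add (integrable_pair_sq h0 h1 b)).mono' (by fun_prop)
    (Filter.Eventually.of_forall fun x => ?_)
  rw [Real.norm_eq_abs, abs_abs]
  simp only [Pi.add_apply]
  rw [abs_le]
  constructor <;> nlinarith [sq_nonneg (pair u x + pair b x), sq_nonneg (pair u x - pair b x)]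

theorem integral_abs_pair_mul_pair_le (h0 : 0 ≤ θ) (h1 : θ ≤ 1) (u b : Vec n) :
    ∫ x, |pair u x * pair b x| ∂(bgVec θ n) ≤ θ * (‖u‖ * ‖b‖) := by
  have h := integral_abs_mul_le (ν := bgVec θ n) (f := pair u) (g := pair b)
    (A := √θ * ‖u‖) (B := √θ * ‖b‖) (by fun_prop) (by fun_prop) (integrable_pair_sq h0 h1 u)
    (integrable_pair_sq h0 h1 b) (by positivity) (by positivity)
    (by rw [integral_pair_sq h0 h1, mul_pow, Real.sq_sqrt h0])
    (by rw [integral_pair_sq h0 h1, mul_pow, Real.sq_sqrt h0])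
  refine h.trans_eq ?_
  rw [show √θ * ‖u‖ * (√θ * ‖b‖) = √θ ^ 2 * (‖u‖ * ‖b‖) by ring, Real.sq_sqrt h0]

theorem integral_abs_pair_le (h0 : 0 ≤ θ) (h1 : θ ≤ 1) (b : Vec n) :
    ∫ x, |pair b x| ∂(bgVec θ n) ≤ √θ * ‖b‖ := by
  have : Fact (θ ∈ Set.Icc (0 : ℝ) 1) := ⟨⟨h0, h1⟩⟩
  have h := integral_abs_mul_le (ν := bgVec θ n) (f := pair b) (g := fun _ => 1)
    (A := √θ * ‖b‖) (B := 1) (by fun_prop) (by fun_prop) (integrable_pair_sq h0 h1 b)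
    (by simp) (by positivity) (by positivity)
    (by rw [integral_pair_sq h0 h1, mul_pow, Real.sq_sqrt h0]) (by simp)
  simpa using h

theorem integrable_abs_pair (h0 : 0 ≤ θ) (h1 : θ ≤ 1) (b : Vec n) :
    Integrable (fun x => |pair b x|) (bgVec θ n) := by
  have : Fact (θ ∈ Set.Icc (0 : ℝ) 1) := ⟨⟨h0, h1⟩⟩
  refine ((integrable_const 1).add (integrable_pair_sq h0 h1 b)).mono' (by fun_prop)
    (Filter.Eventually.of_forall fun x => ?_)
  rw [Real.norm_eq_abs, abs_abs]
  simp only [Pi.add_apply]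
  nlinarith [sq_nonneg (|pair b x| - 1), sq_abs (pair b x)]

theorem integrable_abs_pair_mul_sq (h0 : 0 ≤ θ) (h1 : θ ≤ 1) (u b : Vec n) :
    Integrable (fun x => |pair u x| * pair b x ^ 2) (bgVec θ n) := by
  refine ((integrable_pair_sq_mul_pair_sq h0 h1 u b).add (integrable_pair_sq h0 h1 b)).mono'
    (by fun_prop) (Filter.Eventually.of_forall fun x => ?_)
  rw [Real.norm_eq_abs, abs_of_nonneg (by positivity)]
  simp only [Pi.add_apply]
  have : |pair u x| ≤ pair u x ^ 2 + 1 := by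
    nlinarith [sq_nonneg (|pair u x| - 1), sq_abs (pair u x)]
  nlinarith [mul_le_mul_of_nonneg_right this (sq_nonneg (pair b x))]

theorem integral_abs_pair_mul_sq_le (h0 : 0 ≤ θ) (h1 : θ ≤ 1) (u b : Vec n) :
    ∫ x, |pair u x| * pair b x ^ 2 ∂(bgVec θ n) ≤ 7 * θ * (‖u‖ * ‖b‖ ^ 2) := by
  have h := integral_abs_mul_le (ν := bgVec θ n) (f := fun x => pair u x * pair b x)
    (g := pair b) (A := 7 * √θ * (‖u‖ * ‖b‖)) (B := √θ * ‖b‖) (by fun_prop) (by fun_prop)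
    (by simp_rw [mul_pow]; exact integrable_pair_sq_mul_pair_sq h0 h1 u b)
    (integrable_pair_sq h0 h1 b) (by positivity) (by positivity)
    (by
      simp_rw [mul_pow]
      rw [Real.sq_sqrt h0]
      refine (integral_pair_sq_mul_pair_sq_le h0 h1 u b).trans ?_
      have : 0 ≤ θ * (‖u‖ ^ 2 * ‖b‖ ^ 2) := by positivity
      linarith)
    (by rw [integral_pair_sq h0 h1, mul_pow, Real.sq_sqrt h0])
  have e : ∀ x : Fin n → ℝ, |pair u x * pair b x * pair b x| = |pair u x| * pair b x ^ 2 := by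
    intro x
    rw [mul_assoc, abs_mul, ← pow_two, abs_of_nonneg (sq_nonneg (pair b x))]
  simp_rw [e] at h
  refine h.trans_eq ?_
  rw [show 7 * √θ * (‖u‖ * ‖b‖) * (√θ * ‖b‖) = 7 * √θ ^ 2 * (‖u‖ * ‖b‖ ^ 2) by ring,
    Real.sq_sqrt h0]

theorem abs_psiOne_sub_left {μ : ℝ} (hμ : 0 < μ) (a a' b : Vec n) (x : Fin n → ℝ) :
    |psiOne μ a b x - psiOne μ a' b x| ≤ μ⁻¹ * |pair (a - a') x * pair b x| := by
  rw [psiOne, psiOne, ← sub_mul, abs_mul, abs_mul, ← mul_assoc]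
  refine mul_le_mul_of_nonneg_right ((abs_tanh_sub_le _ _).trans_eq ?_) (abs_nonneg _)
  rw [← sub_div, abs_div, abs_of_pos hμ, pair_sub]
  field_simp

theorem abs_psiTwo_sub_left {μ : ℝ} (hμ : 0 < μ) (a a' b : Vec n) (x : Fin n → ℝ) :
    |psiTwo μ a b x - psiTwo μ a' b x| ≤ 2 * μ⁻¹ * (|pair (a - a') x| * pair b x ^ 2) := by
  rw [psiTwo, psiTwo, ← sub_mul, abs_mul, abs_of_nonneg (sq_nonneg (pair b x)), ← mul_assoc]
  refine mul_le_mul_of_nonneg_right ((abs_sechSq_sub_le _ _).trans_eq ?_) (sq_nonneg _)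
  rw [← sub_div, abs_div, abs_of_pos hμ, pair_sub]
  field_simp

theorem abs_psiTwo_sub_right (μ : ℝ) (a b b' : Vec n) (x : Fin n → ℝ) :
    |psiTwo μ a b x - psiTwo μ a b' x| ≤ |pair (b - b') x * pair (b + b') x| := by
  rw [psiTwo, psiTwo, ← mul_sub, abs_mul,
    show pair b x ^ 2 - pair b' x ^ 2 = pair (b - b') x * pair (b + b') x by
      rw [pair_sub, pair_add]; ring]
  exact mul_le_of_le_one_left (abs_nonneg _) (abs_sechSq_le_one _)

theorem abs_PhiOne_le (h0 : 0 ≤ θ) (h1 : θ ≤ 1) (μ : ℝ) (a b : Vec n) :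
    |PhiOne θ μ a b| ≤ √θ * ‖b‖ := by
  rw [PhiOne]
  refine (abs_integral_le_integral_abs).trans (le_trans ?_ (integral_abs_pair_le h0 h1 b))
  refine integral_mono (integrable_psiOne h0 h1 μ a b).abs (integrable_abs_pair h0 h1 b) fun x => ?_
  simp only [psiOne, abs_mul]
  exact mul_le_of_le_one_left (abs_nonneg _) (abs_tanh_le_one _)

theorem abs_PhiOne_sub_left (h0 : 0 ≤ θ) (h1 : θ ≤ 1) {μ : ℝ} (hμ : 0 < μ) (a a' b : Vec n) :
    |PhiOne θ μ a b - PhiOne θ μ a' b| ≤ θ / μ * (‖a - a'‖ * ‖b‖) := by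
  rw [PhiOne, PhiOne, ← integral_sub (integrable_psiOne h0 h1 μ a b)
    (integrable_psiOne h0 h1 μ a' b)]
  refine (abs_integral_le_integral_abs).trans ?_
  refine (integral_mono ((integrable_psiOne h0 h1 μ a b).sub (integrable_psiOne h0 h1 μ a' b)).abs
    ((integrable_pair_mul_pair h0 h1 (a - a') b).const_mul μ⁻¹)
    (abs_psiOne_sub_left hμ a a' b)).trans ?_
  rw [integral_const_mul]
  refine (mul_le_mul_of_nonneg_left (integral_abs_pair_mul_pair_le h0 h1 (a - a') b)
    (inv_nonneg.2 hμ.le)).trans_eq ?_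
  field_simp

theorem PhiOne_sub_right (h0 : 0 ≤ θ) (h1 : θ ≤ 1) (μ : ℝ) (a b b' : Vec n) :
    PhiOne θ μ a (b - b') = PhiOne θ μ a b - PhiOne θ μ a b' := by
  rw [PhiOne, PhiOne, PhiOne, ← integral_sub (integrable_psiOne h0 h1 μ a b)
    (integrable_psiOne h0 h1 μ a b')]
  simp only [psiOne, pair_sub, mul_sub]

theorem PhiOne_smul_right (μ : ℝ) (c : ℝ) (a b : Vec n) :
    PhiOne θ μ a (c • b) = c * PhiOne θ μ a b := by
  rw [PhiOne, PhiOne, ← integral_const_mul]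
  refine integral_congr_ae (Filter.Eventually.of_forall fun x => ?_)
  simp only [psiOne, pair_smul]; ring

theorem PhiTwo_smul_right (μ : ℝ) (c : ℝ) (a b : Vec n) :
    PhiTwo θ μ a (c • b) = c ^ 2 * PhiTwo θ μ a b := by
  rw [PhiTwo, PhiTwo, ← integral_const_mul]
  refine integral_congr_ae (Filter.Eventually.of_forall fun x => ?_)
  simp only [psiTwo, pair_smul]; ring

theorem abs_PhiTwo_sub_left (h0 : 0 ≤ θ) (h1 : θ ≤ 1) {μ : ℝ} (hμ : 0 < μ) (a a' b : Vec n) :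
    |PhiTwo θ μ a b - PhiTwo θ μ a' b| ≤ 14 * θ / μ * (‖a - a'‖ * ‖b‖ ^ 2) := by
  rw [PhiTwo, PhiTwo, ← integral_sub (integrable_psiTwo h0 h1 μ a b)
    (integrable_psiTwo h0 h1 μ a' b)]
  refine (abs_integral_le_integral_abs).trans ?_
  refine (integral_mono ((integrable_psiTwo h0 h1 μ a b).sub (integrable_psiTwo h0 h1 μ a' b)).abs
    ((integrable_abs_pair_mul_sq h0 h1 (a - a') b).const_mul (2 * μ⁻¹))
    (abs_psiTwo_sub_left hμ a a' b)).trans ?_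
  rw [integral_const_mul]
  refine (mul_le_mul_of_nonneg_left (integral_abs_pair_mul_sq_le h0 h1 (a - a') b)
    (by positivity)).trans_eq ?_
  field_simp
  ring

theorem abs_PhiTwo_sub_right (h0 : 0 ≤ θ) (h1 : θ ≤ 1) (μ : ℝ) (a b b' : Vec n) :
    |PhiTwo θ μ a b - PhiTwo θ μ a b'| ≤ θ * (‖b - b'‖ * ‖b + b'‖) := by
  rw [PhiTwo, PhiTwo, ← integral_sub (integrable_psiTwo h0 h1 μ a b)
    (integrable_psiTwo h0 h1 μ a b')]
  refine (abs_integral_le_integral_abs).trans ?_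
  refine (integral_mono ((integrable_psiTwo h0 h1 μ a b).sub (integrable_psiTwo h0 h1 μ a b')).abs
    (integrable_pair_mul_pair h0 h1 (b - b') (b + b'))
    (abs_psiTwo_sub_right μ a b b')).trans ?_
  exact integral_abs_pair_mul_pair_le h0 h1 _ _

end Lipschitz

section Population

variable {n : ℕ} {θ μ : ℝ}

/-- Velocity at `q` of the rotation in the coordinate plane `(i, j)`. -/
def rotDir (q : Vec n) (i j : Fin n) : Vec n :=
  q j • EuclideanSpace.single i (1 : ℝ) - q i • EuclideanSpace.single j (1 : ℝ)

/-- Projection of `q` onto the coordinate plane `(i, j)`. -/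
def rotMid (q : Vec n) (i j : Fin n) : Vec n :=
  q i • EuclideanSpace.single i (1 : ℝ) + q j • EuclideanSpace.single j (1 : ℝ)

theorem inner_maskV (Ω : Finset (Fin n)) (a b : Vec n) :
    ⟪maskV Ω a, maskV Ω b⟫ = ∑ i, (if i ∈ Ω then 1 else 0) * (a i * b i) := by
  simp only [PiLp.inner_apply, maskV]
  refine Finset.sum_congr rfl fun i _ => ?_
  split_ifs <;> simp [mul_comm]

theorem sum_eq_pair {i j : Fin n} (hij : i ≠ j) {f : Fin n → ℝ}
    (h : ∀ k, k ≠ i → k ≠ j → f k = 0) : ∑ k, f k = f i + f j := by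
  rw [← Finset.sum_pair hij]
  refine (Finset.sum_subset (Finset.subset_univ _) fun k _ hk => ?_).symm
  simp only [Finset.mem_insert, Finset.mem_singleton, not_or] at hk
  exact h k hk.1 hk.2

theorem rotDir_left {i j : Fin n} (hij : i ≠ j) (q : Vec n) : rotDir q i j i = q j := by
  simp [rotDir, hij]

theorem rotDir_right {i j : Fin n} (hij : i ≠ j) (q : Vec n) : rotDir q i j j = -q i := by
  simp [rotDir, hij.symm]

theorem rotDir_other {i j k : Fin n} (hi : k ≠ i) (hj : k ≠ j) (q : Vec n) :
    rotDir q i j k = 0 := by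
  simp [rotDir, hi, hj]

theorem rotMid_left {i j : Fin n} (hij : i ≠ j) (q : Vec n) : rotMid q i j i = q i := by
  simp [rotMid, hij]

theorem rotMid_right {i j : Fin n} (hij : i ≠ j) (q : Vec n) : rotMid q i j j = q j := by
  simp [rotMid, hij.symm]

theorem rotMid_other {i j k : Fin n} (hi : k ≠ i) (hj : k ≠ j) (q : Vec n) :
    rotMid q i j k = 0 := by
  simp [rotMid, hi, hj]

theorem norm_rotDir_sq {i j : Fin n} (hij : i ≠ j) (q : Vec n) :
    ‖rotDir q i j‖ ^ 2 = q i ^ 2 + q j ^ 2 := by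
  rw [norm_sq_eq_sum, sum_eq_pair hij (fun k hi hj => by simp [rotDir_other hi hj]),
    rotDir_left hij, rotDir_right hij]
  ring

theorem norm_rotMid_sq {i j : Fin n} (hij : i ≠ j) (q : Vec n) :
    ‖rotMid q i j‖ ^ 2 = q i ^ 2 + q j ^ 2 := by
  rw [norm_sq_eq_sum, sum_eq_pair hij (fun k hi hj => by simp [rotMid_other hi hj]),
    rotMid_left hij, rotMid_right hij]

theorem inner_maskV_rotDir {i j : Fin n} (hij : i ≠ j) (Ω : Finset (Fin n)) (q : Vec n) :
    ⟪maskV Ω q, maskV Ω (rotDir q i j)⟫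
      = q i * q j * ((if i ∈ Ω then 1 else 0) - (if j ∈ Ω then 1 else 0)) := by
  rw [inner_maskV, sum_eq_pair hij (fun k hi hj => by simp [rotDir_other hi hj]),
    rotDir_left hij, rotDir_right hij]
  ring

theorem inner_maskV_rotMid {i j : Fin n} (hij : i ≠ j) (Ω : Finset (Fin n)) (q : Vec n) :
    ⟪maskV Ω q, maskV Ω (rotMid q i j)⟫
      = (if i ∈ Ω then 1 else 0) * q i ^ 2 + (if j ∈ Ω then 1 else 0) * q j ^ 2 := by
  rw [inner_maskV, sum_eq_pair hij (fun k hi hj => by simp [rotMid_other hi hj]),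
    rotMid_left hij, rotMid_right hij]
  ring

theorem norm_maskV_rotDir_sq {i j : Fin n} (hij : i ≠ j) (Ω : Finset (Fin n)) (q : Vec n) :
    ‖maskV Ω (rotDir q i j)‖ ^ 2
      = (if i ∈ Ω then 1 else 0) * q j ^ 2 + (if j ∈ Ω then 1 else 0) * q i ^ 2 := by
  rw [norm_maskV_sq, sum_eq_pair hij (fun k hi hj => by simp [rotDir_other hi hj]),
    rotDir_left hij, rotDir_right hij]
  ring

/-- The difference of expected curvatures carried by coordinates `i` and `j`. -/
def crossSum (θ μ : ℝ) (q : Vec n) (i j : Fin n) : ℝ :=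
  ∑ Ω : Finset (Fin n), wt θ Ω *
    (((if i ∈ Ω then 1 else 0) - (if j ∈ Ω then 1 else 0)) * chi μ (‖maskV Ω q‖ ^ 2))

theorem PhiOne_rotDir (h0 : 0 ≤ θ) (h1 : θ ≤ 1) (hμ : 0 < μ) {i j : Fin n} (hij : i ≠ j)
    (q : Vec n) : PhiOne θ μ q (rotDir q i j) = q i * q j * crossSum θ μ q i j := by
  rw [PhiOne_eq h0 h1 hμ, crossSum, Finset.mul_sum]
  refine Finset.sum_congr rfl fun Ω _ => ?_
  rw [inner_maskV_rotDir hij]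
  ring

theorem wt_swap (θ : ℝ) (σ : Equiv.Perm (Fin n)) (Ω : Finset (Fin n)) :
    wt θ (Equiv.finsetCongr σ Ω) = wt θ Ω := by
  simp only [wt, Equiv.finsetCongr_apply, Finset.mem_map_equiv]
  exact Equiv.prod_comp σ.symm (fun k => if k ∈ Ω then θ else 1 - θ)

theorem norm_maskV_swap (i j : Fin n) {Ω : Finset (Fin n)} (hi : i ∈ Ω) (hj : j ∉ Ω) (q : Vec n) :
    ‖maskV (Equiv.finsetCongr (Equiv.swap i j) Ω) q‖ ^ 2
      = ‖maskV Ω q‖ ^ 2 - q i ^ 2 + q j ^ 2 := by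
  have h1 : ‖maskV (Equiv.finsetCongr (Equiv.swap i j) Ω) q‖ ^ 2
      = ∑ k, (if k ∈ Ω then 1 else 0) * q (Equiv.swap i j k) ^ 2 := by
    rw [norm_maskV_sq, ← Equiv.sum_comp (Equiv.swap i j)]
    simp [Equiv.finsetCongr_apply]
  have h2 : ‖maskV Ω q‖ ^ 2 - ‖maskV (Equiv.finsetCongr (Equiv.swap i j) Ω) q‖ ^ 2
      = q i ^ 2 - q j ^ 2 := by
    rw [h1, norm_maskV_sq, ← Finset.sum_sub_distrib, Finset.sum_eq_single i]
    · simp [hi]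
    · intro k _ hk
      by_cases hkj : k = j
      · subst hkj; simp [hj]
      · rw [Equiv.swap_apply_of_ne_of_ne hk hkj]; ring
    · simp
  linarith

theorem crossSum_eq (θ μ : ℝ) (q : Vec n) (i j : Fin n) :
    crossSum θ μ q i j = ∑ Ω : Finset (Fin n), wt θ Ω * (if i ∈ Ω ∧ j ∉ Ω then 1 else 0) *
      (chi μ (‖maskV Ω q‖ ^ 2) - chi μ (‖maskV Ω q‖ ^ 2 - q i ^ 2 + q j ^ 2)) := by
  have h1 : crossSum θ μ q i j
      = ∑ Ω : Finset (Fin n), wt θ Ω * (if i ∈ Ω ∧ j ∉ Ω then 1 else 0) * chi μ (‖maskV Ω q‖ ^ 2)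
      - ∑ Ω : Finset (Fin n), wt θ Ω * (if j ∈ Ω ∧ i ∉ Ω then 1 else 0) *
        chi μ (‖maskV Ω q‖ ^ 2) := by
    rw [crossSum, ← Finset.sum_sub_distrib]
    refine Finset.sum_congr rfl fun Ω _ => ?_
    by_cases hi : i ∈ Ω <;> by_cases hj : j ∈ Ω <;> simp [hi, hj]
  have h2 : ∑ Ω : Finset (Fin n), wt θ Ω * (if j ∈ Ω ∧ i ∉ Ω then 1 else 0) *
        chi μ (‖maskV Ω q‖ ^ 2)
      = ∑ Ω : Finset (Fin n), wt θ Ω * (if i ∈ Ω ∧ j ∉ Ω then 1 else 0) *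
        chi μ (‖maskV Ω q‖ ^ 2 - q i ^ 2 + q j ^ 2) := by
    rw [← Equiv.sum_comp (Equiv.finsetCongr (Equiv.swap i j))]
    refine Finset.sum_congr rfl fun Ω _ => ?_
    rw [wt_swap]
    have e : (j ∈ Equiv.finsetCongr (Equiv.swap i j) Ω ∧ i ∉ Equiv.finsetCongr (Equiv.swap i j) Ω)
        ↔ (i ∈ Ω ∧ j ∉ Ω) := by
      simp [Equiv.finsetCongr_apply, Finset.mem_map_equiv]
    by_cases h : i ∈ Ω ∧ j ∉ Ω
    · rw [if_pos h, if_pos (e.2 h), norm_maskV_swap i j h.1 h.2]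
    · rw [if_neg h, if_neg (fun h' => h (e.1 h'))]
      ring
  rw [h1, h2, ← Finset.sum_sub_distrib]
  exact Finset.sum_congr rfl fun Ω _ => by ring

theorem sq_le_norm_maskV_sq {i : Fin n} {Ω : Finset (Fin n)} (hi : i ∈ Ω) (q : Vec n) :
    q i ^ 2 ≤ ‖maskV Ω q‖ ^ 2 := by
  rw [norm_maskV_sq]
  refine le_trans (by simp [hi]) (Finset.single_le_sum (f := fun k =>
    (if k ∈ Ω then 1 else 0) * q k ^ 2) (fun k _ => ?_) (Finset.mem_univ i))
  simp only
  split_ifs <;> positivity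

theorem norm_maskV_sq_le_one {q : Vec n} (hq : ‖q‖ ≤ 1) (Ω : Finset (Fin n)) :
    ‖maskV Ω q‖ ^ 2 ≤ 1 := by
  have := (norm_maskV_le Ω q).trans hq
  exact pow_le_one₀ (norm_nonneg _) this

theorem crossSum_le (h0 : 0 ≤ θ) (h1 : θ ≤ 1) (hμ : 0 < μ) (hμ1 : μ ≤ 1) {i j : Fin n}
    (hij : i ≠ j) {q : Vec n} (hq : ‖q‖ ≤ 1) (hle : q j ^ 2 ≤ q i ^ 2) :
    crossSum θ μ q i j ≤ -(θ * (1 - θ) / 100 * (q i ^ 2 - q j ^ 2)) := by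
  have h : crossSum θ μ q i j ≤ ∑ Ω : Finset (Fin n), wt θ Ω *
      (if i ∈ Ω ∧ j ∉ Ω then 1 else 0) * (-((q i ^ 2 - q j ^ 2) / 100)) := by
    rw [crossSum_eq]
    refine Finset.sum_le_sum fun Ω _ => ?_
    by_cases h : i ∈ Ω ∧ j ∉ Ω
    · refine mul_le_mul_of_nonneg_left ?_ (by simp [h, wt_nonneg h0 h1])
      have hs := sq_le_norm_maskV_sq h.1 q
      have := chi_sub_ge hμ hμ1 (v := ‖maskV Ω q‖ ^ 2 - q i ^ 2 + q j ^ 2)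
        (w := ‖maskV Ω q‖ ^ 2) (by nlinarith [sq_nonneg (q j)]) (by linarith)
        (norm_maskV_sq_le_one hq Ω)
      linarith
    · simp [h]
  refine h.trans_eq ?_
  rw [← Finset.sum_mul, sum_wt_mem_not_mem θ hij]
  ring

theorem curvature_eq (h0 : 0 ≤ θ) (h1 : θ ≤ 1) (hμ : 0 < μ) {i j : Fin n}
    (hij : i ≠ j) (q : Vec n) :
    PhiTwo θ μ q (rotDir q i j) / μ - PhiOne θ μ q (rotMid q i j)
      = -((q i ^ 2 - q j ^ 2) * crossSum θ μ q i j) +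
        (q i * q j) ^ 2 * ∑ Ω : Finset (Fin n), wt θ Ω *
          (((if i ∈ Ω then 1 else 0) - (if j ∈ Ω then 1 else 0)) ^ 2 / ‖maskV Ω q‖ ^ 2 *
            chiTwo μ (‖maskV Ω q‖ ^ 2)) := by
  rw [PhiTwo_eq h0 h1 hμ, PhiOne_eq h0 h1 hμ, mul_div_cancel_left₀ _ hμ.ne', crossSum,
    Finset.mul_sum, Finset.mul_sum, ← Finset.sum_sub_distrib, ← Finset.sum_neg_distrib,
    ← Finset.sum_add_distrib]
  refine Finset.sum_congr rfl fun Ω _ => ?_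
  rw [inner_maskV_rotDir hij, inner_maskV_rotMid hij, norm_maskV_rotDir_sq hij]
  ring

theorem curvature_le (h0 : 0 ≤ θ) (h1 : θ ≤ 1) (hμ : 0 < μ) (hμ1 : μ ≤ 1) {i j : Fin n}
    (hij : i ≠ j) {q : Vec n} (hq : ‖q‖ ≤ 1) (hi : μ ^ 2 ≤ q i ^ 2) (hj : μ ^ 2 ≤ q j ^ 2) :
    PhiTwo θ μ q (rotDir q i j) / μ - PhiOne θ μ q (rotMid q i j)
      ≤ -((q i ^ 2 - q j ^ 2) * crossSum θ μ q i j) -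
        θ * (1 - θ) / 50 * (q i * q j) ^ 2 := by
  rw [curvature_eq h0 h1 hμ hij]
  have h : ∑ Ω : Finset (Fin n), wt θ Ω *
          (((if i ∈ Ω then 1 else 0) - (if j ∈ Ω then 1 else 0)) ^ 2 / ‖maskV Ω q‖ ^ 2 *
            chiTwo μ (‖maskV Ω q‖ ^ 2)) ≤ ∑ Ω : Finset (Fin n),
          (wt θ Ω * (if i ∈ Ω ∧ j ∉ Ω then 1 else 0) + wt θ Ω * (if j ∈ Ω ∧ i ∉ Ω then 1 else 0))
            * (-(1 / 100)) := by
    refine Finset.sum_le_sum fun Ω _ => ?_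
    rw [← mul_add, mul_assoc]
    refine mul_le_mul_of_nonneg_left ?_ (wt_nonneg h0 h1 Ω)
    have key : ∀ k ∈ Ω, μ ^ 2 ≤ q k ^ 2 →
        (1 : ℝ) / ‖maskV Ω q‖ ^ 2 * chiTwo μ (‖maskV Ω q‖ ^ 2) ≤ -(1 / 100) := by
      intro k hk hqk
      have h2 : μ ^ 2 ≤ ‖maskV Ω q‖ ^ 2 := hqk.trans (sq_le_norm_maskV_sq hk q)
      have h3 := chiTwo_le hμ hμ1 h2 (norm_maskV_sq_le_one hq Ω)
      have h4 : 1 ≤ 1 / ‖maskV Ω q‖ ^ 2 :=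
        (one_le_div (lt_of_lt_of_le (by positivity) h2)).2 (norm_maskV_sq_le_one hq Ω)
      nlinarith
    by_cases hi' : i ∈ Ω <;> by_cases hj' : j ∈ Ω
    · simp [hi', hj']
    · simpa [hi', hj'] using key i hi' hi
    · simpa [hi', hj'] using key j hj' hj
    · simp [hi', hj']
  rw [← Finset.sum_mul, Finset.sum_add_distrib, sum_wt_mem_not_mem θ hij,
    sum_wt_mem_not_mem θ hij.symm] at h
  nlinarith [mul_le_mul_of_nonneg_left h (sq_nonneg (q i * q j))]

theorem norm_maskV_sq_le_of_not_mem {i : Fin n} {Ω : Finset (Fin n)} (hi : i ∉ Ω) (a : Vec n) :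
    ‖maskV Ω a‖ ^ 2 ≤ ‖a‖ ^ 2 - a i ^ 2 := by
  rw [norm_maskV_sq, norm_sq_eq_sum, ← Finset.sum_erase_eq_sub (Finset.mem_univ i),
    ← Finset.sum_erase (a := i) Finset.univ (by simp [hi])]
  refine Finset.sum_le_sum fun k _ => ?_
  split_ifs <;> nlinarith [sq_nonneg (a k)]

theorem sum_wt_not_mem_norm_maskV_sq (θ : ℝ) (i : Fin n) (b : Vec n) :
    ∑ Ω : Finset (Fin n), wt θ Ω * ((if i ∈ Ω then 0 else 1) * ‖maskV Ω b‖ ^ 2)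
      = θ * (1 - θ) * (‖b‖ ^ 2 - b i ^ 2) := by
  have e : ∀ Ω : Finset (Fin n), wt θ Ω * ((if i ∈ Ω then 0 else 1) * ‖maskV Ω b‖ ^ 2)
      = ∑ k ∈ Finset.univ.erase i, wt θ Ω * (if k ∈ Ω ∧ i ∉ Ω then 1 else 0) * b k ^ 2 := by
    intro Ω
    rw [norm_maskV_sq, Finset.mul_sum, Finset.mul_sum]
    rw [← Finset.sum_erase (a := i) Finset.univ (by by_cases hi : i ∈ Ω <;> simp [hi])]
    refine Finset.sum_congr rfl fun k _ => ?_
    by_cases hi : i ∈ Ω <;> by_cases hk : k ∈ Ω <;> simp [hi, hk]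
  simp_rw [e]
  rw [Finset.sum_comm, norm_sq_eq_sum, ← Finset.sum_erase_eq_sub (Finset.mem_univ i),
    Finset.mul_sum]
  refine Finset.sum_congr rfl fun k hk => ?_
  rw [← Finset.sum_mul, sum_wt_mem_not_mem θ (Finset.ne_of_mem_erase hk)]

theorem PhiTwo_ge (h0 : 0 ≤ θ) (h1 : θ ≤ 1) (hμ : 0 < μ) (i : Fin n) (a b : Vec n) :
    θ * (1 - θ) * (‖b‖ ^ 2 - b i ^ 2) * (1 - 48 * (‖a‖ ^ 2 - a i ^ 2) / μ ^ 2)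
      ≤ PhiTwo θ μ a b := by
  have hinteg : ∀ Ω : Finset (Fin n), Integrable (fun g => psiTwo μ a b (maskF Ω g)) (stdG n) := by
    intro Ω
    simp only [psiTwo, pair_maskF]
    exact integrable_bdd_mul_pair_stdG (maskV Ω a) (maskV Ω b)
      (F := fun y => sechSq (y / μ)) (by fun_prop) (fun y => abs_sechSq_le_one _) 2
  rw [PhiTwo, integral_bgVec h0 h1 (by fun_prop) hinteg, ← sum_wt_not_mem_norm_maskV_sq,
    Finset.sum_mul]
  refine Finset.sum_le_sum fun Ω _ => ?_
  rw [mul_assoc]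
  refine mul_le_mul_of_nonneg_left ?_ (wt_nonneg h0 h1 Ω)
  by_cases hi : i ∈ Ω
  · rw [if_pos hi, zero_mul, zero_mul]
    exact integral_nonneg fun g => mul_nonneg (sechSq_nonneg _) (sq_nonneg _)
  · rw [if_neg hi, one_mul]
    have hA := norm_maskV_sq_le_of_not_mem hi a
    have h2 : ∫ g, (pair (maskV Ω b) g ^ 2 -
        (μ ^ 2)⁻¹ * (pair (maskV Ω a) g ^ 2 * pair (maskV Ω b) g ^ 2)) ∂(stdG n)
        ≤ ∫ g, psiTwo μ a b (maskF Ω g) ∂(stdG n) := by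
      refine integral_mono ((integrable_pair_pow_stdG _ 2).sub
        ((integrable_pair_sq_mul_pair_sq_stdG _ _).const_mul _)) (hinteg Ω) fun g => ?_
      simp only [psiTwo, pair_maskF]
      have := mul_le_mul_of_nonneg_right (one_sub_sq_le_sechSq (pair (maskV Ω a) g / μ))
        (sq_nonneg (pair (maskV Ω b) g))
      refine le_trans (le_of_eq ?_) this
      rw [div_pow]; field_simp
    rw [integral_sub (integrable_pair_pow_stdG _ 2)
      ((integrable_pair_sq_mul_pair_sq_stdG _ _).const_mul _), integral_const_mul,
      integral_pair_sq_stdG] at h2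
    refine le_trans ?_ h2
    have h3 := integral_pair_sq_mul_pair_sq_stdG_le (maskV Ω a) (maskV Ω b)
    have h4 : 48 * (‖maskV Ω a‖ ^ 2 * ‖maskV Ω b‖ ^ 2)
        ≤ 48 * ((‖a‖ ^ 2 - a i ^ 2) * ‖maskV Ω b‖ ^ 2) := by gcongr
    have h5 := mul_le_mul_of_nonneg_left (h3.trans h4) (show 0 ≤ (μ ^ 2)⁻¹ by positivity)
    refine le_trans (le_of_eq ?_) (sub_le_sub_left h5 _)
    field_simp

end Population

section Columns

variable {n p : ℕ} {θ : ℝ}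

/-- The `k`-th column of a matrix. -/
def colVec (X : Fin n → Fin p → ℝ) (k : Fin p) : Fin n → ℝ := fun i => X i k

/-- Empirical average of `F` over the columns. -/
def avg (F : (Fin n → ℝ) → ℝ) (X : Fin n → Fin p → ℝ) : ℝ :=
  (p : ℝ)⁻¹ * ∑ k : Fin p, F (colVec X k)

theorem measurable_colVec : Measurable (fun (X : Fin n → Fin p → ℝ) (k : Fin p) => colVec X k) := by
  unfold colVec; fun_prop

theorem map_colVec_bgMatrix (θ : ℝ) (n p : ℕ) :
    (bgMatrix θ n p).map (fun X k => colVec X k) = Measure.pi fun _ : Fin p => bgVec θ n := by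
  symm
  refine Measure.pi_eq_generateFrom
    (C := fun _ => Set.univ.pi '' Set.univ.pi fun _ : Fin n => {s : Set ℝ | MeasurableSet s})
    (fun _ => generateFrom_pi) (fun _ => isPiSystem_pi) (fun _ => ?_) ?_
  · refine ⟨fun _ => Set.univ, fun _ => ⟨fun _ => Set.univ, ?_, by simp⟩, fun _ => ?_, Set.iUnion_const _⟩
    · simp
    · unfold bgVec; exact measure_lt_top _ _
  · intro s hs
    choose t ht hts using hs
    obtain rfl : (fun k => Set.univ.pi (t k)) = s := funext hts
    have htm : ∀ k i, MeasurableSet (t k i) := fun k i => ht k i (Set.mem_univ i)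
    rw [Measure.map_apply measurable_colVec
      (MeasurableSet.univ_pi fun k => MeasurableSet.univ_pi (htm k))]
    have e : (fun (X : Fin n → Fin p → ℝ) k => colVec X k) ⁻¹'
        (Set.univ.pi fun k => Set.univ.pi (t k))
        = Set.univ.pi fun i => Set.univ.pi fun k => t k i := by
      ext X
      simp only [Set.mem_preimage, Set.mem_univ_pi, colVec]
      exact forall_comm
    rw [e, bgMatrix, Measure.pi_pi]
    simp_rw [Measure.pi_pi, bgVec, Measure.pi_pi]
    exact Finset.prod_comm

theorem exp_le_one_add_add_sq (y : ℝ) : Real.exp y ≤ 1 + y + y ^ 2 * Real.exp |y| := by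
  have h1 : 1 ≤ Real.exp |y| := Real.one_le_exp (abs_nonneg y)
  rcases le_or_gt |y| 1 with h | h
  · have := (abs_le.1 (Real.abs_exp_sub_one_sub_id_le h)).2
    nlinarith [sq_nonneg y]
  · rcases lt_abs.1 h with h' | h'
    · rw [abs_of_pos (by linarith)]
      have hy : 1 ≤ y ^ 2 := by nlinarith
      nlinarith [mul_le_mul_of_nonneg_right hy (Real.exp_pos y).le]
    · have : Real.exp y ≤ 1 := Real.exp_le_one_iff.2 (by linarith)
      nlinarith [sq_nonneg y]

theorem exp_mul_le_of_growth {lam f s : ℝ} (hl : |lam| ≤ 1 / 32) (hs : 0 ≤ s) (hf : |f| ≤ 1 + s) :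
    Real.exp (lam * f) ≤ 1 + lam * f + lam ^ 2 * (3000 * Real.exp (s / 16)) := by
  refine (exp_le_one_add_add_sq _).trans ?_
  have h1 : |lam * f| ≤ (1 + s) / 32 := by
    rw [abs_mul]
    calc |lam| * |f| ≤ 1 / 32 * (1 + s) := mul_le_mul hl hf (abs_nonneg _) (by norm_num)
      _ = _ := by ring
  have h2 : f ^ 2 ≤ 2048 * Real.exp ((1 + s) / 32) := by
    have h3 : f ^ 2 ≤ (1 + s) ^ 2 := sq_le_sq' (by linarith [(abs_le.1 hf).1]) (abs_le.1 hf).2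
    have := Real.quadratic_le_exp_of_nonneg (x := (1 + s) / 32) (by positivity)
    nlinarith
  have h4 : Real.exp ((1 + s) / 32) * Real.exp ((1 + s) / 32)
      = Real.exp (1 / 16) * Real.exp (s / 16) := by
    rw [← Real.exp_add, ← Real.exp_add]; ring_nf
  have h5 : Real.exp (1 / 16) ≤ 3000 / 2048 := by
    have := Real.exp_bound_div_one_sub_of_interval (x := 1 / 16) (by norm_num) (by norm_num)
    norm_num at this ⊢
    linarith
  have h6 : f ^ 2 * Real.exp |lam * f| ≤ 3000 * Real.exp (s / 16) := by
    calc f ^ 2 * Real.exp |lam * f|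
        ≤ 2048 * Real.exp ((1 + s) / 32) * Real.exp ((1 + s) / 32) :=
          mul_le_mul h2 (Real.exp_le_exp.2 h1) (Real.exp_pos _).le (by positivity)
      _ = 2048 * (Real.exp (1 / 16) * Real.exp (s / 16)) := by rw [mul_assoc, h4]
      _ ≤ 2048 * (3000 / 2048 * Real.exp (s / 16)) := by gcongr
      _ = _ := by ring
  have := mul_le_mul_of_nonneg_left h6 (sq_nonneg lam)
  calc _ = 1 + lam * f + lam ^ 2 * (f ^ 2 * Real.exp |lam * f|) := by ring
    _ ≤ _ := by linarith

theorem integrable_exp_of_growth (h0 : 0 ≤ θ) (h1 : θ ≤ 1) {b : Vec n} (hb : ‖b‖ ≤ 2)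
    {F : (Fin n → ℝ) → ℝ} (hF : Continuous F) (hFb : ∀ x, |F x| ≤ 1 + pair b x ^ 2) {lam : ℝ}
    (hl : |lam| ≤ 1 / 32) : Integrable (fun x => Real.exp (lam * F x)) (bgVec θ n) := by
  refine ((integrable_exp_pair_sq h0 h1 hb).const_mul (Real.exp (1 / 32))).mono' (by fun_prop)
    (Filter.Eventually.of_forall fun x => ?_)
  rw [Real.norm_eq_abs, Real.abs_exp, ← Real.exp_add]
  refine Real.exp_le_exp.2 ((le_abs_self _).trans ?_)
  rw [abs_mul]
  nlinarith [mul_le_mul hl (hFb x) (abs_nonneg _) (by norm_num), sq_nonneg (pair b x)]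

theorem integral_exp_le_of_growth (h0 : 0 ≤ θ) (h1 : θ ≤ 1) {b : Vec n} (hb : ‖b‖ ≤ 2)
    {F : (Fin n → ℝ) → ℝ} (hF : Continuous F) (hFb : ∀ x, |F x| ≤ 1 + pair b x ^ 2) {lam : ℝ}
    (hl : |lam| ≤ 1 / 32) :
    ∫ x, Real.exp (lam * F x) ∂(bgVec θ n)
      ≤ Real.exp (lam * (∫ x, F x ∂(bgVec θ n)) + 6000 * lam ^ 2) := by
  have : Fact (θ ∈ Set.Icc (0 : ℝ) 1) := ⟨⟨h0, h1⟩⟩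
  have hFi : Integrable F (bgVec θ n) :=
    ((integrable_const 1).add (integrable_pair_sq h0 h1 b)).mono' (by fun_prop)
      (Filter.Eventually.of_forall hFb)
  have hE := integrable_exp_pair_sq h0 h1 hb
  have i1 : Integrable (fun x => 1 + lam * F x) (bgVec θ n) :=
    (integrable_const 1).add (hFi.const_mul lam)
  have i2 : Integrable (fun x => lam ^ 2 * (3000 * Real.exp (pair b x ^ 2 / 16))) (bgVec θ n) :=
    (hE.const_mul _).const_mul _
  have h := integral_mono (integrable_exp_of_growth h0 h1 hb hF hFb hl) (i1.add i2)
    (fun x => exp_mul_le_of_growth hl (sq_nonneg (pair b x)) (hFb x))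
  simp only [Pi.add_apply] at h
  rw [integral_add i1 i2, integral_add (integrable_const 1) (hFi.const_mul lam),
    integral_const_mul, integral_const_mul, integral_const_mul] at h
  simp only [integral_const, probReal_univ, smul_eq_mul, mul_one] at h
  have h2 := integral_exp_pair_sq_le h0 h1 hb
  have h3 := mul_le_mul_of_nonneg_left h2 (sq_nonneg lam)
  refine h.trans (le_trans ?_ (Real.add_one_le_exp _))
  nlinarith

theorem measure_avg_ge_le (h0 : 0 ≤ θ) (h1 : θ ≤ 1) (hp : 0 < p) {b : Vec n} (hb : ‖b‖ ≤ 2)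
    {F : (Fin n → ℝ) → ℝ} (hF : Continuous F) (hFb : ∀ x, |F x| ≤ 1 + pair b x ^ 2) {t : ℝ}
    (ht : 0 ≤ t) (ht1 : t ≤ 1) :
    bgMatrix θ n p {X | (∫ x, F x ∂(bgVec θ n)) + t ≤ avg F X}
      ≤ ENNReal.ofReal (Real.exp (-(p * t ^ 2 / 24000))) := by
  have : Fact (θ ∈ Set.Icc (0 : ℝ) 1) := ⟨⟨h0, h1⟩⟩
  set m := ∫ x, F x ∂(bgVec θ n) with hm
  set lam := t / 12000 with hlam
  have hl : |lam| ≤ 1 / 32 := by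
    rw [abs_of_nonneg (by positivity)]; rw [hlam]; linarith
  have hl0 : 0 ≤ lam := by positivity
  have hp' : (0 : ℝ) < p := by exact_mod_cast hp
  set P := Measure.pi fun _ : Fin p => bgVec θ n with hP
  set S : (Fin p → Fin n → ℝ) → ℝ := fun x => ∑ k, F (x k) with hS
  have hprod : ∀ x : Fin p → Fin n → ℝ,
      Real.exp (lam * S x) = ∏ k, Real.exp (lam * F (x k)) := by
    intro x; rw [← Real.exp_sum, hS, Finset.mul_sum]
  have hinteg : Integrable (fun x => Real.exp (lam * S x)) P := by
    simp_rw [hprod]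
    exact Integrable.fintype_prod fun _ => integrable_exp_of_growth h0 h1 hb hF hFb hl
  have hmgf : mgf S P lam ≤ Real.exp (p * (lam * m + 6000 * lam ^ 2)) := by
    rw [mgf]
    simp_rw [hprod]
    rw [hP, integral_fintype_prod_eq_prod (fun _ x => Real.exp (lam * F x)), Finset.prod_const,
      Finset.card_univ, Fintype.card_fin, Real.exp_nat_mul]
    exact pow_le_pow_left₀ (integral_nonneg fun _ => (Real.exp_pos _).le)
      (integral_exp_le_of_growth h0 h1 hb hF hFb hl) p
  have key := measure_ge_le_exp_mul_mgf (μ := P) (X := S) (t := lam) (p * (m + t)) hl0 hinteg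
  have key2 : P.real {x | p * (m + t) ≤ S x} ≤ Real.exp (-(p * t ^ 2 / 24000)) := by
    refine key.trans ((mul_le_mul_of_nonneg_left hmgf (Real.exp_pos _).le).trans_eq ?_)
    rw [← Real.exp_add, hlam]
    congr 1
    ring
  have hset : MeasurableSet {x : Fin p → Fin n → ℝ | p * (m + t) ≤ S x} :=
    measurableSet_le (by fun_prop) (by fun_prop)
  have hmap : bgMatrix θ n p {X | m + t ≤ avg F X} = P {x | p * (m + t) ≤ S x} := by
    rw [hP, ← map_colVec_bgMatrix, Measure.map_apply measurable_colVec hset]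
    congr 1
    ext X
    simp only [Set.mem_preimage, Set.mem_ofPred_eq, avg, hS]
    rw [inv_mul_eq_div, le_div_iff₀ hp', mul_comm]
  rw [hmap, ← ENNReal.ofReal_toReal (measure_ne_top P _)]
  exact ENNReal.ofReal_le_ofReal key2

theorem measure_abs_avg_sub_gt_le (h0 : 0 ≤ θ) (h1 : θ ≤ 1) (hp : 0 < p) {b : Vec n}
    (hb : ‖b‖ ≤ 2) {F : (Fin n → ℝ) → ℝ} (hF : Continuous F)
    (hFb : ∀ x, |F x| ≤ 1 + pair b x ^ 2) {t : ℝ} (ht : 0 ≤ t) (ht1 : t ≤ 1) :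
    bgMatrix θ n p {X | t < |avg F X - ∫ x, F x ∂(bgVec θ n)|}
      ≤ ENNReal.ofReal (2 * Real.exp (-(p * t ^ 2 / 24000))) := by
  have h2 := measure_avg_ge_le h0 h1 hp hb hF hFb ht ht1
  have h3 := measure_avg_ge_le (F := fun x => -F x) h0 h1 hp hb hF.neg (by simpa using hFb) ht ht1
  have hsub : {X : Fin n → Fin p → ℝ | t < |avg F X - ∫ x, F x ∂(bgVec θ n)|}
      ⊆ {X | (∫ x, F x ∂(bgVec θ n)) + t ≤ avg F X} ∪
        {X | (∫ x, -F x ∂(bgVec θ n)) + t ≤ avg (fun x => -F x) X} := by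
    intro X hX
    rcases lt_abs.1 (Set.mem_ofPred_eq ▸ hX) with h | h
    · left; simp only [Set.mem_ofPred_eq]; linarith
    · right
      simp only [Set.mem_ofPred_eq, integral_neg]
      have : avg (fun x => -F x) X = -avg F X := by simp [avg]
      rw [this]; linarith
  refine (measure_mono hsub).trans ((measure_union_le _ _).trans ((add_le_add h2 h3).trans_eq ?_))
  rw [← ENNReal.ofReal_add (Real.exp_pos _).le (Real.exp_pos _).le]
  congr 1
  ring

end Columns

section Net

variable {n p : ℕ} {θ μ t : ℝ}

theorem abs_avg_sub_avg_le (hp : 0 < p) {F G : (Fin n → ℝ) → ℝ} {X : Fin n → Fin p → ℝ} {B : ℝ}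
    (h : ∀ k, |F (colVec X k) - G (colVec X k)| ≤ B) : |avg F X - avg G X| ≤ B := by
  have hp' : (0 : ℝ) < p := by exact_mod_cast hp
  rw [avg, avg, ← mul_sub, ← Finset.sum_sub_distrib, abs_mul, abs_of_pos (inv_pos.2 hp'),
    inv_mul_le_iff₀ hp']
  refine (Finset.abs_sum_le_sum_abs _ _).trans ((Finset.sum_le_sum fun k _ => h k).trans_eq ?_)
  simp

theorem le_of_avg_le {F : (Fin n → ℝ) → ℝ} (hF : ∀ x, 0 ≤ F x) {X : Fin n → Fin p → ℝ} {B : ℝ}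
    (h : avg F X ≤ B) (k : Fin p) : F (colVec X k) ≤ p * B := by
  have hp' : (0 : ℝ) < p := by exact_mod_cast k.pos
  rw [avg, inv_mul_le_iff₀ hp'] at h
  exact (Finset.single_le_sum (f := fun k => F (colVec X k)) (fun k _ => hF _)
    (Finset.mem_univ k)).trans h

theorem abs_pair_le (a : Vec n) (x : Fin n → ℝ) : |pair a x| ≤ ‖a‖ * ‖WithLp.toLp 2 x‖ := by
  rw [pair_eq_inner]; exact abs_real_inner_le_norm _ _

/-- The point `z / N` of the grid `N⁻¹ ℤⁿ`. -/
def gridPt (N : ℕ) (z : Fin n → ℤ) : Vec n := WithLp.toLp 2 fun i => (z i : ℝ) / N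

/-- Integer vectors with all entries in `[-2N, 2N]`. -/
def gridBox (n N : ℕ) : Finset (Fin n → ℤ) :=
  Fintype.piFinset fun _ => Finset.Icc (-(2 * N : ℤ)) (2 * N)

theorem card_gridBox (n N : ℕ) : (gridBox n N).card = (4 * N + 1) ^ n := by
  rw [gridBox, Fintype.card_piFinset, Finset.prod_const, Finset.card_univ, Fintype.card_fin,
    Int.card_Icc]
  congr 1
  lia

theorem exists_gridPt_near {N : ℕ} (hN : 0 < N) {a : Vec n} (ha : ‖a‖ ≤ 3 / 2) :
    ∃ z ∈ gridBox n N, ‖a - gridPt N z‖ ≤ n / N := by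
  have hN' : (0 : ℝ) < N := by exact_mod_cast hN
  refine ⟨fun i => ⌊a i * N⌋, ?_, ?_⟩
  · rw [gridBox, Fintype.mem_piFinset]
    intro i
    have hai : |a i| ≤ 3 / 2 := (by simpa using PiLp.norm_apply_le a i : |a i| ≤ ‖a‖).trans ha
    rw [abs_le] at hai
    rw [Finset.mem_Icc, Int.le_floor]
    have h1 : -(3 / 2) * (N : ℝ) ≤ a i * N := by gcongr; linarith
    have h2 : a i * N ≤ 3 / 2 * (N : ℝ) := by gcongr; linarith
    constructor
    · push_cast; linarith
    · have h3 := (Int.floor_le (a i * N)).trans h2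
      have : ((⌊a i * N⌋ : ℤ) : ℝ) ≤ ((2 * N : ℤ) : ℝ) := by push_cast; linarith
      exact_mod_cast this
  · have hi : ∀ i, (a - gridPt N fun i => ⌊a i * N⌋) i ^ 2 ≤ (1 / N) ^ 2 := by
      intro i
      have e : (a - gridPt N fun i => ⌊a i * N⌋) i = (a i * N - ⌊a i * N⌋) / N := by
        simp only [gridPt, PiLp.sub_apply]
        field_simp
      rw [e]
      have h1 := Int.floor_le (a i * N)
      have h2 := (Int.lt_floor_add_one (a i * N)).le
      have h3 : 0 ≤ a i * N - ⌊a i * N⌋ := by linarith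
      gcongr
      linarith
    have hs : ‖a - gridPt N fun i => ⌊a i * N⌋‖ ^ 2 ≤ (n / N) ^ 2 := by
      rw [norm_sq_eq_sum]
      refine (Finset.sum_le_sum fun i _ => hi i).trans ?_
      rw [Finset.sum_const, Finset.card_univ, Fintype.card_fin, nsmul_eq_mul, div_pow, div_pow,
        one_pow, mul_one_div]
      gcongr
      exact_mod_cast Nat.le_self_pow two_ne_zero n
    exact le_of_sq_le_sq hs (by positivity)

/-- Uniform concentration of the empirical derivatives over the grid. -/
def GridEvent (θ μ t : ℝ) (N : ℕ) (X : Fin n → Fin p → ℝ) : Prop :=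
  ∀ z ∈ gridBox n N, ∀ w ∈ gridBox n N, ‖gridPt (n := n) N w‖ ≤ 2 →
    |avg (psiOne μ (gridPt N z) (gridPt N w)) X - PhiOne θ μ (gridPt N z) (gridPt N w)| ≤ t ∧
    |avg (psiTwo μ (gridPt N z) (gridPt N w)) X - PhiTwo θ μ (gridPt N z) (gridPt N w)| ≤ t

theorem measure_not_gridEvent_le (h0 : 0 ≤ θ) (h1 : θ ≤ 1) (hp : 0 < p) (ht : 0 ≤ t) (ht1 : t ≤ 1)
    (N : ℕ) :
    bgMatrix θ n p {X | ¬ GridEvent θ μ t N X}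
      ≤ ENNReal.ofReal ((4 * N + 1) ^ (2 * n) * (4 * Real.exp (-(p * t ^ 2 / 24000)))) := by
  classical
  set B : Finset ((Fin n → ℤ) × (Fin n → ℤ)) :=
    (gridBox n N ×ˢ gridBox n N).filter fun zw => ‖gridPt (n := n) N zw.2‖ ≤ 2 with hB
  set E : (Fin n → ℤ) × (Fin n → ℤ) → Set (Fin n → Fin p → ℝ) := fun zw =>
    {X | t < |avg (psiOne μ (gridPt N zw.1) (gridPt N zw.2)) X
          - PhiOne θ μ (gridPt N zw.1) (gridPt N zw.2)|} ∪
    {X | t < |avg (psiTwo μ (gridPt N zw.1) (gridPt N zw.2)) X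
          - PhiTwo θ μ (gridPt N zw.1) (gridPt N zw.2)|} with hE
  have hsub : {X : Fin n → Fin p → ℝ | ¬ GridEvent θ μ t N X} ⊆ ⋃ zw ∈ B, E zw := by
    intro X hX
    simp only [Set.mem_ofPred_eq, GridEvent, not_forall, not_and_or, not_le] at hX
    obtain ⟨z, hz, w, hw, hw2, h⟩ := hX
    simp only [Set.mem_iUnion]
    refine ⟨(z, w), ?_, h⟩
    rw [hB, Finset.mem_filter, Finset.mem_product]
    exact ⟨⟨hz, hw⟩, hw2⟩
  have hEm : ∀ zw ∈ B, bgMatrix θ n p (E zw)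
      ≤ ENNReal.ofReal (4 * Real.exp (-(p * t ^ 2 / 24000))) := by
    intro zw hzw
    have hw2 := (Finset.mem_filter.1 hzw).2
    refine (measure_union_le _ _).trans ((add_le_add
      (measure_abs_avg_sub_gt_le h0 h1 hp hw2 (continuous_psiOne μ _ _) (fun x => ?_) ht ht1)
      (measure_abs_avg_sub_gt_le h0 h1 hp hw2 (continuous_psiTwo μ _ _)
        (fun x => ?_) ht ht1)).trans_eq ?_)
    · rw [psiOne, abs_mul]
      nlinarith [mul_le_mul_of_nonneg_right (abs_tanh_le_one (pair (gridPt N zw.1) x / μ))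
        (abs_nonneg (pair (gridPt N zw.2) x)), sq_abs (pair (gridPt N zw.2) x),
        sq_nonneg (|pair (gridPt N zw.2) x| - 1)]
    · rw [psiTwo, abs_mul, abs_of_nonneg (sq_nonneg (pair _ x))]
      nlinarith [mul_le_mul_of_nonneg_right (abs_sechSq_le_one (pair (gridPt N zw.1) x / μ))
        (sq_nonneg (pair (gridPt N zw.2) x))]
    · rw [← ENNReal.ofReal_add (by positivity) (by positivity)]
      congr 1; ring
  have hcard : B.card ≤ (4 * N + 1) ^ (2 * n) := by
    refine (Finset.card_filter_le _ _).trans_eq ?_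
    rw [Finset.card_product, card_gridBox, two_mul, pow_add]
  calc bgMatrix θ n p {X | ¬ GridEvent θ μ t N X} ≤ bgMatrix θ n p (⋃ zw ∈ B, E zw) :=
        measure_mono hsub
    _ ≤ ∑ zw ∈ B, bgMatrix θ n p (E zw) := measure_biUnion_finset_le _ _
    _ ≤ ∑ zw ∈ B, ENNReal.ofReal (4 * Real.exp (-(p * t ^ 2 / 24000))) := Finset.sum_le_sum hEm
    _ = ENNReal.ofReal (B.card * (4 * Real.exp (-(p * t ^ 2 / 24000)))) := by
        rw [Finset.sum_const, nsmul_eq_mul, ENNReal.ofReal_mul (Nat.cast_nonneg B.card),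
          ENNReal.ofReal_natCast]
    _ ≤ _ := by
        refine ENNReal.ofReal_le_ofReal (mul_le_mul_of_nonneg_right ?_ (by positivity))
        exact_mod_cast hcard

theorem psiTwo_zero_left (μ : ℝ) (b : Vec n) (x : Fin n → ℝ) : psiTwo μ 0 b x = pair b x ^ 2 := by
  simp [psiTwo, pair_zero, sechSq]

theorem PhiTwo_zero_left (h0 : 0 ≤ θ) (h1 : θ ≤ 1) (μ : ℝ) (b : Vec n) :
    PhiTwo θ μ 0 b = θ * ‖b‖ ^ 2 := by
  simp only [PhiTwo, psiTwo_zero_left]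
  exact integral_pair_sq h0 h1 b

theorem GridEvent.norm_colVec_le {N : ℕ} (hN : 0 < N) (h0 : 0 ≤ θ) (h1 : θ ≤ 1) (ht1 : t ≤ 1)
    {X : Fin n → Fin p → ℝ} (hX : GridEvent θ μ t N X) (k : Fin p) :
    ‖WithLp.toLp 2 (colVec X k)‖ ≤ 2 * (n * p) := by
  have hN' : (0 : ℝ) < N := by exact_mod_cast hN
  have hp1 : (1 : ℝ) ≤ p := by exact_mod_cast k.pos
  have h0z : gridPt (n := n) N 0 = 0 := by ext i; simp [gridPt]
  have hi : ∀ i, X i k ^ 2 ≤ p * 2 := by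
    intro i
    have hez : gridPt (n := n) N (Pi.single i (N : ℤ)) = EuclideanSpace.single i (1 : ℝ) := by
      ext j
      rcases eq_or_ne j i with rfl | hj
      · simp [gridPt, hN'.ne']
      · simp [gridPt, hj]
    have h := (hX 0 (by simp [gridBox]) (Pi.single i (N : ℤ)) (by
      rw [gridBox, Fintype.mem_piFinset]
      intro j
      rcases eq_or_ne j i with rfl | hj
      · simp; lia
      · simp [hj]) (by rw [hez]; simp)).2
    rw [h0z, hez, PhiTwo_zero_left h0 h1] at h
    have h2 := (abs_le.1 h).2
    simp only [PiLp.norm_single, norm_one, one_pow, mul_one] at h2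
    have h3 := le_of_avg_le (F := psiTwo μ 0 (EuclideanSpace.single i (1 : ℝ)))
      (fun x => by rw [psiTwo_zero_left]; positivity) (B := 2) (X := X) (by linarith) k
    rw [psiTwo_zero_left] at h3
    simpa [pair, colVec] using h3
  refine le_of_sq_le_sq ?_ (by positivity)
  rw [norm_sq_eq_sum]
  calc ∑ i, (WithLp.toLp 2 (colVec X k) : Vec n) i ^ 2 ≤ ∑ i : Fin n, (p : ℝ) * 2 :=
        Finset.sum_le_sum fun i _ => hi i
    _ = 2 * (n * p) := by
        rw [Finset.sum_const, Finset.card_univ, Fintype.card_fin, nsmul_eq_mul]; ring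
    _ ≤ (2 * (n * p)) ^ 2 := by
        rcases Nat.eq_zero_or_pos n with rfl | hn
        · simp
        · have hn1 : (1 : ℝ) ≤ n := by exact_mod_cast hn
          nlinarith [one_le_mul_of_one_le_of_one_le hn1 hp1]

/-- Uniform concentration of the empirical derivatives. -/
def GoodEvent (θ μ t : ℝ) (X : Fin n → Fin p → ℝ) : Prop :=
  ∀ a b : Vec n, ‖a‖ ≤ 3 / 2 →
    |avg (psiOne μ a b) X - PhiOne θ μ a b| ≤ 2 * t * ‖b‖ ∧
    |avg (psiTwo μ a b) X - PhiTwo θ μ a b| ≤ 2 * t * ‖b‖ ^ 2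

theorem psi_sub_grid_le {M δ : ℝ} (hμ : 0 < μ) (hμ1 : μ ≤ 1) (hM : 1 ≤ M) (hδ : 0 ≤ δ)
    {a a' b b' : Vec n} (hb : ‖b‖ ≤ 1) (hb' : ‖b'‖ ≤ 2) (ha : ‖a - a'‖ ≤ δ) (hbb : ‖b - b'‖ ≤ δ)
    {x : Fin n → ℝ} (hx : ‖WithLp.toLp 2 x‖ ≤ M) :
    |psiOne μ a b x - psiOne μ a' b' x| ≤ 2 * (μ⁻¹ * (δ * M ^ 3)) ∧
    |psiTwo μ a b x - psiTwo μ a' b' x| ≤ 5 * (μ⁻¹ * (δ * M ^ 3)) := by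
  have hμi : 1 ≤ μ⁻¹ := (one_le_inv₀ hμ).2 hμ1
  have hM0 : 0 ≤ M := by linarith
  have p1 : |pair (a - a') x| ≤ δ * M := (abs_pair_le _ _).trans (by gcongr)
  have p2 : |pair (b - b') x| ≤ δ * M := (abs_pair_le _ _).trans (by gcongr)
  have p3 : |pair b x| ≤ M := (abs_pair_le _ _).trans (by nlinarith [norm_nonneg b])
  have p4 : |pair (b + b') x| ≤ 3 * M :=
    (abs_pair_le _ _).trans (mul_le_mul ((norm_add_le _ _).trans (by linarith)) hx
      (norm_nonneg _) (by norm_num))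
  have p5 : pair b x ^ 2 ≤ M ^ 2 := sq_le_sq' (abs_le.1 p3).1 (abs_le.1 p3).2
  have q1 : δ * M ≤ δ * M ^ 2 := by gcongr; nlinarith
  have q2 : δ * M ^ 2 ≤ δ * M ^ 3 := by gcongr; norm_num
  have q3 : δ * M ^ 3 ≤ μ⁻¹ * (δ * M ^ 3) := le_mul_of_one_le_left (by positivity) hμi
  constructor
  · have r1 := abs_psiOne_sub_left hμ a a' b x
    have r2 : |psiOne μ a' b x - psiOne μ a' b' x| ≤ δ * M := by
      rw [psiOne, psiOne, ← mul_sub, ← pair_sub, abs_mul]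
      nlinarith [mul_le_mul_of_nonneg_right (abs_tanh_le_one (pair a' x / μ))
        (abs_nonneg (pair (b - b') x))]
    have r3 : μ⁻¹ * |pair (a - a') x * pair b x| ≤ μ⁻¹ * (δ * M ^ 3) := by
      refine mul_le_mul_of_nonneg_left ?_ (by positivity)
      rw [abs_mul]
      calc |pair (a - a') x| * |pair b x| ≤ δ * M * M :=
            mul_le_mul p1 p3 (abs_nonneg _) (by positivity)
        _ = δ * M ^ 2 := by ring
        _ ≤ _ := q2
    have := abs_sub_le (psiOne μ a b x) (psiOne μ a' b x) (psiOne μ a' b' x)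
    linarith
  · have r1 := abs_psiTwo_sub_left hμ a a' b x
    have r2 := abs_psiTwo_sub_right μ a' b b' x
    have r3 : μ⁻¹ * (|pair (a - a') x| * pair b x ^ 2) ≤ μ⁻¹ * (δ * M ^ 3) := by
      refine mul_le_mul_of_nonneg_left ?_ (by positivity)
      calc |pair (a - a') x| * pair b x ^ 2 ≤ δ * M * M ^ 2 :=
            mul_le_mul p1 p5 (sq_nonneg _) (by positivity)
        _ = δ * M ^ 3 := by ring
    have r4 : |pair (b - b') x * pair (b + b') x| ≤ 3 * (δ * M ^ 2) := by
      rw [abs_mul]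
      calc |pair (b - b') x| * |pair (b + b') x| ≤ δ * M * (3 * M) :=
            mul_le_mul p2 p4 (abs_nonneg _) (by positivity)
        _ = _ := by ring
    have := abs_sub_le (psiTwo μ a b x) (psiTwo μ a' b x) (psiTwo μ a' b' x)
    linarith

theorem Phi_sub_grid_le {δ : ℝ} (h0 : 0 ≤ θ) (h1 : θ ≤ 1) (hμ : 0 < μ) (hμ1 : μ ≤ 1)
    (hδ : 0 ≤ δ) {a a' b b' : Vec n} (hb : ‖b‖ ≤ 1) (hb' : ‖b'‖ ≤ 2) (ha : ‖a - a'‖ ≤ δ)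
    (hbb : ‖b - b'‖ ≤ δ) :
    |PhiOne θ μ a b - PhiOne θ μ a' b'| ≤ 2 * (μ⁻¹ * δ) ∧
    |PhiTwo θ μ a b - PhiTwo θ μ a' b'| ≤ 17 * (μ⁻¹ * δ) := by
  have hμi : 1 ≤ μ⁻¹ := (one_le_inv₀ hμ).2 hμ1
  have q : δ ≤ μ⁻¹ * δ := le_mul_of_one_le_left hδ hμi
  have e1 : θ / μ ≤ μ⁻¹ := by rw [div_eq_mul_inv]; exact mul_le_of_le_one_left (by positivity) h1
  have e2 : ‖a - a'‖ * ‖b‖ ≤ δ := by nlinarith [norm_nonneg (a - a'), norm_nonneg b]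
  have e3 : ‖a - a'‖ * ‖b‖ ^ 2 ≤ δ := by
    nlinarith [norm_nonneg (a - a'), norm_nonneg b, pow_le_one₀ (n := 2) (norm_nonneg b) hb]
  have e4 : ‖b + b'‖ ≤ 3 := (norm_add_le _ _).trans (by linarith)
  constructor
  · have r1 := abs_PhiOne_sub_left h0 h1 hμ a a' b
    have r2 := abs_PhiOne_le h0 h1 μ a' (b - b')
    rw [PhiOne_sub_right h0 h1] at r2
    have r3 : √θ ≤ 1 := Real.sqrt_le_one.2 h1
    have r4 : θ / μ * (‖a - a'‖ * ‖b‖) ≤ μ⁻¹ * δ :=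
      mul_le_mul e1 e2 (by positivity) (by positivity)
    have r5 : √θ * ‖b - b'‖ ≤ 1 * δ := mul_le_mul r3 hbb (norm_nonneg _) (by norm_num)
    have := abs_sub_le (PhiOne θ μ a b) (PhiOne θ μ a' b) (PhiOne θ μ a' b')
    linarith
  · have r1 := abs_PhiTwo_sub_left h0 h1 hμ a a' b
    have r2 := abs_PhiTwo_sub_right h0 h1 μ a' b b'
    have r4 : θ / μ * (‖a - a'‖ * ‖b‖ ^ 2) ≤ μ⁻¹ * δ :=
      mul_le_mul e1 e3 (by positivity) (by positivity)
    have r5 : θ * (‖b - b'‖ * ‖b + b'‖) ≤ 1 * (δ * 3) :=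
      mul_le_mul h1 (mul_le_mul hbb e4 (norm_nonneg _) hδ) (by positivity) (by norm_num)
    have r6 : 14 * θ / μ * (‖a - a'‖ * ‖b‖ ^ 2) = 14 * (θ / μ * (‖a - a'‖ * ‖b‖ ^ 2)) := by ring
    have := abs_sub_le (PhiTwo θ μ a b) (PhiTwo θ μ a' b) (PhiTwo θ μ a' b')
    linarith

theorem GridEvent.goodEvent {N : ℕ} (hn : 0 < n) (hp : 0 < p) (hnN : n ≤ N) (h0 : 0 ≤ θ)
    (h1 : θ ≤ 1) (hμ : 0 < μ) (hμ1 : μ ≤ 1) (ht1 : t ≤ 1)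
    (hN : 22 * (μ⁻¹ * (n / N * (2 * (n * p)) ^ 3)) ≤ t)
    {X : Fin n → Fin p → ℝ} (hX : GridEvent θ μ t N X) : GoodEvent θ μ t X := by
  have hN0 : 0 < N := hn.trans_le hnN
  have hN' : (0 : ℝ) < N := by exact_mod_cast hN0
  have hn1 : (1 : ℝ) ≤ n := by exact_mod_cast hn
  have hp1 : (1 : ℝ) ≤ p := by exact_mod_cast hp
  set δ : ℝ := n / N with hδ
  set M : ℝ := 2 * (n * p) with hM
  have hM1 : 1 ≤ M := by nlinarith [one_le_mul_of_one_le_of_one_le hn1 hp1]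
  have hδ0 : 0 ≤ δ := by positivity
  have hδ1 : δ ≤ 1 := by rw [hδ, div_le_one hN']; exact_mod_cast hnN
  have hδM : μ⁻¹ * δ ≤ μ⁻¹ * (δ * M ^ 3) := by
    gcongr
    exact le_mul_of_one_le_right hδ0 (one_le_pow₀ hM1)
  have unit : ∀ a b : Vec n, ‖a‖ ≤ 3 / 2 → ‖b‖ ≤ 1 →
      |avg (psiOne μ a b) X - PhiOne θ μ a b| ≤ 2 * t ∧
      |avg (psiTwo μ a b) X - PhiTwo θ μ a b| ≤ 2 * t := by
    intro a b ha hb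
    obtain ⟨z, hz, haz⟩ := exists_gridPt_near hN0 ha
    obtain ⟨w, hw, hbw⟩ := exists_gridPt_near hN0 (hb.trans (by norm_num : (1 : ℝ) ≤ 3 / 2))
    have hw2 : ‖gridPt (n := n) N w‖ ≤ 2 := by
      have := norm_sub_norm_le (gridPt N w) b
      rw [norm_sub_rev] at this
      linarith
    have g := hX z hz w hw hw2
    have d : ∀ k, _ := fun k => psi_sub_grid_le hμ hμ1 hM1 hδ0 hb hw2 haz hbw
      (hX.norm_colVec_le hN0 h0 h1 ht1 k)
    have d1 := abs_avg_sub_avg_le hp (fun k => (d k).1)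
    have d2 := abs_avg_sub_avg_le hp (fun k => (d k).2)
    have e := Phi_sub_grid_le h0 h1 hμ hμ1 hδ0 hb hw2 haz hbw
    have K0 : 0 ≤ μ⁻¹ * (δ * M ^ 3) := by positivity
    constructor
    · have h2 := abs_le.1 g.1
      have h3 := abs_le.1 d1
      have h4 := abs_le.1 e.1
      rw [abs_le]
      constructor <;> linarith
    · have h2 := abs_le.1 g.2
      have h3 := abs_le.1 d2
      have h4 := abs_le.1 e.2
      rw [abs_le]
      constructor <;> linarith
  intro a b ha
  have hnb : ‖(‖b‖⁻¹ • b)‖ ≤ 1 := by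
    rw [norm_smul, norm_inv, norm_norm]; exact inv_mul_le_one
  have hb : b = ‖b‖ • (‖b‖⁻¹ • b) := by
    rcases eq_or_ne b 0 with rfl | h
    · simp
    · rw [smul_smul, mul_inv_cancel₀ (norm_ne_zero_iff.2 h), one_smul]
  obtain ⟨u1, u2⟩ := unit a _ ha hnb
  set u := ‖b‖⁻¹ • b with hu
  have a1 : avg (psiOne μ a b) X = ‖b‖ * avg (psiOne μ a u) X := by
    conv_lhs => rw [hb]
    simp only [avg, psiOne, pair_smul, Finset.mul_sum]
    refine Finset.sum_congr rfl fun k _ => by ring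
  have a2 : avg (psiTwo μ a b) X = ‖b‖ ^ 2 * avg (psiTwo μ a u) X := by
    conv_lhs => rw [hb]
    simp only [avg, psiTwo, pair_smul, Finset.mul_sum]
    refine Finset.sum_congr rfl fun k _ => by ring
  have b1 : PhiOne θ μ a b = ‖b‖ * PhiOne θ μ a u := by
    conv_lhs => rw [hb]
    rw [PhiOne_smul_right]
  have b2 : PhiTwo θ μ a b = ‖b‖ ^ 2 * PhiTwo θ μ a u := by
    conv_lhs => rw [hb]
    rw [PhiTwo_smul_right]
  constructor
  · rw [a1, b1, ← mul_sub, abs_mul, abs_norm]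
    nlinarith [norm_nonneg b]
  · rw [a2, b2, ← mul_sub, abs_mul, abs_of_nonneg (sq_nonneg _)]
    nlinarith [sq_nonneg ‖b‖]

end Net

section Whitening

variable {n p : ℕ} {θ μ t : ℝ}

theorem norm_apply_le_of_eigenvalue_le {T : Vec n →ₗ[ℝ] Vec n} (hT : T.IsSymmetric) {L : ℝ}
    (h : ∀ (lam : ℝ) (v : Vec n), ‖v‖ = 1 → T v = lam • v → |lam| ≤ L) (v : Vec n) :
    ‖T v‖ ≤ L * ‖v‖ := by
  rcases eq_or_ne v 0 with rfl | hv
  · simp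
  have hn : Module.finrank ℝ (Vec n) = n := finrank_euclideanSpace_fin
  have hL : ∀ i, |hT.eigenvalues hn i| ≤ L := fun i =>
    h _ (hT.eigenvectorBasis hn i) ((hT.eigenvectorBasis hn).orthonormal.1 i)
      (hT.apply_eigenvectorBasis hn i)
  have hn0 : 0 < n := by
    rcases Nat.eq_zero_or_pos n with rfl | h'
    · exact absurd (Subsingleton.elim v 0) hv
    · exact h'
  have hL0 : 0 ≤ L := (abs_nonneg _).trans (hL ⟨0, hn0⟩)
  refine le_of_sq_le_sq ?_ (by positivity)
  rw [← (hT.eigenvectorBasis hn).repr.norm_map (T v), ← (hT.eigenvectorBasis hn).repr.norm_map v,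
    mul_pow, norm_sq_eq_sum, norm_sq_eq_sum, Finset.mul_sum]
  refine Finset.sum_le_sum fun i _ => ?_
  rw [hT.eigenvectorBasis_apply_self_apply hn v i, mul_pow]
  refine mul_le_mul_of_nonneg_right ?_ (sq_nonneg _)
  exact sq_le_sq' (by simpa using (abs_le.1 (hL i)).1) (by simpa using (abs_le.1 (hL i)).2)

theorem norm_sub_le_of_quadratic_form {P D : Vec n →ₗ[ℝ] Vec n} (hP : P.IsSymmetric)
    (hD : D.IsSymmetric) (hP0 : ∀ v, 0 ≤ ⟪v, P v⟫) {l u e : ℝ} (hl : 0 < l)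
    (he0 : 0 ≤ e) (he : e ≤ 1 / 2) (hDl : ∀ v, l * ‖v‖ ^ 2 ≤ ⟪v, D v⟫)
    (hDu : ∀ v, ‖D v‖ ≤ u * ‖v‖) (hq : ∀ v, |‖P v‖ ^ 2 - ‖D v‖ ^ 2| ≤ e * ‖D v‖ ^ 2) (v : Vec n) :
    ‖D v - P v‖ ≤ 2 * (u / l) ^ 2 * e * ‖P v‖ := by
  have hN : (P - D).IsSymmetric := fun x y => by
    simp only [LinearMap.sub_apply, inner_sub_left, inner_sub_right, hP x y, hD x y]
  have h1 : ∀ w, ‖(P - D) w‖ ≤ u ^ 2 * e / l * ‖w‖ := by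
    refine norm_apply_le_of_eigenvalue_le hN fun lam w hw hlam => ?_
    have e1 : ‖P w‖ ^ 2 - ‖D w‖ ^ 2 = lam * (⟪w, P w⟫ + ⟪w, D w⟫) := by
      have : P w - D w = lam • w := hlam
      rw [← inner_add_right, ← real_inner_smul_left, ← this, inner_add_right, inner_sub_left,
        inner_sub_left, real_inner_self_eq_norm_sq, real_inner_self_eq_norm_sq,
        real_inner_comm (P w) (D w)]
      ring
    have h2 := hq w
    have h3 := hDl w
    have h4 : ‖D w‖ ^ 2 ≤ u ^ 2 := by
      have := hDu w
      rw [hw, mul_one] at this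
      gcongr
    rw [hw, one_pow, mul_one] at h3
    rw [e1, abs_mul, abs_of_nonneg (a := ⟪w, P w⟫ + ⟪w, D w⟫) (by linarith [hP0 w])] at h2
    rw [le_div_iff₀ hl]
    calc |lam| * l ≤ |lam| * (⟪w, P w⟫ + ⟪w, D w⟫) := by
          gcongr; linarith [hP0 w]
      _ ≤ e * ‖D w‖ ^ 2 := h2
      _ ≤ e * u ^ 2 := by gcongr
      _ = _ := by ring
  have h5 : l * ‖v‖ ≤ ‖D v‖ := by
    rcases eq_or_ne v 0 with rfl | hv
    · simp
    have hv' : 0 < ‖v‖ := norm_pos_iff.2 hv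
    have := (hDl v).trans (real_inner_le_norm v (D v))
    nlinarith
  have h6 : ‖v‖ ≤ 2 / l * ‖P v‖ := by
    have h7 := (abs_le.1 (hq v)).1
    have h8 : ‖D v‖ ^ 2 ≤ (2 * ‖P v‖) ^ 2 := by nlinarith [sq_nonneg ‖D v‖]
    have h9 : ‖D v‖ ≤ 2 * ‖P v‖ := le_of_sq_le_sq h8 (by positivity)
    rw [div_mul_eq_mul_div, le_div_iff₀ hl]
    linarith
  rw [norm_sub_rev]
  calc ‖P v - D v‖ = ‖(P - D) v‖ := rfl
    _ ≤ u ^ 2 * e / l * ‖v‖ := h1 v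
    _ ≤ u ^ 2 * e / l * (2 / l * ‖P v‖) := by gcongr
    _ = _ := by field_simp

theorem inner_toEuclideanLin_left {k m : ℕ} (M : Matrix (Fin m) (Fin k) ℝ) (x : Vec k)
    (y : Vec m) : ⟪toEuclideanLin M x, y⟫ = ⟪x, toEuclideanLin Mᵀ y⟫ := by
  rw [← conjTranspose_eq_transpose_of_trivial, toEuclideanLin_conjTranspose_eq_adjoint,
    LinearMap.adjoint_inner_right]

theorem toEuclideanLin_mul_apply {k m l : ℕ} (A : Matrix (Fin m) (Fin k) ℝ)
    (B : Matrix (Fin k) (Fin l) ℝ) (x : Vec l) :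
    toEuclideanLin (A * B) x = toEuclideanLin A (toEuclideanLin B x) := by
  rw [toEuclideanLin, toLpLin_mul_same]; rfl

theorem norm_toEuclideanLin_of_orthogonal {V : Matrix (Fin n) (Fin n) ℝ} (hV : Vᵀ * V = 1)
    (x : Vec n) : ‖toEuclideanLin V x‖ = ‖x‖ := by
  have : ‖toEuclideanLin V x‖ ^ 2 = ‖x‖ ^ 2 := by
    rw [← real_inner_self_eq_norm_sq, inner_toEuclideanLin_left, ← toEuclideanLin_mul_apply, hV,
      ← real_inner_self_eq_norm_sq]
    simp
  exact (sq_eq_sq₀ (norm_nonneg _) (norm_nonneg _)).1 this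

/-- The transpose of the linear map relating the preconditioned data to the raw coefficients. -/
def whitenMap (θ : ℝ) (p : ℕ) (A₀ U V S : Matrix (Fin n) (Fin n) ℝ) : Vec n →ₗ[ℝ] Vec n :=
  toEuclideanLin (Real.sqrt ((p : ℝ) * θ) • (V * Uᵀ * S⁻¹ * A₀))ᵀ

theorem ffun_whiten (μ : ℝ) (A₀ U V S : Matrix (Fin n) (Fin n) ℝ) (X : Fin n → Fin p → ℝ)
    (q : Vec n) :
    ffun n p μ (Real.sqrt ((p : ℝ) * θ) • (V * Uᵀ * S⁻¹ * (A₀ * Matrix.of X))) q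
      = avg (fun x => hmu μ (pair (whitenMap θ p A₀ U V S q) x)) X := by
  rw [ffun, avg]
  congr 1
  refine Finset.sum_congr rfl fun k _ => ?_
  congr 1
  rw [whitenMap, ← Matrix.mul_assoc, ← Matrix.smul_mul]
  generalize Real.sqrt ((p : ℝ) * θ) • (V * Uᵀ * S⁻¹ * A₀) = W
  simp only [pair, colVec, toLpLin_apply, mulVec, dotProduct, Matrix.mul_apply, Matrix.of_apply,
    transpose_apply, Finset.mul_sum, Finset.sum_mul]
  rw [Finset.sum_comm]
  exact Finset.sum_congr rfl fun i _ => Finset.sum_congr rfl fun j _ => by ring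

theorem norm_whitenMap_sub_le (hn : 0 < n) (hp : 0 < p) (h0 : 0 < θ) (h1 : θ ≤ 1)
    {A₀ U V S : Matrix (Fin n) (Fin n) ℝ} {s : Fin n → ℝ} (hU : U * Uᵀ = 1) (hV : V * Vᵀ = 1)
    (hs : ∀ i, 0 < s i) (hA : A₀ = U * Matrix.diagonal s * Vᵀ) {X : Fin n → Fin p → ℝ}
    (ht0 : 0 ≤ t) (ht : 4 * t ≤ θ) (hX : GoodEvent θ μ t X) (hS : S.PosDef)
    (hSS : S * S = A₀ * Matrix.of X * (A₀ * Matrix.of X)ᵀ) (v : Vec n) :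
    ‖whitenMap θ p A₀ U V S v - v‖ ≤ 4 * kappa s ^ 2 * (t / θ) * ‖v‖ := by
  have hU' : Uᵀ * U = 1 := mul_eq_one_comm.1 hU
  have hV' : Vᵀ * V = 1 := mul_eq_one_comm.1 hV
  have hp' : (0 : ℝ) < p := by exact_mod_cast hp
  have : Nonempty (Fin n) := ⟨⟨0, hn⟩⟩
  set c := Real.sqrt ((p : ℝ) * θ) with hc
  have hc0 : 0 < c := Real.sqrt_pos.2 (by positivity)
  have hc2 : c ^ 2 = p * θ := Real.sq_sqrt (by positivity)
  have hSt : Sᵀ = S := by rw [← conjTranspose_eq_transpose_of_trivial]; exact hS.1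
  have hSu : IsUnit S.det := hS.det_pos.ne'.isUnit
  set Pm : Matrix (Fin n) (Fin n) ℝ := c⁻¹ • (Uᵀ * S * U) with hPm
  set Dm : Matrix (Fin n) (Fin n) ℝ := Matrix.diagonal s with hDm
  have hPt : Pmᵀ = Pm := by
    simp only [hPm, transpose_smul, transpose_mul, transpose_transpose, hSt, Matrix.mul_assoc]
  have hDt : Dmᵀ = Dm := diagonal_transpose s
  have hPP : Pm * Pm = (c⁻¹) ^ 2 • ((Matrix.of X)ᵀ * (V * Dm))ᵀ * ((Matrix.of X)ᵀ * (V * Dm)) := by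
    have e1 : (Uᵀ * S * U) * (Uᵀ * S * U) = Uᵀ * (S * S) * U := by
      calc (Uᵀ * S * U) * (Uᵀ * S * U) = Uᵀ * S * (U * Uᵀ) * S * U := by
            simp only [Matrix.mul_assoc]
        _ = _ := by rw [hU, Matrix.mul_one]; simp only [Matrix.mul_assoc]
    rw [hPm, Matrix.smul_mul, Matrix.mul_smul, smul_smul, ← pow_two, e1, hSS, hA, Matrix.smul_mul]
    congr 1
    simp only [transpose_mul, transpose_transpose, hDt]
    calc Uᵀ * (U * Dm * Vᵀ * of X * ((of X)ᵀ * (V * (Dm * Uᵀ)))) * U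
        = (Uᵀ * U) * Dm * Vᵀ * of X * (of X)ᵀ * V * Dm * (Uᵀ * U) := by
          simp only [Matrix.mul_assoc]
      _ = _ := by
          rw [hU', Matrix.one_mul, Matrix.mul_one]
          simp only [Matrix.mul_assoc]
  have hnorm : ∀ x : Vec n, ‖toEuclideanLin Pm x‖ ^ 2
      = θ⁻¹ * avg (psiTwo μ 0 (toEuclideanLin (V * Dm) x)) X := by
    intro x
    rw [← real_inner_self_eq_norm_sq, inner_toEuclideanLin_left, hPt, ← toEuclideanLin_mul_apply,
      hPP, Matrix.smul_mul, map_smul, LinearMap.smul_apply, real_inner_smul_right,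
      toEuclideanLin_mul_apply, ← inner_toEuclideanLin_left, real_inner_self_eq_norm_sq, inv_pow,
      hc2, toEuclideanLin_mul_apply]
    rw [EuclideanSpace.norm_sq_eq, avg, mul_inv, mul_comm (p : ℝ)⁻¹, mul_assoc]
    congr 2
    refine Finset.sum_congr rfl fun k _ => ?_
    rw [psiTwo_zero_left, Real.norm_eq_abs, sq_abs]
    congr 1
    simp only [pair, colVec, toLpLin_apply, mulVec, dotProduct, transpose_apply, Matrix.of_apply]
    exact Finset.sum_congr rfl fun j _ => mul_comm _ _
  have hVD : ∀ x : Vec n, ‖toEuclideanLin (V * Dm) x‖ = ‖toEuclideanLin Dm x‖ := fun x => by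
    rw [toEuclideanLin_mul_apply, norm_toEuclideanLin_of_orthogonal hV']
  have hDapp : ∀ (x : Vec n) i, toEuclideanLin Dm x i = s i * x i := fun x i => by
    simp [hDm, toLpLin_apply, mulVec_diagonal]
  have hinf : 0 < ⨅ i, s i := by
    obtain ⟨i, hi⟩ := exists_eq_ciInf_of_finite (f := s)
    rw [← hi]; exact hs i
  have hinf_le : ∀ i, ⨅ i, s i ≤ s i := fun i => ciInf_le (Set.finite_range s).bddBelow i
  have hle_sup : ∀ i, s i ≤ ⨆ i, s i := fun i => le_ciSup (Set.finite_range s).bddAbove i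
  have hsup : 0 ≤ ⨆ i, s i := (hs ⟨0, hn⟩).le.trans (hle_sup _)
  have key := norm_sub_le_of_quadratic_form (P := toEuclideanLin Pm) (D := toEuclideanLin Dm)
    (fun x y => by rw [inner_toEuclideanLin_left, hPt])
    (fun x y => by rw [inner_toEuclideanLin_left, hDt])
    (fun x => by
      have := hS.posSemidef.dotProduct_mulVec_nonneg (toEuclideanLin U x).ofLp
      have e : ⟪x, toEuclideanLin Pm x⟫
          = c⁻¹ * ⟪toEuclideanLin U x, toEuclideanLin S (toEuclideanLin U x)⟫ := by
        rw [hPm, map_smul, LinearMap.smul_apply, real_inner_smul_right, Matrix.mul_assoc,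
          toEuclideanLin_mul_apply, ← inner_toEuclideanLin_left, toEuclideanLin_mul_apply]
      rw [e]
      refine mul_nonneg (by positivity) (this.trans_eq ?_)
      rw [EuclideanSpace.inner_eq_star_dotProduct, dotProduct_comm]
      simp [toLpLin_apply])
    hinf (u := ⨆ i, s i) (e := 2 * t / θ) (by positivity)
    (by rw [div_le_iff₀ h0]; linarith)
    (fun x => by
      rw [norm_sq_eq_sum, Finset.mul_sum, PiLp.inner_apply]
      refine Finset.sum_le_sum fun i _ => ?_
      rw [hDapp]
      rw [RCLike.inner_apply, conj_trivial]
      nlinarith [mul_le_mul_of_nonneg_right (hinf_le i) (sq_nonneg (x i))])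
    (fun x => by
      refine le_of_sq_le_sq ?_ (by positivity)
      rw [mul_pow, norm_sq_eq_sum, norm_sq_eq_sum, Finset.mul_sum]
      refine Finset.sum_le_sum fun i _ => ?_
      rw [hDapp, mul_pow]
      have := hs i
      gcongr
      exact hle_sup i)
    (fun x => by
      have g := (hX 0 (toEuclideanLin (V * Dm) x) (by norm_num)).2
      rw [PhiTwo_zero_left h0.le h1, hVD] at g
      rw [hnorm]
      have e : θ⁻¹ * avg (psiTwo μ 0 (toEuclideanLin (V * Dm) x)) X - ‖toEuclideanLin Dm x‖ ^ 2
          = θ⁻¹ * (avg (psiTwo μ 0 (toEuclideanLin (V * Dm) x)) X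
            - θ * ‖toEuclideanLin Dm x‖ ^ 2) := by field_simp
      rw [e, abs_mul, abs_of_pos (inv_pos.2 h0)]
      calc _ ≤ θ⁻¹ * (2 * t * ‖toEuclideanLin Dm x‖ ^ 2) := by gcongr
        _ = _ := by ring)
  set x : Vec n := toEuclideanLin (c • (Uᵀ * S⁻¹ * U * Vᵀ)) v with hx
  have hPx : toEuclideanLin Pm x = toEuclideanLin Vᵀ v := by
    rw [hx, ← toEuclideanLin_mul_apply]
    congr 2
    rw [hPm, Matrix.smul_mul, Matrix.mul_smul, smul_smul, inv_mul_cancel₀ hc0.ne', one_smul]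
    calc Uᵀ * S * U * (Uᵀ * S⁻¹ * U * Vᵀ) = Uᵀ * S * (U * Uᵀ) * S⁻¹ * U * Vᵀ := by
          simp only [Matrix.mul_assoc]
      _ = Uᵀ * (S * S⁻¹) * U * Vᵀ := by rw [hU, Matrix.mul_one]; simp only [Matrix.mul_assoc]
      _ = Vᵀ := by rw [mul_nonsing_inv S hSu, Matrix.mul_one, hU', Matrix.one_mul]
  have hTv : whitenMap θ p A₀ U V S v = toEuclideanLin V (toEuclideanLin Dm x) := by
    rw [whitenMap, hx, ← toEuclideanLin_mul_apply, ← toEuclideanLin_mul_apply]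
    congr 2
    rw [← hc, hA, transpose_smul, Matrix.mul_smul]
    congr 1
    simp only [transpose_mul, transpose_transpose, hDt, transpose_nonsing_inv, hSt,
      Matrix.mul_assoc]
  have hv : v = toEuclideanLin V (toEuclideanLin Pm x) := by
    rw [hPx, ← toEuclideanLin_mul_apply, hV]; simp
  calc ‖whitenMap θ p A₀ U V S v - v‖
      = ‖toEuclideanLin V (toEuclideanLin Dm x - toEuclideanLin Pm x)‖ := by
        rw [hTv, map_sub]; congr 2
    _ = ‖toEuclideanLin Dm x - toEuclideanLin Pm x‖ := norm_toEuclideanLin_of_orthogonal hV' _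
    _ ≤ 2 * ((⨆ i, s i) / ⨅ i, s i) ^ 2 * (2 * t / θ) * ‖toEuclideanLin Pm x‖ := key x
    _ = 4 * kappa s ^ 2 * (t / θ) * ‖v‖ := by
        rw [hPx, norm_toEuclideanLin_of_orthogonal (by rw [transpose_transpose, hV]), kappa]
        ring

end Whitening

section Calculus

variable {n p : ℕ} {θ μ : ℝ}

/-- The arc `s ↦ c + cos s • u + sin s • v`. -/
def arc (c u v : Vec n) (s : ℝ) : Vec n := c + (Real.cos s • u + Real.sin s • v)

/-- The velocity of `arc`. -/
def arcVel (u v : Vec n) (s : ℝ) : Vec n := Real.cos s • v - Real.sin s • u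

theorem arc_zero (c u v : Vec n) : arc c u v 0 = c + u := by simp [arc]

theorem arcVel_zero (u v : Vec n) : arcVel u v 0 = v := by simp [arcVel]

theorem continuous_arc (c u v : Vec n) : Continuous (arc c u v) := by
  unfold arc; fun_prop

theorem norm_arc {c u v : Vec n} (hcu : ⟪c, u⟫ = 0) (hcv : ⟪c, v⟫ = 0) (huv : ⟪u, v⟫ = 0)
    (hn : ‖u‖ ^ 2 = ‖v‖ ^ 2) (h1 : ‖c‖ ^ 2 + ‖u‖ ^ 2 = 1) (s : ℝ) : ‖arc c u v s‖ = 1 := by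
  have h : ‖arc c u v s‖ ^ 2 = 1 := by
    rw [arc, norm_add_sq_real, norm_add_sq_real, inner_add_right, real_inner_smul_right,
      real_inner_smul_right, real_inner_smul_left, real_inner_smul_right, hcu, hcv, huv,
      norm_smul, norm_smul, mul_pow, mul_pow, ← hn, Real.norm_eq_abs, Real.norm_eq_abs, sq_abs,
      sq_abs]
    linear_combination h1 + ‖u‖ ^ 2 * Real.sin_sq_add_cos_sq s
  have h0 := norm_nonneg (arc c u v s)
  nlinarith

/-- The objective function composed with the linear map `T`. -/
def objT (μ : ℝ) (T : Vec n →ₗ[ℝ] Vec n) (X : Fin n → Fin p → ℝ) (q : Vec n) : ℝ :=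
  avg (fun x => hmu μ (pair (T q) x)) X

/-- First directional derivative of `objT` at `q` along `b`. -/
def dOne (μ : ℝ) (T : Vec n →ₗ[ℝ] Vec n) (X : Fin n → Fin p → ℝ) (q b : Vec n) : ℝ :=
  avg (psiOne μ (T q) (T b)) X

/-- `μ` times the second directional derivative of `objT` at `q` along `b`. -/
def dTwo (μ : ℝ) (T : Vec n →ₗ[ℝ] Vec n) (X : Fin n → Fin p → ℝ) (q b : Vec n) : ℝ :=
  avg (psiTwo μ (T q) (T b)) X

variable {T : Vec n →ₗ[ℝ] Vec n} {X : Fin n → Fin p → ℝ}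

theorem dOne_sub_right (q b b' : Vec n) :
    dOne μ T X q (b - b') = dOne μ T X q b - dOne μ T X q b' := by
  simp only [dOne, avg, psiOne, map_sub, pair_sub, mul_sub, Finset.sum_sub_distrib]

theorem dOne_smul_right (q b : Vec n) (r : ℝ) :
    dOne μ T X q (r • b) = r * dOne μ T X q b := by
  simp only [dOne, avg, psiOne, map_smul, pair_smul, Finset.mul_sum]
  exact Finset.sum_congr rfl fun k _ => by ring

theorem hasDerivAt_avg {F F' : ℝ → (Fin n → ℝ) → ℝ} {s : ℝ}
    (h : ∀ x, HasDerivAt (fun s => F s x) (F' s x) s) :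
    HasDerivAt (fun s => avg (F s) X) (avg (F' s) X) s := by
  unfold avg
  exact (HasDerivAt.fun_sum fun k _ => h (colVec X k)).const_mul _

theorem hasDerivAt_hmu (hμ : 0 < μ) (z : ℝ) : HasDerivAt (hmu μ) (Real.tanh (z / μ)) z := by
  unfold hmu
  have h := ((hasDerivAt_log_cosh (z / μ)).comp z ((hasDerivAt_id z).div_const μ)).const_mul μ
  refine h.congr_deriv ?_
  field_simp

theorem pair_arc (c u v : Vec n) (s : ℝ) (x : Fin n → ℝ) :
    pair (T (arc c u v s)) x
      = pair (T c) x + (Real.cos s * pair (T u) x + Real.sin s * pair (T v) x) := by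
  simp only [arc, map_add, map_smul, pair_add, pair_smul]

theorem pair_arcVel (u v : Vec n) (s : ℝ) (x : Fin n → ℝ) :
    pair (T (arcVel u v s)) x = Real.cos s * pair (T v) x - Real.sin s * pair (T u) x := by
  simp only [arcVel, map_sub, map_smul, pair_sub, pair_smul]

theorem hasDerivAt_pair_arc (c u v : Vec n) (s : ℝ) (x : Fin n → ℝ) :
    HasDerivAt (fun s => pair (T (arc c u v s)) x) (pair (T (arcVel u v s)) x) s := by
  simp only [pair_arc, pair_arcVel]
  have := (((Real.hasDerivAt_cos s).mul_const (pair (T u) x)).add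
    ((Real.hasDerivAt_sin s).mul_const (pair (T v) x))).const_add (pair (T c) x)
  refine this.congr_deriv ?_
  ring

theorem hasDerivAt_objT_arc (hμ : 0 < μ) (c u v : Vec n) (s : ℝ) :
    HasDerivAt (fun s => objT μ T X (arc c u v s)) (dOne μ T X (arc c u v s) (arcVel u v s)) s := by
  unfold objT dOne
  exact hasDerivAt_avg (F' := fun s => psiOne μ (T (arc c u v s)) (T (arcVel u v s)))
    fun x => (hasDerivAt_hmu hμ _).comp s (hasDerivAt_pair_arc c u v s x)

theorem hasDerivAt_dOne_arc (c u v : Vec n) (s : ℝ) :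
    HasDerivAt (fun s => dOne μ T X (arc c u v s) (arcVel u v s))
      (dTwo μ T X (arc c u v s) (arcVel u v s) / μ
        - dOne μ T X (arc c u v s) (Real.cos s • u + Real.sin s • v)) s := by
  have h : ∀ x, HasDerivAt (fun s => psiOne μ (T (arc c u v s)) (T (arcVel u v s)) x)
      (psiTwo μ (T (arc c u v s)) (T (arcVel u v s)) x / μ
        - psiOne μ (T (arc c u v s)) (T (Real.cos s • u + Real.sin s • v)) x) s := by
    intro x
    have h1 : HasDerivAt (fun s => Real.tanh (pair (T (arc c u v s)) x / μ))
        (sechSq (pair (T (arc c u v s)) x / μ) * (pair (T (arcVel u v s)) x / μ)) s :=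
      (hasDerivAt_tanh _).comp s ((hasDerivAt_pair_arc c u v s x).div_const μ)
    have h2 : HasDerivAt (fun s => pair (T (arcVel u v s)) x)
        (-pair (T (Real.cos s • u + Real.sin s • v)) x) s := by
      simp only [pair_arcVel, map_add, map_smul, pair_add, pair_smul]
      refine (((Real.hasDerivAt_cos s).mul_const (pair (T v) x)).sub
        ((Real.hasDerivAt_sin s).mul_const (pair (T u) x))).congr_deriv ?_
      ring
    refine (h1.mul h2).congr_deriv ?_
    simp only [psiTwo, psiOne]
    ring
  have := hasDerivAt_avg (X := X) (F' := fun s x =>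
    psiTwo μ (T (arc c u v s)) (T (arcVel u v s)) x / μ
        - psiOne μ (T (arc c u v s)) (T (Real.cos s • u + Real.sin s • v)) x) h
  refine this.congr_deriv ?_
  simp only [dTwo, dOne, avg, Finset.sum_sub_distrib, mul_sub, ← Finset.sum_div, mul_div_assoc]

theorem hasDerivAt_dOne_line (q d : Vec n) (s : ℝ) :
    HasDerivAt (fun s : ℝ => dOne μ T X (q + s • d) d) (dTwo μ T X (q + s • d) d / μ) s := by
  have h : ∀ x, HasDerivAt (fun s : ℝ => psiOne μ (T (q + s • d)) (T d) x)
      (psiTwo μ (T (q + s • d)) (T d) x / μ) s := by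
    intro x
    have h0 : HasDerivAt (fun s : ℝ => pair (T (q + s • d)) x) (pair (T d) x) s := by
      simp only [map_add, map_smul, pair_add, pair_smul]
      simpa using ((hasDerivAt_id s).mul_const (pair (T d) x)).const_add (pair (T q) x)
    have h1 : HasDerivAt (fun s : ℝ => Real.tanh (pair (T (q + s • d)) x / μ))
        (sechSq (pair (T (q + s • d)) x / μ) * (pair (T d) x / μ)) s :=
      (hasDerivAt_tanh _).comp s (h0.div_const μ)
    refine (h1.mul_const (pair (T d) x)).congr_deriv ?_
    simp only [psiTwo]
    ring
  have := hasDerivAt_avg (X := X) (F' := fun s x => psiTwo μ (T (q + s • d)) (T d) x / μ) h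
  refine this.congr_deriv ?_
  simp only [dTwo, avg, ← Finset.sum_div, mul_div_assoc]

theorem continuous_objT (μ : ℝ) (T : Vec n →ₗ[ℝ] Vec n) (X : Fin n → Fin p → ℝ) :
    Continuous (objT μ T X) := by
  have hT : Continuous T := LinearMap.continuous_of_finiteDimensional T
  unfold objT avg hmu pair
  have : ∀ z : ℝ, Real.cosh z ≠ 0 := fun z => (Real.cosh_pos z).ne'
  refine continuous_const.mul (continuous_finsetSum _ fun k _ => continuous_const.mul
    (Continuous.log (Real.continuous_cosh.comp ?_) fun q => this _))
  fun_prop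

/-- Membership in a sphere for an arc through a local minimizer gives a local minimum at `0`. -/
theorem isLocalMin_comp_arc {f : Vec n → ℝ} {q c u v : Vec n} (hq : c + u = q)
    (hs : ∀ s, ‖arc c u v s‖ = 1) (h : IsLocalMinOn f (Metric.sphere 0 1) q) :
    IsLocalMin (fun s => f (arc c u v s)) 0 := by
  have ht : Filter.Tendsto (arc c u v) (nhds 0) (nhdsWithin q (Metric.sphere 0 1)) := by
    refine tendsto_nhdsWithin_iff.2 ⟨?_, Filter.Eventually.of_forall fun s => by simp [hs s]⟩
    have := (continuous_arc c u v).tendsto 0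
    rwa [arc_zero, hq] at this
  have := ht.eventually h
  simpa only [IsLocalMin, IsMinFilter, arc_zero, hq] using this

theorem dOne_eq_zero_of_isLocalMinOn (hμ : 0 < μ) {q c u v : Vec n} (hq : c + u = q)
    (hs : ∀ s, ‖arc c u v s‖ = 1) (h : IsLocalMinOn (objT μ T X) (Metric.sphere 0 1) q) :
    dOne μ T X q v = 0 := by
  have := (isLocalMin_comp_arc hq hs h).hasDerivAt_eq_zero (hasDerivAt_objT_arc hμ c u v 0)
  rwa [arc_zero, hq, arcVel_zero] at this

theorem eventually_lt_of_hasDerivAt_pos {g : ℝ → ℝ} {d x : ℝ} (h : HasDerivAt g d x) (hd : 0 < d) :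
    ∀ᶠ s in nhdsWithin x (Set.Ioi x), g x < g s := by
  have h1 := (hasDerivAt_iff_tendsto_slope.1 h).eventually (lt_mem_nhds hd)
  have h2 : ∀ᶠ s in nhdsWithin x (Set.Ioi x), 0 < slope g x s :=
    h1.filter_mono (nhdsWithin_mono x fun s hs => (ne_of_gt hs : s ≠ x))
  filter_upwards [h2, self_mem_nhdsWithin] with s hs hsx
  have hsx' : 0 < s - x := sub_pos.2 hsx
  rw [slope_def_field, div_pos_iff_of_pos_right hsx'] at hs
  linarith

/-- A second-order necessary condition for local minima of functions of one variable. -/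
theorem nonneg_of_isLocalMin_of_hasDerivAt {g g' : ℝ → ℝ} {d x : ℝ} (hm : IsLocalMin g x)
    (hg : ∀ s, HasDerivAt g (g' s) s) (hg' : HasDerivAt g' d x) : 0 ≤ d := by
  by_contra! hd
  have h0 : g' x = 0 := hm.hasDerivAt_eq_zero (hg x)
  have h1 := eventually_lt_of_hasDerivAt_pos hg'.neg (neg_pos.2 hd)
  have h2 : ∀ᶠ s in nhdsWithin x (Set.Ioi x), g x ≤ g s := hm.filter_mono nhdsWithin_le_nhds
  obtain ⟨b, hb, hb'⟩ := mem_nhdsGT_iff_exists_Ioo_subset.1 h1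
  obtain ⟨s, hs2, hs⟩ := (h2.and (Ioo_mem_nhdsGT hb)).exists
  obtain ⟨r, hr, hr'⟩ := exists_hasDerivAt_eq_slope g g' hs.1
    (fun y _ => (hg y).continuousAt.continuousWithinAt) (fun y _ => hg y)
  have h3 := hb' ⟨hr.1, hr.2.trans hs.2⟩
  simp only [Set.mem_ofPred_eq, Pi.neg_apply, h0, neg_zero] at h3
  have h4 : 0 < s - x := sub_pos.2 hs.1
  rw [eq_div_iff h4.ne'] at hr'
  nlinarith

theorem curvature_nonneg_of_isLocalMinOn (hμ : 0 < μ) {q c u v : Vec n} (hq : c + u = q)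
    (hs : ∀ s, ‖arc c u v s‖ = 1) (h : IsLocalMinOn (objT μ T X) (Metric.sphere 0 1) q) :
    0 ≤ dTwo μ T X q v / μ - dOne μ T X q u := by
  have := nonneg_of_isLocalMin_of_hasDerivAt (isLocalMin_comp_arc hq hs h)
    (fun s => hasDerivAt_objT_arc hμ c u v s) (hasDerivAt_dOne_arc c u v 0)
  simpa [arc_zero, hq, arcVel_zero] using this

end Calculus

section Landscape

variable {n p : ℕ} {θ μ t η e : ℝ} {T : Vec n →ₗ[ℝ] Vec n} {X : Fin n → Fin p → ℝ}

/-- The first and second order data of `objT` are close to their population counterparts on the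
unit ball. -/
structure NearModel (θ μ e : ℝ) (T : Vec n →ₗ[ℝ] Vec n) (X : Fin n → Fin p → ℝ) : Prop where
  one : ∀ q b : Vec n, ‖q‖ ≤ 1 → |dOne μ T X q b - PhiOne θ μ q b| ≤ e * θ * μ * ‖b‖
  two : ∀ q b : Vec n, ‖q‖ ≤ 1 → |dTwo μ T X q b - PhiTwo θ μ q b| ≤ e * θ * μ * ‖b‖ ^ 2

theorem GoodEvent.nearModel (h0 : 0 < θ) (h1 : θ ≤ 1) (hμ : 0 < μ) (hμθ : μ ≤ θ) (ht0 : 0 ≤ t)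
    (hη : η ≤ 1 / 4) (hη0 : 0 ≤ η) (hX : GoodEvent θ μ t X) (hT : ∀ v, ‖T v - v‖ ≤ η * ‖v‖)
    (he : 4 * t + 25 * (θ / μ) * η ≤ e * θ * μ) : NearModel θ μ e T X := by
  have hT' : ∀ v, ‖T v‖ ≤ 5 / 4 * ‖v‖ := fun v => by
    have h2 := norm_sub_norm_le (T v) v
    nlinarith [hT v, norm_nonneg v]
  have hr : 1 ≤ θ / μ := (one_le_div hμ).2 hμθ
  refine ⟨fun q b hq => ?_, fun q b hq => ?_⟩
  · have hTq : ‖T q‖ ≤ 3 / 2 := by linarith [hT' q]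
    have e1 := (hX (T q) (T b) hTq).1
    have e2 := abs_PhiOne_sub_left h0.le h1 hμ (T q) q (T b)
    have e3 := abs_PhiOne_le h0.le h1 μ q (T b - b)
    rw [PhiOne_sub_right h0.le h1] at e3
    have hs : Real.sqrt θ ≤ 1 := Real.sqrt_le_one.2 h1
    have b1 : 2 * t * ‖T b‖ ≤ 2 * t * (5 / 4 * ‖b‖) := by gcongr; exact hT' b
    have b2 : θ / μ * (‖T q - q‖ * ‖T b‖) ≤ θ / μ * ((η * 1) * (5 / 4 * ‖b‖)) := by
      gcongr
      · exact (hT q).trans (by gcongr)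
      · exact hT' b
    have b3 : Real.sqrt θ * ‖T b - b‖ ≤ θ / μ * (η * ‖b‖) := by
      gcongr
      · exact hs.trans hr
      · exact hT b
    have hb : 0 ≤ ‖b‖ := norm_nonneg b
    have b4 := mul_le_mul_of_nonneg_right he hb
    have b5 : 0 ≤ θ / μ * η * ‖b‖ := by positivity
    have b6 : 0 ≤ t * ‖b‖ := by positivity
    rw [dOne]
    rw [abs_le] at *
    constructor <;> linarith
  · have hTq : ‖T q‖ ≤ 3 / 2 := by linarith [hT' q]
    have e1 := (hX (T q) (T b) hTq).2
    have e2 := abs_PhiTwo_sub_left h0.le h1 hμ (T q) q (T b)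
    have e3 := abs_PhiTwo_sub_right h0.le h1 μ q (T b) b
    have hb : 0 ≤ ‖b‖ := norm_nonneg b
    have hsum : ‖T b + b‖ ≤ 9 / 4 * ‖b‖ := by linarith [norm_add_le (T b) b, hT' b]
    have hsq : ‖T b‖ ^ 2 ≤ 25 / 16 * ‖b‖ ^ 2 := by
      have := pow_le_pow_left₀ (norm_nonneg _) (hT' b) 2
      linarith
    have b1 : 2 * t * ‖T b‖ ^ 2 ≤ 2 * t * (25 / 16 * ‖b‖ ^ 2) := by gcongr
    have b2 : 14 * θ / μ * (‖T q - q‖ * ‖T b‖ ^ 2)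
        ≤ 14 * θ / μ * ((η * 1) * (25 / 16 * ‖b‖ ^ 2)) := by
      gcongr
      exact (hT q).trans (by gcongr)
    have b3 : θ * (‖T b - b‖ * ‖T b + b‖) ≤ θ / μ * ((η * ‖b‖) * (9 / 4 * ‖b‖)) := by
      gcongr
      · exact h1.trans hr
      · exact hT b
    have b4 := mul_le_mul_of_nonneg_right he (sq_nonneg ‖b‖)
    have b5 : 0 ≤ θ / μ * η * ‖b‖ ^ 2 := by positivity
    have b6 : 0 ≤ t * ‖b‖ ^ 2 := by positivity
    rw [mul_div_assoc] at e2 b2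
    rw [dTwo]
    rw [abs_le] at *
    constructor <;> linarith

end Landscape

section Landscape

variable {n p : ℕ} {θ μ e : ℝ} {T : Vec n →ₗ[ℝ] Vec n} {X : Fin n → Fin p → ℝ}

theorem norm_arc_rotation {i j : Fin n} (hij : i ≠ j) {q : Vec n} (hq : ‖q‖ = 1) {ν : ℝ}
    (hν : ν ^ 2 = 1) (s : ℝ) :
    ‖arc (q - rotMid q i j) (rotMid q i j) (ν • rotDir q i j) s‖ = 1 := by
  have key : ∀ w : Vec n, (∀ k, k ≠ i → k ≠ j → w k = 0) → ⟪q - rotMid q i j, w⟫ = 0 := by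
    intro w hw
    rw [PiLp.inner_apply]
    refine Finset.sum_eq_zero fun k _ => ?_
    rw [RCLike.inner_apply, conj_trivial, PiLp.sub_apply]
    by_cases hi : k = i
    · rw [hi, rotMid_left hij, sub_self, mul_zero]
    by_cases hj : k = j
    · rw [hj, rotMid_right hij, sub_self, mul_zero]
    rw [hw k hi hj, zero_mul]
  have hcu := key (rotMid q i j) fun k hi hj => rotMid_other hi hj q
  refine norm_arc hcu ?_ ?_ ?_ ?_ s
  · rw [real_inner_smul_right, key _ fun k hi hj => rotDir_other hi hj q, mul_zero]
  · rw [real_inner_smul_right, PiLp.inner_apply, sum_eq_pair hij]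
    · simp only [RCLike.inner_apply, conj_trivial, rotMid_left hij, rotMid_right hij,
        rotDir_left hij, rotDir_right hij]
      ring
    · intro k hi hj
      simp [rotMid_other hi hj]
  · rw [norm_smul, mul_pow, Real.norm_eq_abs, sq_abs, hν, one_mul, norm_rotMid_sq hij,
      norm_rotDir_sq hij]
  · have := norm_add_sq_real (q - rotMid q i j) (rotMid q i j)
    rw [sub_add_cancel, hcu, hq] at this
    linarith

theorem norm_rotDir_le {i j : Fin n} (hij : i ≠ j) {q : Vec n} (h : q j ^ 2 ≤ q i ^ 2) :
    ‖rotDir q i j‖ ≤ 3 / 2 * |q i| := by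
  refine le_of_sq_le_sq ?_ (by positivity)
  rw [norm_rotDir_sq hij, mul_pow, sq_abs]
  linarith [sq_nonneg (q i)]

theorem NearModel.abs_dOne_rotDir_sub_le (hM : NearModel θ μ e T X) (h0 : 0 < θ) (h1 : θ ≤ 1)
    (hμ : 0 < μ) (he0 : 0 ≤ e) {i j : Fin n} (hij : i ≠ j) {q : Vec n} (hq : ‖q‖ ≤ 1)
    (h : q j ^ 2 ≤ q i ^ 2) :
    |dOne μ T X q (rotDir q i j) - q i * q j * crossSum θ μ q i j|
      ≤ 3 / 2 * (e * θ * μ * |q i|) := by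
  have := hM.one q (rotDir q i j) hq
  rw [PhiOne_rotDir h0.le h1 hμ hij] at this
  have h2 : e * θ * μ * ‖rotDir q i j‖ ≤ e * θ * μ * (3 / 2 * |q i|) := by
    gcongr
    exact norm_rotDir_le hij h
  linarith

set_option maxHeartbeats 1000000 in
/-- At a local minimizer, every coordinate other than the largest one is small. -/
theorem NearModel.sq_le_of_isLocalMinOn (hM : NearModel θ μ e T X) (h0 : 0 < θ) (hθ : θ ≤ 1 / 2)
    (hμ : 0 < μ) (hμn : 2 * n * μ ^ 2 ≤ 1) (he0 : 0 ≤ e) (he : e ^ 2 * n ^ 3 ≤ 1 / 20000 ^ 2)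
    {q : Vec n} (hq : ‖q‖ = 1) (hmin : IsLocalMinOn (objT μ T X) (Metric.sphere 0 1) q)
    {i j : Fin n} (hij : i ≠ j) (hi : 1 ≤ n * q i ^ 2) (hj : q j ^ 2 ≤ q i ^ 2) :
    n * q j ^ 2 ≤ (μ / 20) ^ 2 := by
  have h1 : θ ≤ 1 := by linarith
  have hn : (1 : ℝ) ≤ n := by exact_mod_cast Fin.pos i
  have hμ1 : μ ≤ 1 := by nlinarith
  have hqc : (q - rotMid q i j) + rotMid q i j = q := sub_add_cancel _ _
  have harc : ∀ s, ‖arc (q - rotMid q i j) (rotMid q i j) (rotDir q i j) s‖ = 1 := fun s => by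
    simpa using norm_arc_rotation hij hq (one_pow 2) s
  have hd := dOne_eq_zero_of_isLocalMinOn hμ hqc harc hmin
  have hc := curvature_nonneg_of_isLocalMinOn hμ hqc harc hmin
  have hb := hM.abs_dOne_rotDir_sub_le h0 h1 hμ he0 hij hq.le hj
  rw [hd, zero_sub, abs_neg, abs_mul, abs_mul] at hb
  have hcs := crossSum_le h0.le h1 hμ hμ1 hij hq.le hj
  have hcs' : θ / 200 * (q i ^ 2 - q j ^ 2) ≤ -crossSum θ μ q i j := by
    nlinarith [mul_nonneg h0.le (sub_nonneg.2 hj)]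
  have hcr0 : 0 ≤ -crossSum θ μ q i j :=
    le_trans (mul_nonneg (by positivity) (sub_nonneg.2 hj)) hcs'
  set K := -crossSum θ μ q i j with hK
  have hKa : |crossSum θ μ q i j| = K := by
    rw [hK, abs_of_nonpos (by linarith)]
  rw [hKa] at hb
  have hm2 : q i ^ 2 = |q i| ^ 2 := (sq_abs _).symm
  have hl2 : q j ^ 2 = |q j| ^ 2 := (sq_abs _).symm
  have hm1 : |q i| ≤ 1 := (by simpa using PiLp.norm_apply_le q i : |q i| ≤ ‖q‖).trans hq.le
  set m := |q i| with hm
  set l := |q j| with hl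
  have hm0 : 0 < m := by
    rcases (abs_nonneg (q i)).eq_or_lt with h | h
    · rw [hm2, hm, ← h] at hi; norm_num at hi
    · exact h
  have hl0 : 0 ≤ l := abs_nonneg _
  have hb' : l * K ≤ 3 / 2 * (e * θ * μ) := by
    have : m * (l * K) ≤ m * (3 / 2 * (e * θ * μ)) := by linarith
    exact le_of_mul_le_mul_left this hm0
  have hem : e ≤ m ^ 3 / 20000 := by
    refine le_of_sq_le_sq ?_ (by positivity)
    have h3 : (1 : ℝ) ≤ n ^ 3 * m ^ 6 := by
      have := one_le_pow₀ hi (n := 3)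
      rw [hm2] at this
      calc (1 : ℝ) ≤ (n * m ^ 2) ^ 3 := this
        _ = _ := by ring
    have h4 : e ^ 2 * 1 ≤ e ^ 2 * (n ^ 3 * m ^ 6) := by gcongr
    have h5 : e ^ 2 * n ^ 3 * m ^ 6 ≤ 1 / 20000 ^ 2 * m ^ 6 := by gcongr
    calc e ^ 2 ≤ 1 / 20000 ^ 2 * m ^ 6 := by linarith
      _ = _ := by ring
  have hμm : 2 * μ ^ 2 ≤ m ^ 2 := by
    rw [hm2] at hi
    have : (n : ℝ) * (2 * μ ^ 2) ≤ n * m ^ 2 := by linarith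
    exact le_of_mul_le_mul_left this (by linarith)
  rw [hm2, hl2] at hcs' hj
  by_cases hcase : m ^ 2 < 2 * l ^ 2
  · exfalso
    have hμm' : μ ≤ m := le_of_sq_le_sq (by linarith) hm0.le
    have hle : 7 / 10 * m ≤ l := le_of_sq_le_sq (by linarith) hl0
    have hcv := curvature_le h0.le h1 hμ hμ1 hij hq.le (q := q) (by rw [hm2]; linarith)
      (by rw [hl2]; linarith)
    have e1 := (abs_le.1 (hM.one q (rotMid q i j) hq.le)).1
    have e2 := (abs_le.1 (hM.two q (rotDir q i j) hq.le)).2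
    have e2' : dTwo μ T X q (rotDir q i j) / μ
        ≤ PhiTwo θ μ q (rotDir q i j) / μ + e * θ * ‖rotDir q i j‖ ^ 2 := by
      rw [div_add' _ _ _ hμ.ne', div_le_div_iff_of_pos_right hμ]
      linarith
    have hmid : ‖rotMid q i j‖ ≤ 3 / 2 * m := by
      refine le_of_sq_le_sq ?_ (by positivity)
      rw [norm_rotMid_sq hij, hm2, hl2]
      linarith
    have b1 : e * θ * μ * ‖rotMid q i j‖ ≤ e * θ * m * (3 / 2 * m) := by gcongr
    have b2 : e * θ * ‖rotDir q i j‖ ^ 2 ≤ e * θ * (2 * m ^ 2) := by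
      gcongr
      rw [norm_rotDir_sq hij, hm2, hl2]
      linarith
    have b3 : m * K ≤ 15 / 7 * (e * θ * m) := by
      have h5 : 7 / 10 * m * K ≤ l * K := by gcongr
      have h6 : e * θ * μ ≤ e * θ * m := by gcongr
      linarith
    have b4 : (q i ^ 2 - q j ^ 2) * K ≤ 15 / 14 * (e * θ * m ^ 2) := by
      rw [hm2, hl2]
      have h5 : (m ^ 2 - l ^ 2) * K ≤ m ^ 2 / 2 * K := by gcongr; linarith
      have h6 : m * (m * K) ≤ m * (15 / 7 * (e * θ * m)) := by gcongr
      linarith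
    have b5 : θ / 200 * m ^ 4 ≤ θ * (1 - θ) / 50 * (q i * q j) ^ 2 := by
      rw [mul_pow, hm2, hl2]
      have h5 : m ^ 2 * (m ^ 2 / 2) ≤ m ^ 2 * l ^ 2 := by gcongr; linarith
      have h6 : θ * (1 / 2) / 50 * (m ^ 2 * (m ^ 2 / 2)) ≤ θ * (1 - θ) / 50 * (m ^ 2 * l ^ 2) := by
        gcongr
        linarith
      linarith
    have b6 : (e * θ * m ^ 2) ≤ θ / 20000 * m ^ 4 := by
      have h5 : e * θ * m ^ 2 ≤ m ^ 3 / 20000 * θ * m ^ 2 := by gcongr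
      have h6 : m ^ 5 ≤ m ^ 4 := pow_le_pow_of_le_one hm0.le hm1 (by norm_num)
      have h7 : θ / 20000 * m ^ 5 ≤ θ / 20000 * m ^ 4 := by gcongr
      linarith
    have b7 : 0 < θ * m ^ 4 := by positivity
    have b8 : -((q i ^ 2 - q j ^ 2) * crossSum θ μ q i j) = (q i ^ 2 - q j ^ 2) * K := by
      rw [hK]; ring
    rw [b8] at hcv
    linarith
  · rw [not_lt] at hcase
    have b1 : θ / 400 * m ^ 2 ≤ K := by nlinarith
    have b2 : l * m ^ 2 ≤ 600 * (e * μ) := by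
      have h5 : l * (θ / 400 * m ^ 2) ≤ l * K := by gcongr
      have h6 : θ * (l * m ^ 2) ≤ θ * (600 * (e * μ)) := by linarith
      exact le_of_mul_le_mul_left h6 h0
    have b3 : l ≤ 600 * (e * μ) * n := by
      rw [hm2] at hi
      have h5 : l * 1 ≤ l * (n * m ^ 2) := by gcongr
      have h6 : l * m ^ 2 * n ≤ 600 * (e * μ) * n := by gcongr
      linarith
    have b4 := pow_le_pow_left₀ hl0 b3 2
    rw [hl2]
    calc (n : ℝ) * l ^ 2 ≤ n * (600 * (e * μ) * n) ^ 2 := by gcongr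
      _ = 360000 * μ ^ 2 * (e ^ 2 * n ^ 3) := by ring
      _ ≤ 360000 * μ ^ 2 * (1 / 20000 ^ 2) := by gcongr
      _ ≤ (μ / 20) ^ 2 := by linarith [sq_nonneg μ]

theorem exists_largest_coordinate {q : Vec n} (hq : ‖q‖ = 1) :
    ∃ i, (∀ j, q j ^ 2 ≤ q i ^ 2) ∧ 1 ≤ n * q i ^ 2 := by
  have hs := norm_sq_eq_sum q
  have hne : Nonempty (Fin n) := by
    by_contra h
    rw [not_nonempty_iff] at h
    rw [hq] at hs
    simp at hs
  obtain ⟨i, hi⟩ := Finite.exists_max fun j => q j ^ 2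
  refine ⟨i, hi, ?_⟩
  rw [hq, one_pow] at hs
  rw [hs]
  simpa using Finset.sum_le_card_nsmul Finset.univ (fun j => q j ^ 2) _ fun j _ => hi j

/-- Local minimizers are close to the coordinate axes. -/
theorem NearModel.exists_one_sub_sq_le (hM : NearModel θ μ e T X) (h0 : 0 < θ) (hθ : θ ≤ 1 / 2)
    (hμ : 0 < μ) (hμn : 2 * n * μ ^ 2 ≤ 1) (he0 : 0 ≤ e) (he : e ^ 2 * n ^ 3 ≤ 1 / 20000 ^ 2)
    {q : Vec n} (hq : ‖q‖ = 1) (hmin : IsLocalMinOn (objT μ T X) (Metric.sphere 0 1) q) :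
    ∃ i, 1 - q i ^ 2 ≤ (μ / 20) ^ 2 := by
  obtain ⟨i, hi, hi'⟩ := exists_largest_coordinate hq
  refine ⟨i, ?_⟩
  have hn : (0 : ℝ) < n := by exact_mod_cast Fin.pos i
  have hs := norm_sq_eq_sum q
  rw [hq, one_pow, ← Finset.add_sum_erase _ _ (Finset.mem_univ i)] at hs
  have hle : ∑ j ∈ Finset.univ.erase i, q j ^ 2
      ≤ ∑ j ∈ Finset.univ.erase i, (μ / 20) ^ 2 / n := by
    refine Finset.sum_le_sum fun j hj => ?_
    rw [le_div_iff₀ hn, mul_comm]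
    exact hM.sq_le_of_isLocalMinOn h0 hθ hμ hμn he0 he hq hmin (Finset.ne_of_mem_erase hj).symm hi'
      (hi j)
  have hle' : ∑ j ∈ Finset.univ.erase i, (μ / 20) ^ 2 / n ≤ ∑ j : Fin n, (μ / 20) ^ 2 / n :=
    Finset.sum_le_sum_of_subset_of_nonneg (Finset.erase_subset _ _) fun _ _ _ => by positivity
  have : ∑ j : Fin n, (μ / 20) ^ 2 / n = (μ / 20) ^ 2 := by
    simp [mul_div_cancel₀, hn.ne']
  linarith

end Landscape

section Landscape

variable {n p : ℕ} {θ μ e : ℝ} {T : Vec n →ₗ[ℝ] Vec n} {X : Fin n → Fin p → ℝ}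

/-- The spherical cap around `b` containing one local minimizer. -/
def cap (μ : ℝ) (b : Vec n) : Set (Vec n) :=
  {q | ‖q‖ = 1 ∧ 0 ≤ ⟪q, b⟫ ∧ 1 - ⟪q, b⟫ ^ 2 ≤ (μ / 10) ^ 2}

theorem mem_signedBasis_iff {b : Vec n} :
    b ∈ SignedBasis n ↔ ∃ (i : Fin n) (σ : ℝ), σ ^ 2 = 1 ∧ b = EuclideanSpace.single i σ := by
  constructor
  · rintro ⟨i, h | h⟩
    · exact ⟨i, 1, by norm_num, h⟩
    · refine ⟨i, -1, by norm_num, ?_⟩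
      rw [h]
      ext k
      by_cases hk : k = i <;> simp [hk]
  · rintro ⟨i, σ, hσ, rfl⟩
    refine ⟨i, ?_⟩
    rcases (sq_eq_sq_iff_eq_or_eq_neg.1 (hσ.trans (one_pow 2).symm)) with h | h
    · exact Or.inl (by rw [h])
    · right
      rw [h]
      ext k
      by_cases hk : k = i <;> simp [hk]

theorem inner_single_eq (q : Vec n) (i : Fin n) (σ : ℝ) :
    ⟪q, (EuclideanSpace.single i σ : Vec n)⟫ = σ * q i := by
  simp [EuclideanSpace.inner_single_right]

theorem norm_of_mem_signedBasis {b : Vec n} (hb : b ∈ SignedBasis n) : ‖b‖ = 1 := by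
  obtain ⟨i, σ, hσ, rfl⟩ := mem_signedBasis_iff.1 hb
  rw [PiLp.norm_single, Real.norm_eq_abs]
  exact (sq_eq_sq₀ (abs_nonneg σ) zero_le_one).1 (by rw [sq_abs, hσ, one_pow])

theorem mem_cap_self (μ : ℝ) {b : Vec n} (hb : b ∈ SignedBasis n) : b ∈ cap μ b := by
  have h := norm_of_mem_signedBasis hb
  refine ⟨h, ?_, ?_⟩ <;> rw [real_inner_self_eq_norm_sq, h]
  · norm_num
  · norm_num
    positivity

theorem isCompact_cap (μ : ℝ) (b : Vec n) : IsCompact (cap μ b) := by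
  have h0 : Continuous fun q : Vec n => ⟪q, b⟫ := by fun_prop
  have h1 : IsClosed {q : Vec n | 0 ≤ ⟪q, b⟫ ∧ 1 - ⟪q, b⟫ ^ 2 ≤ (μ / 10) ^ 2} :=
    (isClosed_le continuous_const h0).and
      (isClosed_le (continuous_const.sub (h0.pow 2)) continuous_const)
  have h2 := (isCompact_sphere (0 : Vec n) 1).inter_right h1
  refine h2.of_isClosed_subset ?_ fun q hq => ⟨by simpa using hq.1, hq.2⟩
  have : cap μ b = Metric.sphere 0 1 ∩
      {q : Vec n | 0 ≤ ⟪q, b⟫ ∧ 1 - ⟪q, b⟫ ^ 2 ≤ (μ / 10) ^ 2} := by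
    ext q; simp [cap]
  rw [this]
  exact h2.isClosed

theorem hasDerivAt_arc_apply_sq (c u v : Vec n) (i : Fin n) :
    HasDerivAt (fun s => arc c u v s i ^ 2) (2 * ((c + u) i * v i)) 0 := by
  have h : HasDerivAt (fun s => arc c u v s i) (v i) 0 := by
    have := (((Real.hasDerivAt_cos 0).mul_const (u i)).add
      ((Real.hasDerivAt_sin 0).mul_const (v i))).const_add (c i)
    have h2 := this.congr_deriv (g' := v i) (by simp)
    exact h2
  have := (h.pow 2).congr_deriv (g' := 2 * ((c + u) i * v i)) (by simp [arc_zero]; ring)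
  exact this

/-- On the boundary of a cap, some rotation towards the axis decreases the objective. -/
theorem NearModel.dOne_rotDir_mul_neg (hM : NearModel θ μ e T X) (h0 : 0 < θ) (hθ : θ ≤ 1 / 2)
    (hμ : 0 < μ) (hμ1 : μ ≤ 1) (he0 : 0 ≤ e) (he : e ^ 2 * n ^ 3 ≤ 1 / 20000 ^ 2)
    {q : Vec n} (hq : ‖q‖ = 1) {i j : Fin n} (hij : i ≠ j) (hi : 99 / 100 ≤ q i ^ 2)
    (hj : q j ^ 2 ≤ 1 / 100) (hj' : (μ / 10) ^ 2 ≤ n * q j ^ 2) :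
    q i * q j * dOne μ T X q (rotDir q i j) < 0 := by
  have h1 : θ ≤ 1 := by linarith
  have hn : (1 : ℝ) ≤ n := by exact_mod_cast Fin.pos i
  have hb := hM.abs_dOne_rotDir_sub_le h0 h1 hμ he0 hij hq.le (by linarith)
  have hcs := crossSum_le h0.le h1 hμ hμ1 hij hq.le (by linarith)
  have hcs' : crossSum θ μ q i j ≤ -(θ / 250) := by
    have h2 : θ * (1 / 2) / 100 * (98 / 100) ≤ θ * (1 - θ) / 100 * (q i ^ 2 - q j ^ 2) := by
      gcongr <;> linarith
    linarith
  have hl : 0 < |q j| := by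
    rw [abs_pos]
    rintro h
    rw [h] at hj'
    have : 0 < (μ / 10) ^ 2 := by positivity
    norm_num at hj'
    linarith
  have hm : 0 < |q i| := by
    rw [abs_pos]
    rintro h
    rw [h] at hi
    norm_num at hi
  have hel : 400 * (e * μ) < |q j| := by
    refine lt_of_pow_lt_pow_left₀ 2 hl.le ?_
    rw [sq_abs]
    have hn0 : (0 : ℝ) < n := by linarith
    refine lt_of_mul_lt_mul_left ?_ hn0.le
    have h2 : (n : ℝ) ≤ n ^ 3 := le_self_pow₀ hn (by norm_num)
    have h3 : e ^ 2 * n ≤ 1 / 20000 ^ 2 := le_trans (by gcongr) he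
    have h4 : μ ^ 2 * (e ^ 2 * n) ≤ μ ^ 2 * (1 / 20000 ^ 2) := by gcongr
    have h5 : 0 < μ ^ 2 := by positivity
    linarith
  have hK : q i * q j * (q i * q j * crossSum θ μ q i j)
      ≤ -(θ / 250 * (|q i| * |q j|) ^ 2) := by
    have h2 : (|q i| * |q j|) ^ 2 = (q i * q j) ^ 2 := by rw [← abs_mul, sq_abs]
    rw [h2]
    linarith [mul_le_mul_of_nonneg_left hcs' (sq_nonneg (q i * q j))]
  have hE : q i * q j * (dOne μ T X q (rotDir q i j) - q i * q j * crossSum θ μ q i j)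
      ≤ (|q i| * |q j|) * (3 / 2 * (e * θ * μ * |q i|)) := by
    refine (le_abs_self _).trans ?_
    rw [abs_mul, abs_mul]
    gcongr
  have hfin : (|q i| * |q j|) * (3 / 2 * (e * θ * μ * |q i|)) < θ / 250 * (|q i| * |q j|) ^ 2 := by
    have : 0 < |q i| * |q j| * (|q i| * θ) := by positivity
    have := mul_lt_mul_of_pos_left hel this
    have h2 : 0 ≤ |q i| * |q j| * (|q i| * θ) * (e * μ) := by positivity
    linarith
  linarith

theorem NearModel.exists_mem_cap (hM : NearModel θ μ e T X) (h0 : 0 < θ) (hθ : θ ≤ 1 / 2)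
    (hμ : 0 < μ) (hμ1 : μ ≤ 1) (he0 : 0 ≤ e) (he : e ^ 2 * n ^ 3 ≤ 1 / 20000 ^ 2)
    {b : Vec n} (hb : b ∈ SignedBasis n) :
    ∃ q ∈ cap μ b, IsLocalMinOn (objT μ T X) (Metric.sphere 0 1) q := by
  obtain ⟨q, hq, hqm⟩ := (isCompact_cap μ b).exists_isMinOn ⟨b, mem_cap_self μ hb⟩
    (continuous_objT μ T X).continuousOn
  refine ⟨q, hq, ?_⟩
  obtain ⟨hq1, hq2, hq3⟩ := hq
  obtain ⟨i, σ, hσ, rfl⟩ := mem_signedBasis_iff.1 hb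
  have hR : (μ / 10) ^ 2 ≤ 1 / 100 := by nlinarith
  have hpos : 0 < ⟪q, (EuclideanSpace.single i σ : Vec n)⟫ := by
    rcases hq2.eq_or_lt with h | h
    · rw [← h] at hq3; linarith
    · exact h
  rcases hq3.lt_or_eq with hlt | heq
  · have e1 : ∀ᶠ x in nhds q, 0 < ⟪x, (EuclideanSpace.single i σ : Vec n)⟫ :=
      (Continuous.continuousAt (by fun_prop)).eventually (lt_mem_nhds hpos)
    have e2 : ∀ᶠ x in nhds q, 1 - ⟪x, (EuclideanSpace.single i σ : Vec n)⟫ ^ 2 < (μ / 10) ^ 2 :=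
      (Continuous.continuousAt (f := fun x : Vec n => 1 - ⟪x, (EuclideanSpace.single i σ : Vec n)⟫ ^ 2)
        (by fun_prop)).eventually (gt_mem_nhds hlt)
    filter_upwards [nhdsWithin_le_nhds e1, nhdsWithin_le_nhds e2, self_mem_nhdsWithin]
      with x hx1 hx2 hx3
    exact hqm ⟨by simpa using hx3, hx1.le, hx2.le⟩
  · exfalso
    have hin : ∀ x : Vec n, ⟪x, (EuclideanSpace.single i σ : Vec n)⟫ ^ 2 = x i ^ 2 := fun x => by
      rw [inner_single_eq, mul_pow, hσ, one_mul]
    rw [hin] at heq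
    have hn : (0 : ℝ) < n := by exact_mod_cast Fin.pos i
    have hR0 : 0 < (μ / 10) ^ 2 := by positivity
    have hs := norm_sq_eq_sum q
    rw [hq1, one_pow, ← Finset.add_sum_erase _ _ (Finset.mem_univ i)] at hs
    have hsum : ∑ j ∈ Finset.univ.erase i, q j ^ 2 = (μ / 10) ^ 2 := by linarith
    obtain ⟨j, hji, hj⟩ : ∃ j, j ≠ i ∧ (μ / 10) ^ 2 ≤ n * q j ^ 2 := by
      by_contra! hcon
      have h2 : ∑ j ∈ Finset.univ.erase i, q j ^ 2
          ≤ ∑ j ∈ Finset.univ.erase i, (μ / 10) ^ 2 / n := by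
        refine Finset.sum_le_sum fun j hj => ?_
        rw [le_div_iff₀ hn, mul_comm]
        exact (hcon j (Finset.ne_of_mem_erase hj)).le
      have h3 : ∑ j ∈ Finset.univ.erase i, (μ / 10) ^ 2 / n + (μ / 10) ^ 2 / n = (μ / 10) ^ 2 := by
        rw [Finset.sum_erase_add _ _ (Finset.mem_univ i)]
        simp [mul_div_cancel₀, hn.ne']
      have h4 : 0 < (μ / 10) ^ 2 / n := by positivity
      linarith
    have hjle : q j ^ 2 ≤ (μ / 10) ^ 2 := by
      rw [← hsum]
      exact Finset.single_le_sum (f := fun j => q j ^ 2) (fun _ _ => sq_nonneg _)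
        (Finset.mem_erase.2 ⟨hji, Finset.mem_univ j⟩)
    have hneg := hM.dOne_rotDir_mul_neg h0 hθ hμ hμ1 he0 he hq1 hji.symm (by linarith)
      (by linarith) hj
    obtain ⟨ν, hν, hν'⟩ : ∃ ν : ℝ, ν ^ 2 = 1 ∧ ν * (q i * q j) = |q i * q j| := by
      rcases le_total 0 (q i * q j) with h | h
      · exact ⟨1, by norm_num, by rw [abs_of_nonneg h, one_mul]⟩
      · exact ⟨-1, by norm_num, by rw [abs_of_nonpos h]; ring⟩
    have hp : 0 < |q i * q j| := by
      rw [abs_pos]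
      rintro h
      rw [h] at hneg
      norm_num at hneg
    have hνD : ν * dOne μ T X q (rotDir q i j) < 0 := by
      have h2 : |q i * q j| * (ν * dOne μ T X q (rotDir q i j)) < 0 := by
        rw [← hν']
        calc ν * (q i * q j) * (ν * dOne μ T X q (rotDir q i j))
            = ν ^ 2 * (q i * q j * dOne μ T X q (rotDir q i j)) := by ring
          _ < 0 := by rw [hν, one_mul]; exact hneg
      exact neg_of_mul_neg_right h2 hp.le
    have harc := norm_arc_rotation hji.symm hq1 hν
    set c := q - rotMid q i j with hc
    set u := rotMid q i j
    set v := ν • rotDir q i j with hv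
    have hcu : c + u = q := sub_add_cancel _ _
    have hg := hasDerivAt_objT_arc (T := T) (X := X) hμ c u v 0
    rw [arc_zero, arcVel_zero, hcu, hv, dOne_smul_right, ← hv] at hg
    have hk := hasDerivAt_arc_apply_sq c u v i
    rw [hcu, hv, PiLp.smul_apply, rotDir_left hji.symm, smul_eq_mul, ← hv] at hk
    have ev1 := eventually_lt_of_hasDerivAt_pos hg.neg (neg_pos.2 hνD)
    have ev2 := eventually_lt_of_hasDerivAt_pos hk (by linarith)
    have ev3 : ∀ᶠ s in nhdsWithin (0 : ℝ) (Set.Ioi 0),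
        0 < ⟪arc c u v s, (EuclideanSpace.single i σ : Vec n)⟫ := by
      refine nhdsWithin_le_nhds ?_
      have hcont : Continuous fun s => ⟪arc c u v s, (EuclideanSpace.single i σ : Vec n)⟫ :=
        (continuous_arc c u v).inner continuous_const
      refine hcont.continuousAt.eventually (lt_mem_nhds ?_)
      simpa only [arc_zero, hcu] using hpos
    obtain ⟨s, hs1, hs2, hs3⟩ := (ev1.and (ev2.and ev3)).exists
    have hmem : arc c u v s ∈ cap μ (EuclideanSpace.single i σ) := by
      refine ⟨harc s, hs3.le, ?_⟩
      rw [hin]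
      rw [arc_zero, hcu] at hs2
      linarith
    have hfin := hqm hmem
    simp only [Set.mem_ofPred_eq, Pi.neg_apply, arc_zero, hcu] at hs1 hfin
    linarith

end Landscape

section Landscape

variable {n p : ℕ} {θ μ e : ℝ} {T : Vec n →ₗ[ℝ] Vec n} {X : Fin n → Fin p → ℝ}

theorem dOne_eq_inner_mul_of_isLocalMinOn (hμ : 0 < μ) {q : Vec n} (hq : ‖q‖ = 1)
    (h : IsLocalMinOn (objT μ T X) (Metric.sphere 0 1) q) (b : Vec n) :
    dOne μ T X q b = ⟪q, b⟫ * dOne μ T X q q := by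
  have hz : dOne μ T X q (b - ⟪q, b⟫ • q) = 0 := by
    set w := b - ⟪q, b⟫ • q with hw
    have hqw : ⟪q, w⟫ = 0 := by
      rw [hw, inner_sub_right, real_inner_smul_right, real_inner_self_eq_norm_sq, hq]
      ring
    by_cases hw0 : w = 0
    · have := dOne_smul_right (μ := μ) (T := T) (X := X) q q 0
      rw [zero_smul, zero_mul] at this
      rw [hw0, this]
    · have hwn : ‖w‖ ≠ 0 := norm_ne_zero_iff.2 hw0
      have hz : dOne μ T X q (‖w‖⁻¹ • w) = 0 := by
        refine dOne_eq_zero_of_isLocalMinOn hμ (zero_add q) (norm_arc ?_ ?_ ?_ ?_ ?_) h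
        · exact inner_zero_left _
        · exact inner_zero_left _
        · rw [real_inner_smul_right, hqw, mul_zero]
        · rw [norm_smul, norm_inv, norm_norm, inv_mul_cancel₀ hwn, hq]
        · rw [hq, norm_zero]; norm_num
      rw [dOne_smul_right] at hz
      exact (mul_eq_zero.1 hz).resolve_left (inv_ne_zero hwn)
  rw [dOne_sub_right, dOne_smul_right] at hz
  linarith

set_option maxHeartbeats 1000000 in
/-- Each cap contains at most one local minimizer. -/
theorem NearModel.eq_of_mem_cap (hM : NearModel θ μ e T X) (h0 : 0 < θ) (hθ : θ ≤ 1 / 2)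
    (hμ : 0 < μ) (hμθ : 100 * μ ≤ θ) (he : e ≤ 1 / 100) {b : Vec n}
    (hb : b ∈ SignedBasis n) {q q' : Vec n} (hq : q ∈ cap μ b) (hq' : q' ∈ cap μ b)
    (h : IsLocalMinOn (objT μ T X) (Metric.sphere 0 1) q)
    (h' : IsLocalMinOn (objT μ T X) (Metric.sphere 0 1) q') : q = q' := by
  by_contra hne
  obtain ⟨hq1, hq2, hq3⟩ := hq
  obtain ⟨hq1', hq2', hq3'⟩ := hq'
  have hb1 := norm_of_mem_signedBasis hb
  have h1 : θ ≤ 1 := by linarith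
  have hR : (μ / 10) ^ 2 ≤ 1 / 100 := by nlinarith
  obtain ⟨i, σ, hσ, hbi⟩ := mem_signedBasis_iff.1 hb
  have hin : ∀ x : Vec n, x i ^ 2 = ⟪x, b⟫ ^ 2 := fun x => by
    rw [hbi, inner_single_eq, mul_pow, hσ, one_mul]
  set d := q - q' with hd
  have hd0 : 0 < ‖d‖ ^ 2 := by
    have : 0 < ‖d‖ := norm_pos_iff.2 (sub_ne_zero.2 hne)
    positivity
  have hqq : ⟪q, q⟫ = 1 := by rw [real_inner_self_eq_norm_sq, hq1, one_pow]
  have hqq' : ⟪q', q'⟫ = 1 := by rw [real_inner_self_eq_norm_sq, hq1', one_pow]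
  have hdn : ‖d‖ ^ 2 = 2 - 2 * ⟪q, q'⟫ := by
    rw [hd, norm_sub_sq_real, hq1, hq1']; ring
  have hqd : ⟪q, d⟫ = ‖d‖ ^ 2 / 2 := by rw [hdn, hd, inner_sub_right, hqq]; ring
  have hqd' : ⟪q', d⟫ = -(‖d‖ ^ 2 / 2) := by
    rw [hdn, hd, inner_sub_right, hqq', real_inner_comm]; ring
  have hprod : 1 - (μ / 10) ^ 2 ≤ ⟪q, b⟫ * ⟪q', b⟫ := by
    refine le_of_sq_le_sq ?_ (mul_nonneg hq2 hq2')
    rw [mul_pow, sq (1 - (μ / 10) ^ 2)]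
    gcongr <;> linarith
  have hlam : ∀ x : Vec n, ‖x‖ = 1 → dOne μ T X x x ≤ 2 := fun x hx => by
    have a1 := (abs_le.1 (hM.one x x hx.le)).2
    have a2 := (abs_le.1 (abs_PhiOne_le h0.le h1 μ x x)).2
    rw [hx, mul_one] at a1 a2
    have a3 : Real.sqrt θ ≤ 1 := Real.sqrt_le_one.2 h1
    have a4 : e * θ * μ ≤ 1 * 1 * 1 := by gcongr <;> linarith
    linarith
  have hup : dOne μ T X q d - dOne μ T X q' d ≤ 2 * ‖d‖ ^ 2 := by
    rw [dOne_eq_inner_mul_of_isLocalMinOn hμ hq1 h d,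
      dOne_eq_inner_mul_of_isLocalMinOn hμ hq1' h' d, hqd, hqd']
    nlinarith [hlam q hq1, hlam q' hq1']
  obtain ⟨r, hr, hr'⟩ := exists_hasDerivAt_eq_slope (fun s : ℝ => dOne μ T X (q' + s • d) d) _
    zero_lt_one (fun s _ => (hasDerivAt_dOne_line q' d s).continuousAt.continuousWithinAt)
    (fun s _ => hasDerivAt_dOne_line q' d s)
  have hend : q' + d = q := by rw [hd]; abel
  simp only [one_smul, zero_smul, add_zero, sub_zero, div_one, hend] at hr'
  set ξ := q' + r • d with hξ
  have hξn : ‖ξ‖ ^ 2 = 1 - r * (1 - r) * ‖d‖ ^ 2 := by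
    rw [hξ, norm_add_sq_real, real_inner_smul_right, hqd', hq1', norm_smul, mul_pow,
      Real.norm_eq_abs, sq_abs]
    ring
  have hrr : 0 ≤ r * (1 - r) := mul_nonneg hr.1.le (by linarith [hr.2])
  have hξ1 : ‖ξ‖ ^ 2 ≤ 1 := by nlinarith
  have hξ1' : ‖ξ‖ ≤ 1 := by nlinarith [norm_nonneg ξ]
  have hξb : 1 - (μ / 10) ^ 2 ≤ ξ i ^ 2 := by
    rw [hin, hξ, hd, inner_add_left, real_inner_smul_left, inner_sub_left]
    have k1 := mul_le_mul_of_nonneg_left hprod hrr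
    have k2 := mul_le_mul_of_nonneg_left hq3 (sq_nonneg r)
    have k3 := mul_le_mul_of_nonneg_left hq3' (sq_nonneg (1 - r))
    linarith
  have hxn : ‖q + q'‖ ^ 2 ≤ 4 := by
    rw [norm_add_sq_real, hq1, hq1']; linarith
  have hxb : 4 * (1 - (μ / 10) ^ 2) ≤ ⟪q + q', b⟫ ^ 2 := by
    rw [inner_add_left]; linarith
  have hdi : d i ^ 2 ≤ ‖d‖ ^ 2 / 4 := by
    rw [hin]
    set y := (q + q') - ⟪q + q', b⟫ • b with hy
    have hyn : ‖y‖ ^ 2 = ‖q + q'‖ ^ 2 - ⟪q + q', b⟫ ^ 2 := by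
      rw [hy, norm_sub_sq_real, real_inner_smul_right, norm_smul, mul_pow, hb1, Real.norm_eq_abs,
        sq_abs]
      ring
    have hdx : ⟪d, q + q'⟫ = 0 := by
      rw [inner_add_right, real_inner_comm, real_inner_comm q' d, hqd, hqd']; ring
    have hdy : ⟪d, y⟫ = -(⟪q + q', b⟫ * ⟪d, b⟫) := by
      rw [hy, inner_sub_right, real_inner_smul_right, hdx]; ring
    have hcs : ⟪d, y⟫ ^ 2 ≤ ‖d‖ ^ 2 * ‖y‖ ^ 2 := by
      rw [← mul_pow, ← sq_abs]
      exact pow_le_pow_left₀ (abs_nonneg _) (abs_real_inner_le_norm d y) 2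
    rw [hdy, neg_sq, mul_pow] at hcs
    have k1 : 4 * (99 / 100) * ⟪d, b⟫ ^ 2 ≤ ⟪q + q', b⟫ ^ 2 * ⟪d, b⟫ ^ 2 := by
      gcongr; linarith
    have k2 : ‖d‖ ^ 2 * ‖y‖ ^ 2 ≤ ‖d‖ ^ 2 * (4 / 100) := by
      gcongr; linarith
    linarith
  have hlow := PhiTwo_ge h0.le h1 hμ i ξ d
  have hlow' : θ / 10 * ‖d‖ ^ 2 ≤ θ * (1 - θ) * (‖d‖ ^ 2 - d i ^ 2) *
      (1 - 48 * (‖ξ‖ ^ 2 - ξ i ^ 2) / μ ^ 2) := by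
    have k0 : 48 * (‖ξ‖ ^ 2 - ξ i ^ 2) / μ ^ 2 ≤ 48 / 100 := by
      rw [div_le_iff₀ (by positivity)]
      linarith
    have k1 : θ * (1 / 2) * (3 / 4 * ‖d‖ ^ 2) * (52 / 100) ≤ θ * (1 - θ) * (‖d‖ ^ 2 - d i ^ 2) *
        (1 - 48 * (‖ξ‖ ^ 2 - ξ i ^ 2) / μ ^ 2) := by
      have k2 : 0 ≤ 1 - θ := by linarith
      have k3 : 0 ≤ ‖d‖ ^ 2 - d i ^ 2 := by linarith
      have k4 : 0 ≤ θ * (1 - θ) * (‖d‖ ^ 2 - d i ^ 2) := by positivity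
      gcongr <;> linarith
    linarith [mul_pos h0 hd0]
  have htwo := (abs_le.1 (hM.two ξ d hξ1')).1
  have hE : e * θ * μ * ‖d‖ ^ 2 ≤ 1 / 100 * θ * 1 * ‖d‖ ^ 2 := by
    gcongr; linarith
  have hfin : dTwo μ T X ξ d ≤ μ * (2 * ‖d‖ ^ 2) := by
    rw [← div_le_iff₀' hμ, hr']
    exact hup
  have hk : μ * (2 * ‖d‖ ^ 2) ≤ θ / 100 * (2 * ‖d‖ ^ 2) := by
    gcongr; linarith
  linarith [mul_pos h0 hd0]

theorem norm_sub_le_of_mem_cap (hμ : 0 < μ) {b q : Vec n} (hb : b ∈ SignedBasis n)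
    (hq : q ∈ cap μ b) : ‖q - b‖ ≤ Real.sqrt 2 * μ / 7 := by
  obtain ⟨hq1, hq2, hq3⟩ := hq
  have hb1 := norm_of_mem_signedBasis hb
  have hle : ⟪q, b⟫ ≤ 1 := by
    have := real_inner_le_norm q b
    rwa [hq1, hb1, one_mul] at this
  refine le_of_sq_le_sq ?_ (by positivity)
  rw [norm_sub_sq_real, hq1, hb1, div_pow, mul_pow, Real.sq_sqrt (by norm_num)]
  nlinarith [sq_nonneg μ]

theorem eq_of_mem_cap_of_mem_cap (hμ : 0 < μ) (hμ1 : μ ≤ 1) {b b' q : Vec n}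
    (hb : b ∈ SignedBasis n) (hb' : b' ∈ SignedBasis n) (hq : q ∈ cap μ b) (hq' : q ∈ cap μ b') :
    b = b' := by
  have hR : (μ / 10) ^ 2 ≤ 1 / 100 := by nlinarith
  obtain ⟨hq1, hq2, hq3⟩ := hq
  obtain ⟨-, hq2', hq3'⟩ := hq'
  obtain ⟨i, σ, hσ, rfl⟩ := mem_signedBasis_iff.1 hb
  obtain ⟨i', σ', hσ', rfl⟩ := mem_signedBasis_iff.1 hb'
  rw [inner_single_eq] at hq2 hq3 hq2' hq3'
  rw [mul_pow, hσ, one_mul] at hq3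
  rw [mul_pow, hσ', one_mul] at hq3'
  have hii : i = i' := by
    by_contra hne
    have h2 : q i ^ 2 + q i' ^ 2 ≤ ‖q‖ ^ 2 := by
      rw [norm_sq_eq_sum, ← Finset.sum_pair (f := fun k => q k ^ 2) hne]
      exact Finset.sum_le_sum_of_subset_of_nonneg (Finset.subset_univ _) fun _ _ _ => sq_nonneg _
    rw [hq1] at h2
    linarith
  subst hii
  have hσσ : σ = σ' := by
    rcases sq_eq_sq_iff_eq_or_eq_neg.1 (hσ.trans hσ'.symm) with h | h
    · exact h
    · exfalso
      rw [h] at hq2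
      have h3 : σ' * q i = 0 := by linarith
      have h4 : (σ' * q i) ^ 2 = q i ^ 2 := by rw [mul_pow, hσ', one_mul]
      rw [h3] at h4
      linarith
  rw [hσσ]

theorem ncard_signedBasis (n : ℕ) : (SignedBasis n).ncard = 2 * n := by
  have hset : SignedBasis n = Set.range fun z : Fin n × Bool =>
      (EuclideanSpace.single z.1 (if z.2 then (1 : ℝ) else -1) : Vec n) := by
    ext b
    rw [mem_signedBasis_iff]
    constructor
    · rintro ⟨i, σ, hσ, rfl⟩
      rcases (sq_eq_sq_iff_eq_or_eq_neg.1 (hσ.trans (one_pow 2).symm)) with h | h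
      · exact ⟨(i, true), by simp [h]⟩
      · exact ⟨(i, false), by simp [h]⟩
    · rintro ⟨⟨i, z⟩, rfl⟩
      exact ⟨i, _, by cases z <;> norm_num, rfl⟩
  have hinj : Function.Injective fun z : Fin n × Bool =>
      (EuclideanSpace.single z.1 (if z.2 then (1 : ℝ) else -1) : Vec n) := by
    rintro ⟨i, z⟩ ⟨i', z'⟩ h
    have h2 := congrArg (fun v : Vec n => v i) h
    have hii : i = i' := by
      by_contra hne
      simp only [PiLp.single_apply, hne, if_true, if_false] at h2
      cases z <;> simp at h2
    subst hii
    cases z <;> cases z' <;> simp at h2 <;> first | rfl | (norm_num at h2)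
  rw [hset, ← Set.image_univ, Set.ncard_image_of_injective _ hinj, Set.ncard_univ]
  simp [mul_comm]

/-- The set of local minimizers of the objective is in bijection with the signed basis. -/
theorem NearModel.exists_bijOn (hM : NearModel θ μ e T X) (h0 : 0 < θ) (hθ : θ ≤ 1 / 2)
    (hμ : 0 < μ) (hμθ : 100 * μ ≤ θ) (hμn : 2 * n * μ ^ 2 ≤ 1) (he0 : 0 ≤ e)
    (he : e ^ 2 * n ^ 3 ≤ 1 / 20000 ^ 2) (he1 : e ≤ 1 / 100) {L : Set (Vec n)}
    (hL : L = {q | q ∈ Metric.sphere (0 : Vec n) 1 ∧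
      IsLocalMinOn (objT μ T X) (Metric.sphere (0 : Vec n) 1) q}) :
    L.ncard = 2 * n ∧ ∃ F : Vec n → Vec n, Set.BijOn F L (SignedBasis n) ∧
      ∀ q ∈ L, ‖q - F q‖ ≤ Real.sqrt 2 * μ / 7 := by
  have hμ1 : μ ≤ 1 := by linarith
  have hex : ∀ q ∈ L, ∃ b ∈ SignedBasis n, q ∈ cap μ b := by
    intro q hq
    rw [hL] at hq
    have hq1 : ‖q‖ = 1 := by simpa using hq.1
    obtain ⟨i, hi⟩ := hM.exists_one_sub_sq_le h0 hθ hμ hμn he0 he hq1 hq.2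
    have hi' : 1 - q i ^ 2 ≤ (μ / 10) ^ 2 := by nlinarith
    obtain ⟨σ, hσ, hσ'⟩ : ∃ σ : ℝ, σ ^ 2 = 1 ∧ 0 ≤ σ * q i := by
      rcases le_total 0 (q i) with h | h
      · exact ⟨1, by norm_num, by simpa using h⟩
      · exact ⟨-1, by norm_num, by simpa using h⟩
    refine ⟨EuclideanSpace.single i σ, mem_signedBasis_iff.2 ⟨i, σ, hσ, rfl⟩, hq1, ?_, ?_⟩
    · rwa [inner_single_eq]
    · rwa [inner_single_eq, mul_pow, hσ, one_mul]
  choose! F hF hF' using hex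
  have hbij : Set.BijOn F L (SignedBasis n) := by
    refine ⟨hF, fun q hq q' hq' hqq => ?_, fun b hb => ?_⟩
    · have c1 := hF' q hq
      have c2 := hF' q' hq'
      rw [← hqq] at c2
      have hFb := hF q hq
      rw [hL] at hq hq'
      exact hM.eq_of_mem_cap h0 hθ hμ hμθ he1 hFb c1 c2 hq.2 hq'.2
    · obtain ⟨q, hq, hq'⟩ := hM.exists_mem_cap h0 hθ hμ hμ1 he0 he hb
      have hqL : q ∈ L := by
        rw [hL]
        exact ⟨by simpa using hq.1, hq'⟩
      exact ⟨q, hqL, eq_of_mem_cap_of_mem_cap hμ hμ1 (hF q hqL) hb (hF' q hqL) hq⟩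
  refine ⟨?_, F, hbij, fun q hq => norm_sub_le_of_mem_cap hμ (hF q hq) (hF' q hq)⟩
  rw [← ncard_signedBasis n, ← hbij.image_eq, hbij.injOn.ncard_image]

end Landscape

section Probability

variable {n p : ℕ} {θ μ t : ℝ}

theorem mul_log_le_of_two_mul_log_le {Q x : ℝ} (hQ : 0 < Q) (hx : 0 < x)
    (h : 2 * (Q * Real.log Q) ≤ x) : Q * Real.log x ≤ x := by
  have h1 : Real.log x = Real.log Q + (Real.log 2 + Real.log (x / Q / 2)) := by
    rw [← Real.log_mul (by norm_num) (by positivity), ← Real.log_mul hQ.ne' (by positivity)]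
    congr 1
    field_simp
  have h2 := Real.log_le_sub_one_of_pos (show 0 < x / Q / 2 by positivity)
  have h3 : Real.log 2 ≤ 1 := by linarith [Real.log_two_lt_d9]
  have h4 : Q * Real.log x ≤ Q * (Real.log Q + x / Q / 2) := by
    gcongr; linarith
  have h5 : Q * (x / Q / 2) = x / 2 := by field_simp
  linarith

theorem pow_mul_exp_le (hn : 0 < n) (hp : 2 ≤ p)
    (ht : 744000 * n * Real.log p ≤ p * t ^ 2) :
    (4 * ((p ^ 10 : ℕ) : ℝ) + 1) ^ (2 * n) * (4 * Real.exp (-(p * t ^ 2 / 24000)))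
      ≤ 4 / (p : ℝ) ^ 5 := by
  have hp2 : (2 : ℝ) ≤ p := by exact_mod_cast hp
  have hp0 : (0 : ℝ) < p := by linarith
  have h1 : 4 * ((p ^ 10 : ℕ) : ℝ) + 1 ≤ (p : ℝ) ^ 13 := by
    have h2 : (1 : ℝ) ≤ (p : ℝ) ^ 10 := one_le_pow₀ (by linarith)
    have h3 : (8 : ℝ) ≤ (p : ℝ) ^ 3 := by
      calc (8 : ℝ) = 2 ^ 3 := by norm_num
        _ ≤ (p : ℝ) ^ 3 := by gcongr
    have h4 : (p : ℝ) ^ 13 = p ^ 10 * p ^ 3 := by ring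
    push_cast
    nlinarith
  have h2 : Real.exp (-(p * t ^ 2 / 24000)) ≤ ((p : ℝ) ^ (31 * n))⁻¹ := by
    have h3 : (p : ℝ) ^ (31 * n) = Real.exp ((31 * n : ℕ) * Real.log p) := by
      rw [Real.exp_nat_mul, Real.exp_log hp0]
    rw [h3, ← Real.exp_neg, Real.exp_le_exp]
    push_cast
    linarith
  calc (4 * ((p ^ 10 : ℕ) : ℝ) + 1) ^ (2 * n) * (4 * Real.exp (-(p * t ^ 2 / 24000)))
      ≤ ((p : ℝ) ^ 13) ^ (2 * n) * (4 * ((p : ℝ) ^ (31 * n))⁻¹) := by gcongr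
    _ = 4 * (p : ℝ) ^ (26 * n) / (p : ℝ) ^ (31 * n) := by
        rw [← pow_mul]; ring_nf
    _ ≤ 4 / (p : ℝ) ^ 5 := by
        rw [div_le_div_iff₀ (by positivity) (by positivity), mul_assoc, ← pow_add]
        gcongr
        · linarith
        · omega

theorem measure_not_goodEvent_le (hn : 0 < n) (h0 : 0 ≤ θ) (h1 : θ ≤ 1) (hμ : 0 < μ) (hμ1 : μ ≤ 1)
    (ht0 : 0 < t) (ht1 : t ≤ 1) (hp : 176 ≤ p) (hnp : μ⁻¹ * (n : ℝ) ^ 4 ≤ p) (hnp' : n ≤ p)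
    (ht : 744000 * n * Real.log p ≤ p * t ^ 2) :
    bgMatrix θ n p {X | ¬ GoodEvent θ μ t X} ≤ ENNReal.ofReal (4 / (p : ℝ) ^ 5) := by
  have hp' : (176 : ℝ) ≤ p := by exact_mod_cast hp
  have hp0 : (0 : ℝ) < p := by linarith
  have hn1 : (1 : ℝ) ≤ n := by exact_mod_cast hn
  have hlog : 1 ≤ Real.log p := by
    rw [Real.le_log_iff_exp_le hp0]
    linarith [Real.exp_one_lt_d9]
  have htp : 1 / (p : ℝ) ≤ t := by
    refine le_of_sq_le_sq ?_ ht0.le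
    have h2 : 1 ≤ p * t ^ 2 := by nlinarith
    rw [div_pow, one_pow, div_le_iff₀ (by positivity)]
    nlinarith
  have hN : 22 * (μ⁻¹ * ((n : ℝ) / ((p ^ 10 : ℕ) : ℝ) * (2 * ((n : ℝ) * p)) ^ 3)) ≤ t := by
    refine le_trans ?_ htp
    push_cast
    calc 22 * (μ⁻¹ * ((n : ℝ) / (p : ℝ) ^ 10 * (2 * ((n : ℝ) * p)) ^ 3))
        = 176 * (μ⁻¹ * (n : ℝ) ^ 4) / (p : ℝ) ^ 7 := by field_simp; ring
      _ ≤ p * p / (p : ℝ) ^ 7 := by gcongr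
      _ = 1 / (p : ℝ) ^ 5 := by field_simp
      _ ≤ 1 / (p : ℝ) ^ 1 := by
          gcongr
          · linarith
          · norm_num
      _ = 1 / p := by rw [pow_one]
  refine le_trans (measure_mono ?_) ((measure_not_gridEvent_le (μ := μ) h0 h1 (by omega) ht0.le ht1
    (p ^ 10)).trans (ENNReal.ofReal_le_ofReal (pow_mul_exp_le hn (by omega) ht)))
  intro X hX hG
  exact hX (hG.goodEvent hn (by omega) (hnp'.trans (Nat.le_self_pow (by norm_num) p)) h0 h1 hμ hμ1
    ht1 hN)

end Probability

theorem one_le_kappa {n : ℕ} (hn : 0 < n) {s : Fin n → ℝ} (hs : ∀ i, 0 < s i) : 1 ≤ kappa s := by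
  have : Nonempty (Fin n) := ⟨⟨0, hn⟩⟩
  obtain ⟨i, hi⟩ := exists_eq_ciInf_of_finite (f := s)
  have h1 : 0 < ⨅ j, s j := by rw [← hi]; exact hs i
  rw [kappa, one_le_div h1, ← hi]
  exact le_ciSup (Set.finite_range s).bddAbove i

/-- A numerical constant in the sample size. -/
def sampleConst : ℝ := 744000 * 2080000 ^ 2

/-- Consequences of the sample size condition. -/
theorem sample_size_bounds {n p : ℕ} (hn : 0 < n) {θ μ k : ℝ} (h0 : 0 < θ) (hθ : θ ≤ 1 / 2)
    (hμ : 0 < μ) (hμθ : 100 * μ ≤ θ) (hk : 1 ≤ k)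
    (hp : 2 * (Real.log sampleConst + 4) * sampleConst / (1 ^ 2 * θ ^ 2) *
      max ((n : ℝ) ^ 4 / μ ^ 4) ((n : ℝ) ^ 5 / μ ^ 2) * k ^ 8 *
        Real.log (k * (n : ℝ) / (μ * θ)) ^ 4 ≤ (p : ℝ)) :
    sampleConst * ((n : ℝ) ^ 4 * k ^ 4 / (θ ^ 2 * μ ^ 4)) ≤ p ∧
      sampleConst * ((n : ℝ) ^ 4 * k ^ 4 / (θ ^ 2 * μ ^ 4)) * Real.log p ≤ p := by
  have hn1 : (1 : ℝ) ≤ n := by exact_mod_cast hn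
  have hK1 : 1 ≤ sampleConst := by norm_num [sampleConst]
  have hK0 : 0 < sampleConst := by linarith
  have hlK : 0 ≤ Real.log sampleConst := Real.log_nonneg hK1
  set K := sampleConst
  set a := k * (n : ℝ) / (μ * θ) with ha
  set L := Real.log a with hL
  have hk0 : 0 < k := by linarith
  have hn0 : (0 : ℝ) < n := by linarith
  have ha3 : 3 ≤ a := by
    rw [ha, le_div_iff₀ (by positivity)]
    nlinarith
  have ha0 : 0 < a := by linarith
  have hL1 : 1 ≤ L := by
    rw [hL, Real.le_log_iff_exp_le ha0]
    linarith [Real.exp_one_lt_d9]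
  set B := (n : ℝ) ^ 4 * k ^ 4 / (θ ^ 2 * μ ^ 4) with hB
  have hB0 : 0 < B := by positivity
  have hBa : B ≤ a ^ 4 := by
    have h2 : a ^ 4 = B / θ ^ 2 := by rw [ha, hB]; field_simp
    rw [h2, le_div_iff₀ (by positivity)]
    have : θ ^ 2 ≤ 1 := pow_le_one₀ h0.le (by linarith)
    nlinarith
  have hlog : Real.log (K * B) ≤ (Real.log K + 4) * L := by
    rw [Real.log_mul hK0.ne' hB0.ne']
    have h2 : Real.log B ≤ 4 * L := by
      have := Real.log_le_log hB0 hBa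
      rw [Real.log_pow] at this
      exact_mod_cast this
    nlinarith
  have hmain : 2 * (K * B * ((Real.log K + 4) * L)) ≤ p := by
    refine le_trans ?_ hp
    have h2 : k ^ 4 ≤ k ^ 8 := pow_le_pow_right₀ hk (by norm_num)
    have h3 : L ≤ L ^ 4 := le_self_pow₀ hL1 (by norm_num)
    calc 2 * (K * B * ((Real.log K + 4) * L))
        = 2 * (Real.log K + 4) * K / (1 ^ 2 * θ ^ 2) * ((n : ℝ) ^ 4 / μ ^ 4) * k ^ 4 * L := by
          rw [hB]; field_simp
      _ ≤ _ := by
          gcongr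
          exact le_max_left _ _
  have hKB : 0 < K * B := by positivity
  have hpKB : K * B ≤ p := by
    refine le_trans ?_ hmain
    have : 1 ≤ (Real.log K + 4) * L := by nlinarith
    nlinarith
  refine ⟨hpKB, mul_log_le_of_two_mul_log_le hKB (lt_of_lt_of_le hKB hpKB) (le_trans ?_ hmain)⟩
  gcongr

theorem localMins_whiten {n p : ℕ} (θ μ : ℝ) (A₀ U V S : Matrix (Fin n) (Fin n) ℝ)
    (X : Fin n → Fin p → ℝ) :
    LocalMins n p μ (Real.sqrt ((p : ℝ) * θ) • (V * Uᵀ * S⁻¹ * (A₀ * Matrix.of X))) =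
      {q | q ∈ Metric.sphere (0 : Vec n) 1 ∧
        IsLocalMinOn (objT μ (whitenMap θ p A₀ U V S) X) (Metric.sphere (0 : Vec n) 1) q} := by
  have : ffun n p μ (Real.sqrt ((p : ℝ) * θ) • (V * Uᵀ * S⁻¹ * (A₀ * Matrix.of X)))
      = objT μ (whitenMap θ p A₀ U V S) X := funext fun q => ffun_whiten μ A₀ U V S X q
  rw [LocalMins, this]

theorem ofReal_one_sub_le_of_compl_subset {Ω : Type*} [MeasurableSpace Ω] (P : Measure Ω)
    [IsProbabilityMeasure P] {E G : Set Ω} (hG : Gᶜ ⊆ E) {r : ℝ} (hr : 0 ≤ r)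
    (h : P E ≤ ENNReal.ofReal r) : ENNReal.ofReal (1 - r) ≤ P G := by
  have h1 : 1 ≤ P G + ENNReal.ofReal r := by
    calc (1 : ℝ≥0∞) = P (G ∪ Gᶜ) := by rw [Set.union_compl_self, measure_univ]
      _ ≤ P G + P Gᶜ := measure_union_le _ _
      _ ≤ P G + ENNReal.ofReal r := by
        gcongr
        exact (measure_mono hG).trans h
  rw [ENNReal.ofReal_sub _ hr, ENNReal.ofReal_one]
  exact tsub_le_iff_right.2 h1

set_option maxHeartbeats 1600000 in
/-- Corollary: 2n local minimizers on the sphere, complete dictionary. -/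
theorem statement3 :
    ∃ cstar C ca cb : ℝ, 0 < cstar ∧ 0 < C ∧ 0 < ca ∧ 0 < cb ∧
      ∀ (n p : ℕ) (θ μ : ℝ) (A₀ U V : Matrix (Fin n) (Fin n) ℝ) (s : Fin n → ℝ),
        IsUnit A₀ → U * Uᵀ = 1 → V * Vᵀ = 1 → (∀ i, 0 < s i) →
        A₀ = U * Matrix.diagonal s * Vᵀ →
        θ ∈ Set.Ioo (0 : ℝ) (1 / 2) → 0 < μ →
        μ < ca * min (θ / n) ((n : ℝ) ^ (-(5 : ℝ) / 4)) →
        C / (cstar ^ 2 * θ ^ 2) * max ((n : ℝ) ^ 4 / μ ^ 4) ((n : ℝ) ^ 5 / μ ^ 2) *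
            kappa s ^ 8 * Real.log (kappa s * (n : ℝ) / (μ * θ)) ^ 4 ≤ (p : ℝ) →
        ENNReal.ofReal (1 - cb / (p : ℝ) ^ 5) ≤
          bgMatrix θ n p
            {X | ∀ S : Matrix (Fin n) (Fin n) ℝ, S.PosDef →
                 S * S = A₀ * Matrix.of X * (A₀ * Matrix.of X)ᵀ →
                 -- local minimizers of `f(·; V Uᵀ Ȳ)` over the sphere,
                 -- with `Ȳ = √(pθ) (YYᵀ)^{-1/2} Y`
                 (LocalMins n p μ
                     (Real.sqrt ((p : ℝ) * θ) • (V * Uᵀ * S⁻¹ * (A₀ * Matrix.of X)))).ncard =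
                   2 * n ∧
                 ∃ F : EuclideanSpace ℝ (Fin n) → EuclideanSpace ℝ (Fin n),
                   Set.BijOn F
                     (LocalMins n p μ
                       (Real.sqrt ((p : ℝ) * θ) • (V * Uᵀ * S⁻¹ * (A₀ * Matrix.of X))))
                     (SignedBasis n) ∧
                   ∀ q ∈ LocalMins n p μ
                       (Real.sqrt ((p : ℝ) * θ) • (V * Uᵀ * S⁻¹ * (A₀ * Matrix.of X))),
                     ‖q - F q‖ ≤ Real.sqrt 2 * μ / 7} := by
  have hK1 : 1 ≤ sampleConst := by norm_num [sampleConst]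
  have hlK : 0 ≤ Real.log sampleConst := Real.log_nonneg hK1
  refine ⟨1, 2 * (Real.log sampleConst + 4) * sampleConst, 1 / 100, 4, one_pos, by positivity,
    by norm_num, by norm_num, ?_⟩
  intro n p θ μ A₀ U V s _ hU hV hs hA hθ hμ hμlt hp
  obtain ⟨h0, hθ2⟩ := hθ
  have hμn : μ < 1 / 100 * (θ / n) :=
    hμlt.trans_le (mul_le_mul_of_nonneg_left (min_le_left _ _) (by norm_num))
  have hn : 0 < n := by
    rcases Nat.eq_zero_or_pos n with h | h
    · rw [h] at hμn
      norm_num at hμn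
      linarith
    · exact h
  have hn1 : (1 : ℝ) ≤ n := by exact_mod_cast hn
  have hn0 : (0 : ℝ) < n := by linarith
  have hμn' : 100 * μ * n ≤ θ := by
    rw [← mul_div_assoc, lt_div_iff₀ hn0] at hμn
    linarith
  have hμθ : 100 * μ ≤ θ := by nlinarith
  have h1 : θ ≤ 1 := by linarith
  have hμ1 : μ ≤ 1 := by linarith
  have hk := one_le_kappa hn hs
  obtain ⟨hpB, hplog⟩ := sample_size_bounds hn h0 hθ2.le hμ hμθ hk hp
  set k := kappa s with hkdef
  have hk0 : 0 < k := by linarith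
  set w := Real.sqrt n with hw
  have hw2 : w ^ 2 = n := Real.sq_sqrt hn0.le
  have hw1 : 1 ≤ w := Real.one_le_sqrt.2 hn1
  have hw0 : 0 < w := by linarith
  set t := θ * μ ^ 2 / (2080000 * w ^ 3 * k ^ 2) with ht
  have ht0 : 0 < t := by positivity
  have htθ : 2080000 * t ≤ θ * μ ^ 2 := by
    have hden : 1 ≤ w ^ 3 * k ^ 2 := one_le_mul_of_one_le_of_one_le (one_le_pow₀ hw1) (one_le_pow₀ hk)
    have h2 : 2080000 * t = θ * μ ^ 2 / (w ^ 3 * k ^ 2) := by rw [ht]; field_simp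
    rw [h2]
    exact div_le_self (by positivity) hden
  have hμsq : μ ^ 2 ≤ 1 := pow_le_one₀ hμ.le hμ1
  have htθ' : 2080000 * t ≤ θ := by nlinarith
  have htsq : p * t ^ 2 = 744000 * n * (p / (sampleConst * ((n : ℝ) ^ 4 * k ^ 4 / (θ ^ 2 * μ ^ 4)))) := by
    rw [ht, sampleConst, ← hw2]
    field_simp
  have hB1 : (n : ℝ) ^ 4 * μ⁻¹ ≤ (n : ℝ) ^ 4 * k ^ 4 / (θ ^ 2 * μ ^ 4) := by
    rw [le_div_iff₀ (by positivity)]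
    have h2 : μ⁻¹ * (θ ^ 2 * μ ^ 4) = θ ^ 2 * μ ^ 3 := by field_simp
    have h3 : θ ^ 2 * μ ^ 3 ≤ 1 :=
      mul_le_one₀ (pow_le_one₀ h0.le h1) (by positivity) (pow_le_one₀ hμ.le hμ1)
    have h4 : 1 ≤ k ^ 4 := one_le_pow₀ hk
    rw [mul_assoc, h2]
    gcongr
    linarith
  have hB0 : 0 < sampleConst * ((n : ℝ) ^ 4 * k ^ 4 / (θ ^ 2 * μ ^ 4)) := by positivity
  have hμinv : 1 ≤ μ⁻¹ := (one_le_inv₀ hμ).2 hμ1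
  have hn4 : (n : ℝ) ≤ (n : ℝ) ^ 4 := le_self_pow₀ hn1 (by norm_num)
  have hpn : 176 * ((n : ℝ) ^ 4 * μ⁻¹) ≤ p := by
    refine le_trans ?_ hpB
    gcongr
    norm_num [sampleConst]
  have hn4μ : (n : ℝ) ^ 4 ≤ (n : ℝ) ^ 4 * μ⁻¹ := le_mul_of_one_le_right (by positivity) hμinv
  have hp176 : 176 ≤ p := by
    have : (176 : ℝ) ≤ p := by linarith
    exact_mod_cast this
  have hnp : n ≤ p := by
    have : (n : ℝ) ≤ p := by linarith
    exact_mod_cast this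
  have hgood := measure_not_goodEvent_le (t := t) hn h0.le h1 hμ hμ1 ht0 (by linarith) hp176
    (by linarith) hnp (by
      rw [htsq]
      gcongr
      rw [le_div_iff₀ hB0, mul_comm]
      exact hplog)
  have hprob : IsProbabilityMeasure (bgMatrix θ n p) := by
    have : Fact (θ ∈ Set.Icc (0 : ℝ) 1) := ⟨⟨h0.le, h1⟩⟩
    unfold bgMatrix
    infer_instance
  refine ofReal_one_sub_le_of_compl_subset _ ?_ (by positivity) hgood
  intro X hX hG
  refine hX fun S hS hSS => ?_
  have hT := norm_whitenMap_sub_le hn (by omega) h0 h1 hU hV hs hA ht0.le (by linarith) hG hS hSS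
  have hη : 4 * k ^ 2 * (t / θ) = 4 * μ ^ 2 / (2080000 * w ^ 3) := by
    rw [ht]; field_simp
  have hη' : 4 * k ^ 2 * (t / θ) ≤ 1 / 4 := by
    rw [hη, div_le_iff₀ (by positivity)]
    have : 1 ≤ w ^ 3 := one_le_pow₀ hw1
    linarith
  have hM : NearModel θ μ (1 / (20000 * w ^ 3)) (whitenMap θ p A₀ U V S) X := by
    refine hG.nearModel h0 h1 hμ (by linarith) ht0.le hη' (by positivity) hT ?_
    rw [hη]
    have ht' : t ≤ θ * μ / (2080000 * w ^ 3) := by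
      rw [ht]
      refine div_le_div₀ (by positivity) ?_ (by positivity) ?_
      · exact mul_le_mul_of_nonneg_left (pow_le_of_le_one hμ.le hμ1 two_ne_zero) h0.le
      · exact le_mul_of_one_le_right (by positivity) (one_le_pow₀ hk)
    have h2 : 25 * (θ / μ) * (4 * μ ^ 2 / (2080000 * w ^ 3))
        = 100 * (θ * μ / (2080000 * w ^ 3)) := by field_simp; ring
    have h3 : 1 / (20000 * w ^ 3) * θ * μ = 104 * (θ * μ / (2080000 * w ^ 3)) := by
      field_simp; ring
    rw [h2, h3]
    linarith
  refine hM.exists_bijOn h0 hθ2.le hμ hμθ ?_ (by positivity) ?_ ?_ (localMins_whiten θ μ A₀ U V S X)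
  · nlinarith
  · rw [← hw2]
    refine le_of_eq ?_
    field_simp
  · rw [div_le_div_iff₀ (by positivity) (by norm_num)]
    have : 1 ≤ w ^ 3 := one_le_pow₀ hw1
    linarith

end
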